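/- arXiv:2008.09565 — 5 statements merged into one kernel-verified Lean document; each statement's English description precedes it below -/
import Mathlib

section
/- Let M_1,…,M_r be monomials in K[x_1,…,x_n] and I_i the principal L_{E_i}-Borel ideal generated by M_i, where E_i is the set of essential variables of I_i and every variable dividing M_i lies in E_i. Assume the ordering I_1,…,I_r is L-free. Let φ : K[x_1,…,x_n, T_{m,i} : m ∈ G_i, 1 ≤ i ≤ r] → K[x_1,…,x_n,t_1,…,t_r] be the presentation of the multi-Rees algebra, φ(x_j) = x_j and φ(T_{m,i}) = m·t_i, where G_i = L_{E_i}-Borel(M_i). Then ker(φ) is generated by the quadrics of symmetric type and of fiber type (principal and bi-principal). -/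
/-- An `L_U`-Borel move: replace one factor `x_j` of `m` by `x_i`, where
`x_i, x_j ∈ U` and `i < j`. -/
def LBorelStep (n : ℕ) (U : Set (Fin n)) (m m' : Fin n →₀ ℕ) : Prop :=
  ∃ i j : Fin n, i ∈ U ∧ j ∈ U ∧ i < j ∧ 0 < m j ∧
    m' + Finsupp.single j 1 = m + Finsupp.single i 1

/-- `L_U`-Borel(M): all monomials obtainable from `M` by `L_U`-Borel moves
(including `M` itself); this is the minimal generating set of the principal
`L_U`-Borel ideal generated by `M`. -/
def LBorelSet (n : ℕ) (U : Set (Fin n)) (M : Fin n →₀ ℕ) : Set (Fin n →₀ ℕ) :=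
  {m | Relation.ReflTransGen (LBorelStep n U) M m}

/-- The variables `T_{g,i}`, one for each minimal generator `g` of the principal
`L_{E_i}`-Borel ideal generated by `M_i`. -/
def TVar (n r : ℕ) (E : Fin r → Set (Fin n)) (M : Fin r → (Fin n →₀ ℕ)) : Type :=
  Σ i : Fin r, {g : Fin n →₀ ℕ // g ∈ LBorelSet n (E i) (M i)}

/-- The quadrics of symmetric type: `x_s·T_{g,i} − x_u·T_{(x_s/x_u)g, i}` with
`g ∈ G_i`, `x_u ∣ g`, `x_s, x_u ∈ E_i`, `s < u`. -/
def symQuadrics (K : Type*) [Field K] (n r : ℕ) (E : Fin r → Set (Fin n))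
    (M : Fin r → (Fin n →₀ ℕ)) : Set (MvPolynomial (Fin n ⊕ TVar n r E M) K) :=
  {b | ∃ (i : Fin r) (g g' : {g : Fin n →₀ ℕ // g ∈ LBorelSet n (E i) (M i)})
      (s u : Fin n),
    s < u ∧ s ∈ E i ∧ u ∈ E i ∧ 0 < g.1 u ∧
    g'.1 + Finsupp.single u 1 = g.1 + Finsupp.single s 1 ∧
    b = MvPolynomial.X (Sum.inl s) * MvPolynomial.X (Sum.inr ⟨i, g⟩) -
        MvPolynomial.X (Sum.inl u) * MvPolynomial.X (Sum.inr ⟨i, g'⟩)}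

/-- The quadrics of principal fiber type:
`T_{g,i}·T_{h,i} − T_{(x_s/x_u)g, i}·T_{(x_u/x_s)h, i}` with `g, h ∈ G_i`, `s < u`,
`x_u ∣ g`, `x_s ∣ h`, `x_s, x_u ∈ E_i`, and `(x_s/x_u)g, (x_u/x_s)h ∈ G_i`. -/
def prinQuadrics (K : Type*) [Field K] (n r : ℕ) (E : Fin r → Set (Fin n))
    (M : Fin r → (Fin n →₀ ℕ)) : Set (MvPolynomial (Fin n ⊕ TVar n r E M) K) :=
  {b | ∃ (i : Fin r) (g h g' h' : {g : Fin n →₀ ℕ // g ∈ LBorelSet n (E i) (M i)})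
      (s u : Fin n),
    s < u ∧ s ∈ E i ∧ u ∈ E i ∧ 0 < g.1 u ∧ 0 < h.1 s ∧
    g'.1 + Finsupp.single u 1 = g.1 + Finsupp.single s 1 ∧
    h'.1 + Finsupp.single s 1 = h.1 + Finsupp.single u 1 ∧
    b = MvPolynomial.X (Sum.inr ⟨i, g⟩) * MvPolynomial.X (Sum.inr ⟨i, h⟩) -
        MvPolynomial.X (Sum.inr ⟨i, g'⟩) * MvPolynomial.X (Sum.inr ⟨i, h'⟩)}

/-- The quadrics of bi-principal fiber type:
`T_{g,i}·T_{h,j} − T_{(x_u/x_s)g, i}·T_{(x_s/x_u)h, j}` with `i < j`, `g ∈ G_i`,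
`h ∈ G_j`, `s < u`, `x_s ∣ g`, `x_u ∣ h`, `x_s, x_u ∈ E_i ∩ E_j`, and
`(x_u/x_s)g ∈ G_i`, `(x_s/x_u)h ∈ G_j`. -/
def biQuadrics (K : Type*) [Field K] (n r : ℕ) (E : Fin r → Set (Fin n))
    (M : Fin r → (Fin n →₀ ℕ)) : Set (MvPolynomial (Fin n ⊕ TVar n r E M) K) :=
  {b | ∃ (i j : Fin r), i < j ∧
    ∃ (g g' : {g : Fin n →₀ ℕ // g ∈ LBorelSet n (E i) (M i)})
      (h h' : {g : Fin n →₀ ℕ // g ∈ LBorelSet n (E j) (M j)}) (s u : Fin n),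
    s < u ∧ s ∈ E i ∧ u ∈ E i ∧ s ∈ E j ∧ u ∈ E j ∧ 0 < g.1 s ∧ 0 < h.1 u ∧
    g'.1 + Finsupp.single s 1 = g.1 + Finsupp.single u 1 ∧
    h'.1 + Finsupp.single u 1 = h.1 + Finsupp.single s 1 ∧
    b = MvPolynomial.X (Sum.inr ⟨i, g⟩) * MvPolynomial.X (Sum.inr ⟨j, h⟩) -
        MvPolynomial.X (Sum.inr ⟨i, g'⟩) * MvPolynomial.X (Sum.inr ⟨j, h'⟩)}

/-- Tail sums of an exponent vector. -/
def tailSum {n : ℕ} (g : Fin n →₀ ℕ) (k : Fin n) : ℕ := ∑ j ∈ Finset.Ici k, g j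

/-- The description of `LBorelSet` by tail sums. -/
def InC {n : ℕ} (E : Set (Fin n)) (M g : Fin n →₀ ℕ) : Prop :=
  (∀ j, 0 < g j → j ∈ E) ∧ (∑ j, g j = ∑ j, M j) ∧ ∀ k, tailSum g k ≤ tailSum M k

lemma tailSum_add {n : ℕ} (g h : Fin n →₀ ℕ) (k : Fin n) :
    tailSum (g + h) k = tailSum g k + tailSum h k := by
  simp [tailSum, Finset.sum_add_distrib]

lemma tailSum_single {n : ℕ} (s k : Fin n) :
    tailSum (Finsupp.single s 1) k = if k ≤ s then 1 else 0 := by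
  simp [tailSum, Finsupp.single_apply]

lemma total_add_single {n : ℕ} (g : Fin n →₀ ℕ) (s : Fin n) :
    ∑ j, (g + Finsupp.single s 1 : Fin n →₀ ℕ) j = ∑ j, g j + 1 := by
  simp [Finset.sum_add_distrib, Finsupp.single_apply]

lemma total_eq_of_exchange {n : ℕ} {g g' : Fin n →₀ ℕ} {s k : Fin n}
    (h : g' + Finsupp.single s 1 = g + Finsupp.single k 1) : ∑ j, g' j = ∑ j, g j := by
  have h1 := total_add_single g' s
  have h2 := total_add_single g k
  rw [h] at h1
  omega

lemma pos_of_exchange {n : ℕ} {g g' : Fin n →₀ ℕ} {s k j : Fin n}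
    (h : g' + Finsupp.single s 1 = g + Finsupp.single k 1) (hj : 0 < g' j) :
    0 < g j ∨ j = k := by
  have := DFunLike.congr_fun h j
  simp only [Finsupp.add_apply, Finsupp.single_apply] at this
  by_cases hk : k = j
  · exact Or.inr hk.symm
  · left
    simp only [if_neg hk] at this
    omega

lemma exists_exchange {n : ℕ} (g : Fin n →₀ ℕ) (s k : Fin n) (hs : 0 < g s) :
    ∃ g' : Fin n →₀ ℕ, g' + Finsupp.single s 1 = g + Finsupp.single k 1 := by
  have hle : Finsupp.single s 1 ≤ g := by
    rw [Finsupp.single_le_iff]; exact hs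
  refine ⟨g - Finsupp.single s 1 + Finsupp.single k 1, ?_⟩
  rw [add_right_comm, tsub_add_cancel_of_le hle]

lemma InC.up {n : ℕ} {E : Set (Fin n)} {M g h : Fin n →₀ ℕ} (hg : InC E M g) (hh : InC E M h)
    (k : Fin n) (hab : ∀ j, k < j → g j = h j) (hk : g k < h k) :
    ∃ s, s < k ∧ 0 < g s ∧ ∃ g', g' + Finsupp.single s 1 = g + Finsupp.single k 1 ∧
      InC E M g' := by
  classical
  have hex : ∃ s, s < k ∧ 0 < g s := by
    by_contra hcon
    push Not at hcon
    have : ∑ j, g j < ∑ j, h j := by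
      apply Finset.sum_lt_sum
      · intro j _
        rcases lt_trichotomy j k with hj | hj | hj
        · have := hcon j hj; omega
        · subst hj; exact hk.le
        · exact (hab j hj).le
      · exact ⟨k, Finset.mem_univ _, hk⟩
    rw [hg.2.1, hh.2.1] at this
    exact lt_irrefl _ this
  let F : Finset (Fin n) := Finset.univ.filter fun s => s < k ∧ 0 < g s
  have hF : F.Nonempty := by
    obtain ⟨s, hs⟩ := hex
    exact ⟨s, by simp [F, hs]⟩
  obtain ⟨s, hsF, hmax⟩ := F.exists_max_image id hF
  simp only [F, Finset.mem_filter, Finset.mem_univ, true_and, id] at hsF hmax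
  obtain ⟨g', hg'⟩ := exists_exchange g s k hsF.2
  refine ⟨s, hsF.1, hsF.2, g', hg', ?_, ?_, ?_⟩
  · intro j hj
    rcases pos_of_exchange hg' hj with h1 | h1
    · exact hg.1 j h1
    · subst h1; exact hh.1 _ (by omega)
  · rw [total_eq_of_exchange hg', hg.2.1]
  · intro j
    have e := congrArg (fun x => tailSum x j) hg'
    simp only [tailSum_add, tailSum_single] at e
    have h1 := hg.2.2 j
    have h2 := hh.2.2 j
    by_cases hjs : j ≤ s
    · rw [if_pos hjs, if_pos (hjs.trans hsF.1.le)] at e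
      omega
    · by_cases hjk : j ≤ k
      · rw [if_neg hjs, if_pos hjk] at e
        have : tailSum g j < tailSum h j := by
          apply Finset.sum_lt_sum
          · intro i hi
            rw [Finset.mem_Ici] at hi
            rcases lt_trichotomy i k with hik | hik | hik
            · have : g i = 0 := by
                by_contra hne
                exact hjs (hi.trans (hmax i ⟨hik, Nat.pos_of_ne_zero hne⟩))
              omega
            · subst hik; exact hk.le
            · exact (hab i hik).le
          · exact ⟨k, Finset.mem_Ici.2 hjk, hk⟩
        omega
      · rw [if_neg hjs, if_neg hjk] at e
        omega

lemma InC.down {n : ℕ} {E : Set (Fin n)} {M g g' : Fin n →₀ ℕ} (hg : InC E M g)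
    (s k : Fin n) (hsk : s < k) (hs : s ∈ E)
    (h : g' + Finsupp.single k 1 = g + Finsupp.single s 1) : InC E M g' := by
  refine ⟨?_, ?_, ?_⟩
  · intro j hj
    rcases pos_of_exchange h hj with h1 | h1
    · exact hg.1 j h1
    · subst h1; exact hs
  · rw [total_eq_of_exchange h, hg.2.1]
  · intro j
    have e := congrArg (fun x => tailSum x j) h
    simp only [tailSum_add, tailSum_single] at e
    have h1 := hg.2.2 j
    by_cases hjs : j ≤ s
    · rw [if_pos hjs, if_pos (hjs.trans hsk.le)] at e
      omega
    · rw [if_neg hjs] at e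
      omega

lemma InC.of_mem {n : ℕ} {E : Set (Fin n)} {M g : Fin n →₀ ℕ} (hM : ∀ j, 0 < M j → j ∈ E)
    (hg : g ∈ LBorelSet n E M) : InC E M g := by
  have hg' : Relation.ReflTransGen (LBorelStep n E) M g := hg
  clear hg
  induction hg' with
  | refl => exact ⟨hM, rfl, fun _ => le_rfl⟩
  | tail _ hstep ih =>
    obtain ⟨i, j, hi, hj, hij, _, he⟩ := hstep
    exact ih.down i j hij hi he

lemma InC.mem {n : ℕ} {E : Set (Fin n)} {M : Fin n →₀ ℕ} (hM : ∀ j, 0 < M j → j ∈ E) :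
    ∀ (D : ℕ) (g : Fin n →₀ ℕ), InC E M g → ∑ k, tailSum M k ≤ ∑ k, tailSum g k + D →
      g ∈ LBorelSet n E M := by
  classical
  intro D
  have key : ∀ g : Fin n →₀ ℕ, InC E M g → g ≠ M →
      ∃ k, (∀ j, k < j → g j = M j) ∧ g k < M k := by
    intro g hg hne
    let F : Finset (Fin n) := Finset.univ.filter fun s => g s ≠ M s
    have hF : F.Nonempty := by
      by_contra hcon
      apply hne
      ext s
      by_contra hs
      exact hcon ⟨s, by simp [F, hs]⟩
    obtain ⟨k, hkF, hmax⟩ := F.exists_max_image id hF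
    simp only [F, Finset.mem_filter, Finset.mem_univ, true_and, id] at hkF hmax
    have hab : ∀ j, k < j → g j = M j := by
      intro j hj
      by_contra hcon
      exact absurd (hmax j hcon) (not_le.2 hj)
    refine ⟨k, hab, lt_of_le_of_ne ?_ hkF⟩
    by_contra hcon
    have : tailSum M k < tailSum g k := by
      apply Finset.sum_lt_sum
      · intro i hi
        rw [Finset.mem_Ici] at hi
        rcases hi.eq_or_lt with h1 | h1
        · subst h1; omega
        · exact (hab i h1).ge
      · exact ⟨k, Finset.mem_Ici.2 le_rfl, by omega⟩
    have := hg.2.2 k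
    omega
  induction D with
  | zero =>
    intro g hg hD
    by_cases hne : g = M
    · subst hne; exact Relation.ReflTransGen.refl
    · exfalso
      obtain ⟨k, hab, hk⟩ := key g hg hne
      have : ∑ k, tailSum g k < ∑ k, tailSum M k := by
        apply Finset.sum_lt_sum (fun i _ => hg.2.2 i)
        refine ⟨k, Finset.mem_univ _, ?_⟩
        apply Finset.sum_lt_sum
        · intro i hi
          rw [Finset.mem_Ici] at hi
          rcases hi.eq_or_lt with h1 | h1
          · subst h1; omega
          · exact (hab i h1).le
        · exact ⟨k, Finset.mem_Ici.2 le_rfl, hk⟩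
      omega
  | succ D ih =>
    intro g hg hD
    by_cases hne : g = M
    · subst hne; exact Relation.ReflTransGen.refl
    · obtain ⟨k, hab, hk⟩ := key g hg hne
      obtain ⟨s, hsk, hs, g', he, hg'⟩ :=
        hg.up (h := M) ⟨hM, rfl, fun _ => le_rfl⟩ k hab hk
      have hlt : ∑ k, tailSum g k < ∑ k, tailSum g' k := by
        have hj : ∀ j, tailSum g' j + (if j ≤ s then 1 else 0) =
            tailSum g j + (if j ≤ k then 1 else 0) := by
          intro j
          have e := congrArg (fun x => tailSum x j) he
          simpa only [tailSum_add, tailSum_single] using e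
        apply Finset.sum_lt_sum
        · intro j _
          have := hj j
          by_cases hjs : j ≤ s
          · rw [if_pos hjs, if_pos (hjs.trans hsk.le)] at this
            omega
          · rw [if_neg hjs] at this
            omega
        · refine ⟨k, Finset.mem_univ _, ?_⟩
          have := hj k
          rw [if_neg (not_le.2 hsk), if_pos le_rfl] at this
          omega
      have hmem : Relation.ReflTransGen (LBorelStep n E) M g' := ih g' hg' (by omega)
      refine Relation.ReflTransGen.tail hmem ⟨s, k, hg.1 s hs, hM k (by omega), hsk, ?_, he.symm⟩
      have := DFunLike.congr_fun he k
      simp only [Finsupp.add_apply, Finsupp.single_apply, if_neg hsk.ne, if_true] at this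
      omega

/-- Connectivity of fibers, abstractly. -/
lemma connect {n : ℕ} {V R ι : Type*} [CommMonoid R] [Fintype ι] [DecidableEq ι]
    (mon : V → Fin n →₀ ℕ) (lab : V → ℕ) (f : V → R)
    (hinj : ∀ p q, lab p = lab q → mon p = mon q → p = q)
    (hex : ∀ (p p0 q q0 : V) (k : Fin n), lab p = lab p0 → lab q = lab q0 → lab p ≤ lab q →
      (∀ j, k < j → mon p j = mon p0 j) → mon p k < mon p0 k → mon q0 k < mon q k →
      ∃ s p' q', s < k ∧ lab p' = lab p ∧ lab q' = lab q ∧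
        mon p' + Finsupp.single s 1 = mon p + Finsupp.single k 1 ∧
        mon q' + Finsupp.single k 1 = mon q + Finsupp.single s 1 ∧ f p * f q = f p' * f q') :
    ∀ (k D : ℕ) (c c' : ι → V), (∀ a, lab (c a) = lab (c' a)) →
      (∑ a, mon (c a) = ∑ a, mon (c' a)) →
      (∀ a (j : Fin n), k ≤ j.val → mon (c a) j = mon (c' a) j) →
      (∀ hk : k - 1 < n, 0 < k →
        ∑ a, (Nat.dist (mon (c a) ⟨k - 1, hk⟩) (mon (c' a) ⟨k - 1, hk⟩)) ≤ D) →
      ∏ a, f (c a) = ∏ a, f (c' a) := by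
  intro k
  induction k with
  | zero =>
    intro D c c' hl hs hag _
    refine Finset.prod_congr rfl fun a _ => ?_
    rw [hinj _ _ (hl a) (Finsupp.ext fun j => hag a j (Nat.zero_le _))]
  | succ k ihk =>
    intro D
    by_cases hkn : n ≤ k
    · intro c c' hl hs hag _
      refine ihk (∑ a, if hk : k - 1 < n then
        (Nat.dist (mon (c a) ⟨k - 1, hk⟩) (mon (c' a) ⟨k - 1, hk⟩)) else 0) c c' hl hs ?_ ?_
      · intro a j hj; have := j.2; omega
      · intro hk _; simp [hk]
    push Not at hkn
    induction D with
    | zero =>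
      intro c c' hl hs hag hD
      have h0 := hD (by simpa using hkn) (Nat.succ_pos _)
      simp only [Nat.add_sub_cancel, Nat.le_zero, Finset.sum_eq_zero_iff, Finset.mem_univ,
        true_imp_iff] at h0
      refine ihk (∑ a, if hk : k - 1 < n then
        (Nat.dist (mon (c a) ⟨k - 1, hk⟩) (mon (c' a) ⟨k - 1, hk⟩)) else 0) c c' hl hs ?_ ?_
      · intro a j hj
        rcases hj.eq_or_lt with h | h
        · have := Nat.eq_of_dist_eq_zero (h0 a)
          have hjk : j = ⟨k, hkn⟩ := Fin.ext h.symm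
          rw [hjk]; exact this
        · exact hag a j h
      · intro hk _; simp [hk]
    | succ D ihD =>
      -- one-sided step
      have step : ∀ (c c' : ι → V) (u : ι), (∀ a, lab (c a) = lab (c' a)) →
          (∑ a, mon (c a) = ∑ a, mon (c' a)) →
          (∀ a (j : Fin n), k + 1 ≤ j.val → mon (c a) j = mon (c' a) j) →
          (∑ a, (Nat.dist (mon (c a) ⟨k, hkn⟩) (mon (c' a) ⟨k, hkn⟩)) ≤ D + 1) →
          (∀ a, mon (c a) ⟨k, hkn⟩ ≠ mon (c' a) ⟨k, hkn⟩ → lab (c u) ≤ lab (c a)) →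
          mon (c u) ⟨k, hkn⟩ < mon (c' u) ⟨k, hkn⟩ →
          ∏ a, f (c a) = ∏ a, f (c' a) := by
        intro c c' u hl hs hag hD hmin hu
        have hv : ∃ v, mon (c' v) ⟨k, hkn⟩ < mon (c v) ⟨k, hkn⟩ := by
          by_contra hcon
          push Not at hcon
          have h1 : ∑ a, mon (c a) ⟨k, hkn⟩ < ∑ a, mon (c' a) ⟨k, hkn⟩ :=
            Finset.sum_lt_sum (fun a _ => hcon a) ⟨u, Finset.mem_univ _, hu⟩
          have h2 := DFunLike.congr_fun hs ⟨k, hkn⟩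
          simp only [Finsupp.coe_finsetSum, Finset.sum_apply] at h2
          omega
        obtain ⟨v, hv⟩ := hv
        have huv : u ≠ v := by rintro rfl; omega
        obtain ⟨s, p', q', hsk, hlp, hlq, hep, heq, hf⟩ := hex (c u) (c' u) (c v) (c' v) ⟨k, hkn⟩
          (hl u) (hl v) (hmin v hv.ne') (fun j hj => hag u j hj) hu hv
        let d : ι → V := Function.update (Function.update c u p') v q'
        have hdv : d v = q' := by simp [d]
        have hdu : d u = p' := by simp [d, huv]
        have hdo : ∀ a, a ≠ u → a ≠ v → d a = c a := by
          intro a h1 h2; simp [d, h1, h2]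
        have split : ∀ {A : Type _} [CommMonoid A] (F : ι → A),
            ∏ a, F a = F u * F v * ∏ a ∈ (Finset.univ.erase u).erase v, F a := by
          intro A _ F
          rw [mul_assoc, Finset.mul_prod_erase _ _ (by simp [huv.symm]),
            Finset.mul_prod_erase _ _ (Finset.mem_univ _)]
        have splitAdd : ∀ {A : Type} [AddCommMonoid A] (F : ι → A),
            ∑ a, F a = F u + F v + ∑ a ∈ (Finset.univ.erase u).erase v, F a := by
          intro A _ F
          rw [add_assoc, Finset.add_sum_erase _ _ (by simp [huv.symm]),
            Finset.add_sum_erase _ _ (Finset.mem_univ _)]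
        have hprod : ∏ a, f (c a) = ∏ a, f (d a) := by
          rw [split (fun a => f (c a)), split (fun a => f (d a)), hf, hdu, hdv]
          congr 1
          refine Finset.prod_congr rfl fun a ha => ?_
          simp only [Finset.mem_erase] at ha
          rw [hdo a ha.2.1 ha.1]
        have hmonu : ∀ j, mon p' j + (if s = j then 1 else 0) =
            mon (c u) j + (if (⟨k, hkn⟩ : Fin n) = j then 1 else 0) := by
          intro j
          have := DFunLike.congr_fun hep j
          simpa only [Finsupp.add_apply, Finsupp.single_apply] using this
        have hmonv : ∀ j, mon q' j + (if (⟨k, hkn⟩ : Fin n) = j then 1 else 0) =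
            mon (c v) j + (if s = j then 1 else 0) := by
          intro j
          have := DFunLike.congr_fun heq j
          simpa only [Finsupp.add_apply, Finsupp.single_apply] using this
        rw [hprod]
        apply ihD
        · intro a
          by_cases h1 : a = u
          · subst h1; rw [hdu, hlp, hl]
          · by_cases h2 : a = v
            · subst h2; rw [hdv, hlq, hl]
            · rw [hdo a h1 h2, hl]
        · rw [← hs, splitAdd (fun a => mon (d a)), splitAdd (fun a => mon (c a)), hdu, hdv]
          congr 1
          · ext j
            have h1 := hmonu j
            have h2 := hmonv j
            simp only [Finsupp.add_apply]
            omega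
          · refine Finset.sum_congr rfl fun a ha => ?_
            simp only [Finset.mem_erase] at ha
            rw [hdo a ha.2.1 ha.1]
        · intro a j hj
          have hsj : s ≠ j := by
            rintro rfl
            have : s.val < k := hsk
            omega
          have hkj : (⟨k, hkn⟩ : Fin n) ≠ j := by
            rintro rfl
            simp at hj
          rw [← hag a j hj]
          by_cases h1 : a = u
          · subst h1
            have := hmonu j
            rw [if_neg hsj, if_neg hkj] at this
            rw [hdu]; omega
          · by_cases h2 : a = v
            · subst h2
              have := hmonv j
              rw [if_neg hsj, if_neg hkj] at this
              rw [hdv]; omega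
            · rw [hdo a h1 h2]
        · intro _ _
          simp only [Nat.add_sub_cancel]
          have h1 := hmonu ⟨k, hkn⟩
          have h2 := hmonv ⟨k, hkn⟩
          rw [if_neg hsk.ne, if_pos rfl] at h1 h2
          rw [splitAdd] at hD ⊢
          have hrest : ∑ a ∈ (Finset.univ.erase u).erase v,
              Nat.dist (mon (d a) ⟨k, hkn⟩) (mon (c' a) ⟨k, hkn⟩) =
              ∑ a ∈ (Finset.univ.erase u).erase v,
              Nat.dist (mon (c a) ⟨k, hkn⟩) (mon (c' a) ⟨k, hkn⟩) := by
            refine Finset.sum_congr rfl fun a ha => ?_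
            simp only [Finset.mem_erase] at ha
            rw [hdo a ha.2.1 ha.1]
          rw [hrest, hdu, hdv]
          simp only [Nat.dist] at hD ⊢
          omega
      intro c c' hl hs hag hD
      have hD' := hD (by simpa using hkn) (Nat.succ_pos _)
      simp only [Nat.add_sub_cancel] at hD'
      let F : Finset ι := Finset.univ.filter fun a =>
        mon (c a) ⟨k, hkn⟩ ≠ mon (c' a) ⟨k, hkn⟩
      by_cases hF : F.Nonempty
      · obtain ⟨u, huF, hmin⟩ := F.exists_min_image (fun a => lab (c a)) hF
        simp only [F, Finset.mem_filter, Finset.mem_univ, true_and] at huF hmin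
        rcases lt_or_gt_of_ne huF with h | h
        · exact step c c' u hl hs hag hD' hmin h
        · refine (step c' c u (fun a => (hl a).symm) hs.symm (fun a j hj => (hag a j hj).symm)
            ?_ ?_ h).symm
          · simpa only [Nat.dist_comm] using hD'
          · intro a ha
            rw [← hl, ← hl]
            exact hmin a ha.symm
      · apply ihD c c' hl hs hag
        intro _ _
        simp only [Nat.add_sub_cancel]
        rw [Finset.sum_eq_zero]
        · exact Nat.zero_le _
        · intro a _
          have : mon (c a) ⟨k, hkn⟩ = mon (c' a) ⟨k, hkn⟩ := by
            by_contra hne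
            exact hF ⟨a, by simp [F, hne]⟩
          rw [this, Nat.dist_self]

/-- Multiset form of `connect`. -/
lemma connect_multiset {n : ℕ} {V R : Type*} [CommMonoid R]
    (mon : V → Fin n →₀ ℕ) (lab : V → ℕ) (f : V → R)
    (hinj : ∀ p q, lab p = lab q → mon p = mon q → p = q)
    (hex : ∀ (p p0 q q0 : V) (k : Fin n), lab p = lab p0 → lab q = lab q0 → lab p ≤ lab q →
      (∀ j, k < j → mon p j = mon p0 j) → mon p k < mon p0 k → mon q0 k < mon q k →
      ∃ s p' q', s < k ∧ lab p' = lab p ∧ lab q' = lab q ∧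
        mon p' + Finsupp.single s 1 = mon p + Finsupp.single k 1 ∧
        mon q' + Finsupp.single k 1 = mon q + Finsupp.single s 1 ∧ f p * f q = f p' * f q')
    (S S' : Multiset V) (hlab : S.map lab = S'.map lab)
    (hmon : (S.map mon).sum = (S'.map mon).sum) : (S.map f).prod = (S'.map f).prod := by
  classical
  have hrel : Multiset.Rel (fun a b => lab a = lab b) S S' := by
    rw [← Multiset.rel_eq, Multiset.rel_map] at hlab
    exact hlab
  have hP : ∃ P : Multiset (V × V), P.map Prod.fst = S ∧ P.map Prod.snd = S' ∧
      ∀ x ∈ P, lab x.1 = lab x.2 := by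
    clear hlab hmon
    induction hrel with
    | zero => exact ⟨0, by simp⟩
    | @cons a b as bs hab _ ih =>
      obtain ⟨P, h1, h2, h3⟩ := ih
      refine ⟨(a, b) ::ₘ P, by simp [h1], by simp [h2], ?_⟩
      intro x hx
      rcases Multiset.mem_cons.1 hx with rfl | hx
      · exact hab
      · exact h3 x hx
  obtain ⟨P, rfl, rfl, h3⟩ := hP
  obtain ⟨l, rfl⟩ : ∃ l : List (V × V), P = (l : Multiset (V × V)) := ⟨P.toList, by simp⟩
  have hsum : ∀ {A : Type} [AddCommMonoid A] (F : V × V → A),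
      ((l : Multiset (V × V)).map F).sum = ∑ a : Fin l.length, F (l.get a) := by
    intro A _ F
    rw [Multiset.map_coe, Multiset.sum_coe]
    simp
  have hprod : ∀ (F : V × V → R),
      ((l : Multiset (V × V)).map F).prod = ∏ a : Fin l.length, F (l.get a) := by
    intro F
    rw [Multiset.map_coe, Multiset.prod_coe]
    simp
  simp only [Multiset.map_map] at hmon ⊢
  rw [hsum, hsum] at hmon
  rw [hprod, hprod]
  refine connect mon lab f hinj hex n (∑ a, if hk : n - 1 < n then
      (Nat.dist (mon (l.get a).1 ⟨n - 1, hk⟩) (mon (l.get a).2 ⟨n - 1, hk⟩)) else 0) (fun a => (l.get a).1) (fun a => (l.get a).2) ?_ hmon ?_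
    (fun hk _ => by simp [hk])
  · intro a
    exact h3 _ (by simp)
  · intro a j hj
    have := j.2
    omega

/-- Exponent vector (in the `x` variables) of the image of a variable. -/
noncomputable def vmon {n r : ℕ} {E : Fin r → Set (Fin n)} {M : Fin r → (Fin n →₀ ℕ)} :
    Fin n ⊕ TVar n r E M → Fin n →₀ ℕ :=
  Sum.elim (fun j => Finsupp.single j 1) (fun v => v.2.1)

/-- Label of a variable: the index of its ideal, or `r` for an `x` variable. -/
def vlab {n r : ℕ} {E : Fin r → Set (Fin n)} {M : Fin r → (Fin n →₀ ℕ)} :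
    Fin n ⊕ TVar n r E M → ℕ :=
  Sum.elim (fun _ => r) (fun v => v.1.val)

/-- Exponent vector of the image of a variable. -/
noncomputable def vwt {n r : ℕ} {E : Fin r → Set (Fin n)} {M : Fin r → (Fin n →₀ ℕ)} :
    Fin n ⊕ TVar n r E M → (Fin n ⊕ Fin r) →₀ ℕ :=
  Sum.elim (fun j => Finsupp.single (Sum.inl j) 1)
    (fun v => Finsupp.mapDomain Sum.inl v.2.1 + Finsupp.single (Sum.inr v.1) 1)

lemma vmon_x {n r : ℕ} {E : Fin r → Set (Fin n)} {M : Fin r → (Fin n →₀ ℕ)}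
    (j : Fin n) : vmon (Sum.inl j : Fin n ⊕ TVar n r E M) = Finsupp.single j 1 := rfl

lemma vmon_T {n r : ℕ} {E : Fin r → Set (Fin n)} {M : Fin r → (Fin n →₀ ℕ)}
    (i : Fin r) (g : {g : Fin n →₀ ℕ // g ∈ LBorelSet n (E i) (M i)}) :
    vmon (Sum.inr ⟨i, g⟩ : Fin n ⊕ TVar n r E M) = g.1 := rfl

lemma vlab_x {n r : ℕ} {E : Fin r → Set (Fin n)} {M : Fin r → (Fin n →₀ ℕ)}
    (j : Fin n) : vlab (Sum.inl j : Fin n ⊕ TVar n r E M) = r := rfl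

lemma vlab_T {n r : ℕ} {E : Fin r → Set (Fin n)} {M : Fin r → (Fin n →₀ ℕ)}
    (i : Fin r) (g : {g : Fin n →₀ ℕ // g ∈ LBorelSet n (E i) (M i)}) :
    vlab (Sum.inr ⟨i, g⟩ : Fin n ⊕ TVar n r E M) = i.val := rfl

lemma vwt_x {n r : ℕ} {E : Fin r → Set (Fin n)} {M : Fin r → (Fin n →₀ ℕ)}
    (j : Fin n) : vwt (Sum.inl j : Fin n ⊕ TVar n r E M) = Finsupp.single (Sum.inl j) 1 := rfl

lemma vwt_T {n r : ℕ} {E : Fin r → Set (Fin n)} {M : Fin r → (Fin n →₀ ℕ)}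
    (i : Fin r) (g : {g : Fin n →₀ ℕ // g ∈ LBorelSet n (E i) (M i)}) :
    vwt (Sum.inr ⟨i, g⟩ : Fin n ⊕ TVar n r E M) =
      Finsupp.mapDomain Sum.inl g.1 + Finsupp.single (Sum.inr i) 1 := rfl

lemma vlab_vmon_inj {n r : ℕ} {E : Fin r → Set (Fin n)} {M : Fin r → (Fin n →₀ ℕ)}
    (p q : Fin n ⊕ TVar n r E M) (hl : vlab p = vlab q) (hm : vmon p = vmon q) : p = q := by
  rcases p with i | ⟨i, g⟩ <;> rcases q with j | ⟨j, h⟩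
  · simp only [vmon_x, vmon_T] at hm
    rw [Finsupp.single_left_inj one_ne_zero] at hm
    rw [hm]
  · simp only [vlab_x, vlab_T] at hl
    have := j.2; omega
  · simp only [vlab_x, vlab_T] at hl
    have := i.2; omega
  · simp only [vlab_x, vlab_T] at hl
    have hij : i = j := Fin.ext hl
    subst hij
    simp only [vmon_x, vmon_T] at hm
    have : g = h := Subtype.ext hm
    rw [this]

lemma vwt_inl {n r : ℕ} {E : Fin r → Set (Fin n)} {M : Fin r → (Fin n →₀ ℕ)}
    (p : Fin n ⊕ TVar n r E M) (j : Fin n) : vwt p (Sum.inl j) = vmon p j := by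
  rcases p with i | ⟨i, g⟩
  · rw [vwt_x, vmon_x]; simp [Finsupp.single_apply]
  · rw [vwt_T, vmon_T]; simp [Finsupp.mapDomain_apply Sum.inl_injective]

lemma vwt_inr {n r : ℕ} {E : Fin r → Set (Fin n)} {M : Fin r → (Fin n →₀ ℕ)}
    (p : Fin n ⊕ TVar n r E M) (j : Fin r) :
    vwt p (Sum.inr j) = if vlab p = j.val then 1 else 0 := by
  rcases p with i | ⟨i, g⟩
  · have := j.2.ne'
    rw [vwt_x, vlab_x]; simp [this]
  · rw [vwt_T, vlab_T]; simp [Finsupp.mapDomain_of_notMem_range, Finsupp.single_apply, Fin.ext_iff]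

lemma vmon_total {n r : ℕ} {E : Fin r → Set (Fin n)} {M : Fin r → (Fin n →₀ ℕ)}
    (hsupp : ∀ (i : Fin r) (j : Fin n), 0 < M i j → j ∈ E i)
    (p : Fin n ⊕ TVar n r E M) :
    ∑ j, vmon p j = (if vlab p = r then 1 else 0) +
      ∑ i : Fin r, (∑ j, M i j) * (if vlab p = i.val then 1 else 0) := by
  rcases p with i | ⟨i, g⟩
  · have : ∀ i : Fin r, r ≠ i.val := fun i => i.2.ne'
    rw [vlab_x, vmon_x]; simp [Finsupp.single_apply, this]
  · have h1 := (InC.of_mem (hsupp i) g.2).2.1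
    have h2 : i.val ≠ r := i.2.ne
    rw [vlab_T, vmon_T]; simp [h2, ← Fin.ext_iff, h1]

lemma vwt_sum {n r : ℕ} {E : Fin r → Set (Fin n)} {M : Fin r → (Fin n →₀ ℕ)}
    (hsupp : ∀ (i : Fin r) (j : Fin n), 0 < M i j → j ∈ E i)
    (S S' : Multiset (Fin n ⊕ TVar n r E M)) (h : (S.map vwt).sum = (S'.map vwt).sum) :
    S.map vlab = S'.map vlab ∧ (S.map vmon).sum = (S'.map vmon).sum := by
  classical
  have happ : ∀ {A : Type} (w : (Fin n ⊕ TVar n r E M) → A →₀ ℕ)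
      (S : Multiset (Fin n ⊕ TVar n r E M)) (x : A),
      (S.map w).sum x = (S.map fun p => w p x).sum := by
    intro A w S x
    have := map_multiset_sum (Finsupp.applyAddHom x : (A →₀ ℕ) →+ ℕ) (S.map w)
    simpa [Multiset.map_map, Function.comp_def] using this
  have hmon : (S.map vmon).sum = (S'.map vmon).sum := by
    ext j
    have := DFunLike.congr_fun h (Sum.inl j)
    simpa only [happ, vwt_inl] using this
  refine ⟨?_, hmon⟩
  have hcount : ∀ (S : Multiset (Fin n ⊕ TVar n r E M)) (l : ℕ),
      Multiset.count l (S.map vlab) = (S.map fun p => if vlab p = l then 1 else 0).sum := by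
    intro S l
    induction S using Multiset.induction_on with
    | empty => simp
    | cons a S ih =>
      simp only [Multiset.map_cons, Multiset.count_cons, Multiset.sum_cons, ih, eq_comm (a := l)]
      omega
  have hlt : ∀ i : Fin r, Multiset.count i.val (S.map vlab) =
      Multiset.count i.val (S'.map vlab) := by
    intro i
    have := DFunLike.congr_fun h (Sum.inr i)
    simpa only [happ, vwt_inr, ← hcount] using this
  have htot : ∀ S : Multiset (Fin n ⊕ TVar n r E M), ∑ j, (S.map vmon).sum j =
      Multiset.count r (S.map vlab) +
        ∑ i : Fin r, (∑ j, M i j) * Multiset.count i.val (S.map vlab) := by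
    intro S
    induction S using Multiset.induction_on with
    | empty => simp
    | cons a S ih =>
      have := vmon_total hsupp a
      simp only [Multiset.map_cons, Multiset.count_cons, Multiset.sum_cons, Finsupp.add_apply,
        Finset.sum_add_distrib, mul_add, ih, this, eq_comm (b := vlab a)]
      omega
  ext l
  rcases lt_trichotomy l r with hl | hl | hl
  · exact hlt ⟨l, hl⟩
  · subst hl
    have h1 := htot S
    have h2 := htot S'
    rw [hmon] at h1
    simp only [hlt] at h1
    omega
  · have hz : ∀ S : Multiset (Fin n ⊕ TVar n r E M), Multiset.count l (S.map vlab) = 0 := by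
      intro S
      rw [Multiset.count_eq_zero]
      intro hmem
      obtain ⟨p, _, hp⟩ := Multiset.mem_map.1 hmem
      rcases p with i | ⟨i, g⟩
      · simp only [vlab_x, vlab_T] at hp; omega
      · simp only [vlab_x, vlab_T] at hp; have := i.2; omega
    rw [hz, hz]

lemma quadric_exchange {R : Type*} [CommMonoid R] {n r : ℕ}
    {E : Fin r → Set (Fin n)} {M : Fin r → (Fin n →₀ ℕ)}
    (hsupp : ∀ (i : Fin r) (j : Fin n), 0 < M i j → j ∈ E i)
    (hLfree : ∀ (h j : Fin n) (u v : Fin r), h < j → u < v →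
      h ∈ E u → j ∈ E u → j ∈ E v → h ∈ E v)
    (f : Fin n ⊕ TVar n r E M → R)
    (hsym : ∀ (i : Fin r) (g g' : {g : Fin n →₀ ℕ // g ∈ LBorelSet n (E i) (M i)})
      (s u : Fin n), s < u → s ∈ E i → u ∈ E i → 0 < g.1 u →
      g'.1 + Finsupp.single u 1 = g.1 + Finsupp.single s 1 →
      f (Sum.inl s) * f (Sum.inr ⟨i, g⟩) = f (Sum.inl u) * f (Sum.inr ⟨i, g'⟩))
    (hprin : ∀ (i : Fin r) (g h g' h' : {g : Fin n →₀ ℕ // g ∈ LBorelSet n (E i) (M i)})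
      (s u : Fin n), s < u → s ∈ E i → u ∈ E i → 0 < g.1 u → 0 < h.1 s →
      g'.1 + Finsupp.single u 1 = g.1 + Finsupp.single s 1 →
      h'.1 + Finsupp.single s 1 = h.1 + Finsupp.single u 1 →
      f (Sum.inr ⟨i, g⟩) * f (Sum.inr ⟨i, h⟩) = f (Sum.inr ⟨i, g'⟩) * f (Sum.inr ⟨i, h'⟩))
    (hbi : ∀ (i j : Fin r), i < j →
      ∀ (g g' : {g : Fin n →₀ ℕ // g ∈ LBorelSet n (E i) (M i)})
      (h h' : {g : Fin n →₀ ℕ // g ∈ LBorelSet n (E j) (M j)}) (s u : Fin n),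
      s < u → s ∈ E i → u ∈ E i → s ∈ E j → u ∈ E j → 0 < g.1 s → 0 < h.1 u →
      g'.1 + Finsupp.single s 1 = g.1 + Finsupp.single u 1 →
      h'.1 + Finsupp.single u 1 = h.1 + Finsupp.single s 1 →
      f (Sum.inr ⟨i, g⟩) * f (Sum.inr ⟨j, h⟩) = f (Sum.inr ⟨i, g'⟩) * f (Sum.inr ⟨j, h'⟩))
    (p p0 q q0 : Fin n ⊕ TVar n r E M) (k : Fin n) (hp : vlab p = vlab p0)
    (hpq : vlab p ≤ vlab q)
    (hab : ∀ j, k < j → vmon p j = vmon p0 j) (hk : vmon p k < vmon p0 k)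
    (hqk : vmon q0 k < vmon q k) :
    ∃ s p' q', s < k ∧ vlab p' = vlab p ∧ vlab q' = vlab q ∧
        vmon p' + Finsupp.single s 1 = vmon p + Finsupp.single k 1 ∧
        vmon q' + Finsupp.single k 1 = vmon q + Finsupp.single s 1 ∧ f p * f q = f p' * f q' := by
  rcases p with i | ⟨i, g⟩
  · -- `p` is an `x` variable, hence so are all
    rcases p0 with i0 | ⟨i0, g0⟩
    swap
    · simp only [vlab_x, vlab_T] at hp
      have := i0.2; omega
    rcases q with j | ⟨j, h⟩
    swap
    · simp only [vlab_x, vlab_T] at hpq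
      have := j.2; omega
    simp only [vmon_x, vmon_T, Finsupp.single_apply] at hk hab
    have hj : j = k := by
      by_contra hne
      have : vmon (Sum.inl j : Fin n ⊕ TVar n r E M) k = 0 := by
        rw [vmon_x]; simp [Finsupp.single_apply, hne]
      omega
    subst hj
    have h0 : i0 = j := by
      by_contra hne
      rw [if_neg hne] at hk; omega
    have h1 : i ≠ j := by
      intro he
      rw [if_pos he, if_pos h0] at hk; omega
    subst h0
    have h2 : i < i0 := by
      refine lt_of_le_of_ne ?_ h1
      by_contra hcon
      have := hab i (not_le.1 hcon)
      rw [if_pos rfl, if_neg h1.symm] at this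
      omega
    refine ⟨i, Sum.inl i0, Sum.inl i, h2, rfl, rfl, ?_, ?_, mul_comm _ _⟩
    · simp only [vmon_x, vmon_T]; rw [add_comm]
    · simp only [vmon_x, vmon_T]; rw [add_comm]
  · rcases p0 with i0 | ⟨i0, g0⟩
    · simp only [vlab_x, vlab_T] at hp
      have := i.2; omega
    have hii : i = i0 := Fin.ext hp
    subst hii
    simp only [vmon_x, vmon_T] at hk hab
    have hg := InC.of_mem (hsupp i) g.2
    have hg0 := InC.of_mem (hsupp i) g0.2
    obtain ⟨s, hsk, hs, g', he, hg'⟩ := hg.up hg0 k hab hk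
    have hmem : g' ∈ LBorelSet n (E i) (M i) := InC.mem (hsupp i) _ g' hg' (Nat.le_add_left _ _)
    have hsE : s ∈ E i := hg.1 s hs
    have hkE : k ∈ E i := hg0.1 k (by omega)
    have hg'k : 0 < g' k := by
      have := DFunLike.congr_fun he k
      simp only [Finsupp.add_apply, Finsupp.single_apply, if_neg hsk.ne, if_true] at this
      omega
    rcases q with j | ⟨j, h⟩
    · have hj : j = k := by
        by_contra hne
        have : vmon (Sum.inl j : Fin n ⊕ TVar n r E M) k = 0 := by
          rw [vmon_x]; simp [Finsupp.single_apply, hne]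
        omega
      subst hj
      refine ⟨s, Sum.inr ⟨i, ⟨g', hmem⟩⟩, Sum.inl s, hsk, rfl, rfl, he, ?_, ?_⟩
      · simp only [vmon_x, vmon_T]; rw [add_comm]
      · rw [mul_comm, mul_comm (f (Sum.inr ⟨i, ⟨g', hmem⟩⟩))]
        exact (hsym i ⟨g', hmem⟩ g s j hsk hsE hkE hg'k he.symm).symm
    · have hhk : 0 < h.1 k := by
        change _ < h.1 k at hqk
        omega
      have hh := InC.of_mem (hsupp j) h.2
      have hkEj : k ∈ E j := hh.1 k hhk
      have hij : i ≤ j := hpq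
      have hsEj : s ∈ E j := by
        rcases hij.eq_or_lt with h1 | h1
        · rw [← h1]; exact hsE
        · exact hLfree s k i j hsk h1 hsE hkE hkEj
      obtain ⟨h', he'⟩ := exists_exchange h.1 k s hhk
      have hh' : InC (E j) (M j) h' := hh.down s k hsk hsEj he'
      have hmem' : h' ∈ LBorelSet n (E j) (M j) :=
        InC.mem (hsupp j) _ h' hh' (Nat.le_add_left _ _)
      refine ⟨s, Sum.inr ⟨i, ⟨g', hmem⟩⟩, Sum.inr ⟨j, ⟨h', hmem'⟩⟩, hsk, rfl, rfl, he, he', ?_⟩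
      rcases hij.eq_or_lt with h1 | h1
      · subst h1
        rw [mul_comm, mul_comm (f (Sum.inr ⟨i, ⟨g', hmem⟩⟩))]
        exact hprin i h g ⟨h', hmem'⟩ ⟨g', hmem⟩ s k hsk hsE hkE hhk hs he' he
      · exact hbi i j h1 g ⟨g', hmem⟩ h ⟨h', hmem'⟩ s k hsk hsE hkE hsEj hkEj hs hhk he he'

/-- The kernel of a monomial map is controlled by its fibers. -/
lemma ker_le_of_fibers {K σ τ : Type*} [Field K] (w : σ → τ →₀ ℕ) (I : Ideal (MvPolynomial σ K))
    (h : ∀ S S' : Multiset σ, (S.map w).sum = (S'.map w).sum →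
      (S.map fun v => Ideal.Quotient.mk I (MvPolynomial.X v)).prod =
      (S'.map fun v => Ideal.Quotient.mk I (MvPolynomial.X v)).prod)
    (p : MvPolynomial σ K)
    (hp : MvPolynomial.aeval (fun v => MvPolynomial.monomial (w v) (1 : K)) p = 0) : p ∈ I := by
  classical
  let Q := MvPolynomial σ K ⧸ I
  let F : Multiset σ → Q := fun S =>
    (S.map fun v => Ideal.Quotient.mk I (MvPolynomial.X v)).prod
  let G : (τ →₀ ℕ) → Q := fun e =>
    if he : ∃ S : Multiset σ, (S.map w).sum = e then F he.choose else 0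
  have hG : ∀ S : Multiset σ, G (S.map w).sum = F S := by
    intro S
    have he : ∃ S' : Multiset σ, (S'.map w).sum = (S.map w).sum := ⟨S, rfl⟩
    simp only [G, dif_pos he]
    exact h _ _ he.choose_spec
  let ψ : MvPolynomial τ K →ₗ[K] Q := (MvPolynomial.basisMonomials τ K).constr K G
  have hψ : ∀ e, ψ (MvPolynomial.monomial e 1) = G e := by
    intro e
    have := (MvPolynomial.basisMonomials τ K).constr_basis K G e
    simpa [ψ] using this
  have key : ψ ∘ₗ (MvPolynomial.aeval (R := K)
      (fun v => MvPolynomial.monomial (w v) (1 : K))).toLinearMap =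
      (Ideal.Quotient.mkₐ K I).toLinearMap := by
    refine (MvPolynomial.basisMonomials σ K).ext fun d => ?_
    have hX : ∀ S : Multiset σ, MvPolynomial.monomial (Multiset.toFinsupp S) (1 : K) =
        (S.map MvPolynomial.X).prod := by
      intro S
      induction S using Multiset.induction_on with
      | empty => simp
      | cons a S ih =>
        rw [Multiset.map_cons, Multiset.prod_cons, ← ih, ← Multiset.singleton_add,
          Multiset.toFinsupp_add, Multiset.toFinsupp_singleton, MvPolynomial.X,
          MvPolynomial.monomial_mul, one_mul]
    obtain ⟨S, rfl⟩ : ∃ S : Multiset σ, d = Multiset.toFinsupp S :=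
      ⟨Finsupp.toMultiset d, by simp⟩
    have hmon : ∀ S : Multiset σ, (S.map fun v => MvPolynomial.monomial (w v) (1 : K)).prod =
        MvPolynomial.monomial (S.map w).sum 1 := by
      intro S
      induction S using Multiset.induction_on with
      | empty => simp
      | cons a S ih => simp [ih, MvPolynomial.monomial_mul]
    simp only [MvPolynomial.coe_basisMonomials, LinearMap.comp_apply, AlgHom.toLinearMap_apply]
    rw [hX, map_multiset_prod (MvPolynomial.aeval _), map_multiset_prod (Ideal.Quotient.mkₐ K I),
      Multiset.map_map, Multiset.map_map]
    simp only [Function.comp_def, MvPolynomial.aeval_X]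
    rw [hmon, hψ, hG]
    rfl
  have := LinearMap.congr_fun key p
  simp only [LinearMap.comp_apply, AlgHom.toLinearMap_apply, hp, map_zero] at this
  exact Ideal.Quotient.eq_zero_iff_mem.1 this.symm

/-- Theorem 6.8 (generation): let `I_i` be the principal `L_{E_i}`-Borel ideal generated
by `M_i`, where `E_i` is the set of essential variables of `I_i` and every variable
dividing `M_i` lies in `E_i`, and suppose the ordering `I_1,…,I_r` is `𝖫`-free.  Then
the kernel of the presentation `φ` of the multi-Rees algebra (`φ(x_j) = x_j`,
`φ(T_{g,i}) = g·t_i`) is generated by the quadrics of symmetric and fiber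
(principal and bi-principal) type. -/
theorem multiRees_kernel_generated_by_quadrics
    (K : Type*) [Field K] {n r : ℕ}
    (E : Fin r → Set (Fin n)) (M : Fin r → (Fin n →₀ ℕ))
    (hEss : ∀ i : Fin r, E i = {j : Fin n |
      (∃ g ∈ LBorelSet n (E i) (M i), 0 < g j) ∧
      ∃ g ∈ LBorelSet n (E i) (M i), ∃ g' ∈ LBorelSet n (E i) (M i), g j ≠ g' j})
    (hsupp : ∀ (i : Fin r) (j : Fin n), 0 < M i j → j ∈ E i)
    (hLfree : ∀ (h j : Fin n) (u v : Fin r), h < j → u < v →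
      h ∈ E u → j ∈ E u → j ∈ E v → h ∈ E v)
    (φ : MvPolynomial (Fin n ⊕ TVar n r E M) K →ₐ[K] MvPolynomial (Fin n ⊕ Fin r) K)
    (hφ : φ = MvPolynomial.aeval (Sum.elim
      (fun j : Fin n => MvPolynomial.X (Sum.inl j))
      (fun v : TVar n r E M => MvPolynomial.monomial
        (Finsupp.mapDomain Sum.inl v.2.1 + Finsupp.single (Sum.inr v.1) 1) (1 : K)))) :
    Ideal.span (symQuadrics K n r E M ∪ prinQuadrics K n r E M ∪ biQuadrics K n r E M) =
      RingHom.ker φ := by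
  have hφ' : φ = MvPolynomial.aeval (fun v => MvPolynomial.monomial (vwt v) (1 : K)) := by
    rw [hφ]
    congr 1
    funext v
    rcases v with j | v
    · rfl
    · rfl
  have hquad : ∀ a b c d : Fin n ⊕ TVar n r E M, vwt a + vwt b = vwt c + vwt d →
      φ (MvPolynomial.X a * MvPolynomial.X b - MvPolynomial.X c * MvPolynomial.X d) = 0 := by
    intro a b c d h
    rw [hφ']
    simp only [map_sub, map_mul, MvPolynomial.aeval_X, MvPolynomial.monomial_mul, h, sub_self]
  apply le_antisymm
  · rw [Ideal.span_le]
    rintro b ((⟨i, g, g', s, u, -, -, -, -, he, rfl⟩ |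
      ⟨i, g, h, g', h', s, u, -, -, -, -, -, he, he', rfl⟩) |
      ⟨i, j, -, g, g', h, h', s, u, -, -, -, -, -, -, -, he, he', rfl⟩)
    · apply hquad
      have := congrArg (Finsupp.mapDomain (Sum.inl : Fin n → Fin n ⊕ Fin r)) he
      simp only [Finsupp.mapDomain_add, Finsupp.mapDomain_single] at this
      simp only [vwt_x, vwt_T]
      rw [← add_assoc, ← add_assoc, add_comm (Finsupp.single _ _), ← this,
        add_comm (Finsupp.mapDomain _ _)]
    · apply hquad
      have hs : g.1 + h.1 = g'.1 + h'.1 := by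
        ext x
        have h1 := DFunLike.congr_fun he x
        have h2 := DFunLike.congr_fun he' x
        simp only [Finsupp.add_apply] at h1 h2 ⊢
        omega
      have := congrArg (Finsupp.mapDomain (Sum.inl : Fin n → Fin n ⊕ Fin r)) hs
      simp only [Finsupp.mapDomain_add] at this
      simp only [vwt_x, vwt_T]
      rw [add_add_add_comm, this, add_add_add_comm]
    · apply hquad
      have hs : g.1 + h.1 = g'.1 + h'.1 := by
        ext x
        have h1 := DFunLike.congr_fun he x
        have h2 := DFunLike.congr_fun he' x
        simp only [Finsupp.add_apply] at h1 h2 ⊢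
        omega
      have := congrArg (Finsupp.mapDomain (Sum.inl : Fin n → Fin n ⊕ Fin r)) hs
      simp only [Finsupp.mapDomain_add] at this
      simp only [vwt_x, vwt_T]
      rw [add_add_add_comm, this, add_add_add_comm]
  · intro p hp
    have hp0 : φ p = 0 := hp
    rw [hφ'] at hp0
    refine ker_le_of_fibers vwt _ ?_ p hp0
    intro S S' hS
    obtain ⟨h1, h2⟩ := vwt_sum hsupp S S' hS
    refine connect_multiset vmon vlab _ vlab_vmon_inj ?_ S S' h1 h2
    intro p p0 q q0 k hp _ hpq hab hk hqk
    refine quadric_exchange hsupp hLfree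
      (fun v => Ideal.Quotient.mk (Ideal.span (symQuadrics K n r E M ∪ prinQuadrics K n r E M ∪
        biQuadrics K n r E M)) (MvPolynomial.X v)) ?_ ?_ ?_ p p0 q q0 k hp hpq hab hk hqk
    · intro i g g' s u a1 a2 a3 a4 a5
      rw [← map_mul, ← map_mul]
      exact Ideal.Quotient.eq.2 (Ideal.subset_span
        (Or.inl (Or.inl ⟨i, g, g', s, u, a1, a2, a3, a4, a5, rfl⟩)))
    · intro i g h g' h' s u a1 a2 a3 a4 a5 a6 a7
      rw [← map_mul, ← map_mul]
      exact Ideal.Quotient.eq.2 (Ideal.subset_span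
        (Or.inl (Or.inr ⟨i, g, h, g', h', s, u, a1, a2, a3, a4, a5, a6, a7, rfl⟩)))
    · intro i j hij g g' h h' s u a1 a2 a3 a4 a5 a6 a7 a8 a9
      rw [← map_mul, ← map_mul]
      exact Ideal.Quotient.eq.2 (Ideal.subset_span
        (Or.inr ⟨i, j, hij, g, g', h, h', s, u, a1, a2, a3, a4, a5, a6, a7, a8, a9, rfl⟩))
end

section
/- Let M_1,…,M_r be monomials in K[x_1,…,x_n] and I_i the principal L_{E_i}-Borel ideal generated by M_i, where E_i is the set of essential variables of I_i and every variable dividing M_i lies in E_i. Assume the ordering I_1,…,I_r is L-free. Let φ : K[x_1,…,x_n, T_{m,i} : m ∈ G_i, 1 ≤ i ≤ r] → K[x_1,…,x_n,t_1,…,t_r] be the presentation of the multi-Rees algebra (φ(x_j) = x_j, φ(T_{m,i}) = m·t_i, G_i = L_{E_i}-Borel(M_i)), and order K[x,T] by the lexicographic monomial order in which T_{m,i} ≻ T_{n,j} iff i < j, or i = j and m ≻ n in graded reverse lexicographic order on K[x] (with x_1 ≻ ⋯ ≻ x_n), every T-variable exceeds every x-variable, and x_1 ≻ ⋯ ≻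 x_n. Then the quadrics of symmetric and fiber type form a Gröbner basis of ker(φ) with respect to this order: for every nonzero f ∈ ker(φ), the leading monomial of f is divisible by the leading monomial of one of these quadrics. -/
/-- Graded reverse lexicographic order (`a ≺ b`) on monomials of `K[x_1,…,x_n]` with
`x_1 ≻ ⋯ ≻ x_n`. -/
def grevlexLT (n : ℕ) (a b : Fin n →₀ ℕ) : Prop :=
  (∑ k, a k) < (∑ k, b k) ∨
    ((∑ k, a k) = (∑ k, b k) ∧ ∃ j : Fin n, b j < a j ∧ ∀ i : Fin n, j < i → a i = b i)

/-- The ordering of the variables of `K[x,T]` (here `a < b` means "`a` is a smaller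
variable than `b`"): every `T`-variable exceeds every `x`-variable,
`T_{g,i} ≻ T_{h,j}` iff `i < j`, or `i = j` and `g ≻ h` in graded reverse
lexicographic order, and `x_1 ≻ ⋯ ≻ x_n`. -/
def mrVarLT (n r : ℕ) (E : Fin r → Set (Fin n)) (M : Fin r → (Fin n →₀ ℕ)) :
    (Fin n ⊕ TVar n r E M) → (Fin n ⊕ TVar n r E M) → Prop
  | Sum.inl s, Sum.inl u => u < s
  | Sum.inl _, Sum.inr _ => True
  | Sum.inr _, Sum.inl _ => False
  | Sum.inr a, Sum.inr b => b.1 < a.1 ∨ (a.1 = b.1 ∧ grevlexLT n a.2.1 b.2.1)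

/-- The induced lexicographic order (`γ ≺ γ'`) on the monomials of `K[x,T]`: at the
greatest variable where `γ` and `γ'` differ, `γ` has the smaller exponent. -/
def mrLexLT (n r : ℕ) (E : Fin r → Set (Fin n)) (M : Fin r → (Fin n →₀ ℕ))
    (γ γ' : (Fin n ⊕ TVar n r E M) →₀ ℕ) : Prop :=
  ∃ v, γ v < γ' v ∧ ∀ w, mrVarLT n r E M v w → γ w = γ' w

namespace MRQ

open Finset

/-- Tail sums. -/
def tl {n : ℕ} (u : Fin n) (g : Fin n →₀ ℕ) : ℕ := ∑ k ∈ Finset.Ici u, g k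

lemma tl_add {n : ℕ} (u : Fin n) (g h : Fin n →₀ ℕ) : tl u (g + h) = tl u g + tl u h := by
  simp [tl, Finset.sum_add_distrib]

lemma tl_single {n : ℕ} (u j : Fin n) : tl u (Finsupp.single j 1) = if u ≤ j then 1 else 0 := by
  simp [tl, Finsupp.single_apply]

lemma tl_eq {n : ℕ} (u : Fin n) (g : Fin n →₀ ℕ) :
    tl u g = g u + ∑ k ∈ Finset.Ioi u, g k := by
  rw [tl, ← Finset.Ioi_insert, Finset.sum_insert (by simp)]

lemma deg_add_single {n : ℕ} {g g' : Fin n →₀ ℕ} {s u : Fin n}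
    (h : g' + Finsupp.single u 1 = g + Finsupp.single s 1) : ∑ k, g' k = ∑ k, g k := by
  have := congrArg (fun f : Fin n →₀ ℕ => ∑ k, f k) h
  simpa [Finset.sum_add_distrib, Finsupp.single_apply] using this

/-- Characterisation of the Borel set. -/
structure Adm {n : ℕ} (U : Set (Fin n)) (M g : Fin n →₀ ℕ) : Prop where
  supp : ∀ j, 0 < g j → j ∈ U
  deg : ∑ k, g k = ∑ k, M k
  tail : ∀ u, tl u g ≤ tl u M

lemma adm_step {n : ℕ} {U : Set (Fin n)} {M g g' : Fin n →₀ ℕ} (h : Adm U M g)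
    (hs : LBorelStep n U g g') : Adm U M g' := by
  obtain ⟨i, j, hi, hj, hij, hgj, e⟩ := hs
  refine ⟨?_, (deg_add_single e).trans h.deg, ?_⟩
  · intro k hk
    by_cases hki : k = i
    · exact hki ▸ hi
    · apply h.supp
      have := DFunLike.congr_fun e k
      simp [Finsupp.single_apply, Ne.symm hki] at this
      omega
  · intro u
    have := congrArg (tl u) e
    rw [tl_add, tl_add, tl_single, tl_single] at this
    have h3 := h.tail u
    split_ifs at this with h1 h2 h2 <;> omega

lemma adm_of_mem {n : ℕ} {U : Set (Fin n)} {M g : Fin n →₀ ℕ} (hM : ∀ j, 0 < M j → j ∈ U)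
    (h : g ∈ LBorelSet n U M) : Adm U M g := by
  induction h with
  | refl => exact ⟨hM, rfl, fun _ => le_rfl⟩
  | tail _ hs ih => exact adm_step ih hs

lemma exists_move {n : ℕ} (g : Fin n →₀ ℕ) {i j : Fin n} (hij : i ≠ j) (hj : 0 < g j) :
    ∃ g' : Fin n →₀ ℕ, g' + Finsupp.single j 1 = g + Finsupp.single i 1 := by
  refine ⟨g - Finsupp.single j 1 + Finsupp.single i 1, ?_⟩
  ext k
  simp only [Finsupp.add_apply, Finsupp.tsub_apply, Finsupp.single_apply]
  split_ifs with h1 h2 h2 <;> subst_vars <;> omega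

lemma mem_of_adm {n : ℕ} {U : Set (Fin n)} : ∀ (N : ℕ) (M g : Fin n →₀ ℕ),
    (∀ j, 0 < M j → j ∈ U) → Adm U M g → ∑ k, (M k - g k) = N → g ∈ LBorelSet n U M := by
  intro N
  induction N using Nat.strong_induction_on with
  | _ N ih =>
  intro M g hM h hN
  by_cases hgM : g = M
  · subst hgM; exact Relation.ReflTransGen.refl
  have hne : (univ.filter (fun k => g k ≠ M k)).Nonempty := by
    by_contra hc
    rw [Finset.not_nonempty_iff_eq_empty, Finset.filter_eq_empty_iff] at hc
    exact hgM (Finsupp.ext fun k => by simpa using hc (mem_univ k))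
  obtain ⟨j, hj, hjmax⟩ := Finset.exists_max_image _ id hne
  simp only [mem_filter, mem_univ, true_and, id] at hj hjmax
  have habove : ∀ k, j < k → g k = M k := by
    intro k hk; by_contra hc; exact absurd (hjmax k hc) (not_le.2 hk)
  have hsum : ∑ k ∈ Finset.Ioi j, g k = ∑ k ∈ Finset.Ioi j, M k :=
    Finset.sum_congr rfl fun k hk => habove k (by simpa using hk)
  have hlt : g j < M j := by
    have := h.tail j
    rw [tl_eq, tl_eq, hsum] at this
    omega
  -- s
  have hne2 : (univ.filter (fun k => M k < g k)).Nonempty := by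
    by_contra hc
    rw [Finset.not_nonempty_iff_eq_empty, Finset.filter_eq_empty_iff] at hc
    have : ∑ k, g k < ∑ k, M k :=
      Finset.sum_lt_sum (fun k _ => not_lt.1 (hc (mem_univ k))) ⟨j, mem_univ _, hlt⟩
    exact absurd h.deg this.ne
  obtain ⟨s, hs, hsmax⟩ := Finset.exists_max_image _ id hne2
  simp only [mem_filter, mem_univ, true_and, id] at hs hsmax
  have hsj : s < j := by
    rcases lt_trichotomy s j with h1 | h1 | h1
    · exact h1
    · subst h1; omega
    · have := habove s h1; omega
  have hsU : s ∈ U := h.supp s (by omega)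
  have hjU : j ∈ U := hM j (by omega)
  obtain ⟨M', hM'⟩ := exists_move M hsj.ne (j := j) (by omega)
  have hstep : LBorelStep n U M M' := ⟨s, j, hsU, hjU, hsj, by omega, hM'⟩
  have hval : ∀ k, M' k + (if j = k then 1 else 0) = M k + (if s = k then 1 else 0) := by
    intro k
    have := DFunLike.congr_fun hM' k
    simpa [Finsupp.single_apply] using this
  have hAdmM' := adm_step (M := M) ⟨hM, rfl, fun _ => le_rfl⟩ hstep
  refine Relation.ReflTransGen.head hstep (ih (∑ k, (M' k - g k)) ?_ M' g hAdmM'.supp ?_ rfl)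
  · rw [← hN]
    apply Finset.sum_lt_sum
    · intro k _
      have := hval k
      by_cases hk : s = k
      · subst hk; simp [hsj.ne'] at this; omega
      · simp [hk] at this; split_ifs at this <;> omega
    · refine ⟨j, mem_univ _, ?_⟩
      have := hval j
      simp [hsj.ne] at this
      omega
  · refine ⟨h.supp, h.deg.trans (deg_add_single hM').symm, ?_⟩
    intro u
    have e := congrArg (tl u) hM'
    rw [tl_add, tl_add, tl_single, tl_single] at e
    have h3 := h.tail u
    split_ifs at e with h1 h2 h2
    · omega
    · -- s < u ≤ j
      have : tl u g < tl u M := by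
        apply Finset.sum_lt_sum
        · intro k hk
          by_contra hc
          have := hsmax k (not_le.1 hc)
          simp at hk
          exact h2 (hk.trans this)
        · exact ⟨j, by simpa using h1, hlt⟩
      omega
    · omega
    · omega

lemma mem_iff {n : ℕ} {U : Set (Fin n)} {M g : Fin n →₀ ℕ} (hM : ∀ j, 0 < M j → j ∈ U) :
    g ∈ LBorelSet n U M ↔ Adm U M g :=
  ⟨adm_of_mem hM, fun h => mem_of_adm _ M g hM h rfl⟩

lemma mem_move {n : ℕ} {U : Set (Fin n)} {M g g' : Fin n →₀ ℕ} 
    (h : g ∈ LBorelSet n U M) {s u : Fin n} (hsu : s < u) (hs : s ∈ U) (hu : u ∈ U)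
    (hg : 0 < g u) (e : g' + Finsupp.single u 1 = g + Finsupp.single s 1) :
    g' ∈ LBorelSet n U M :=
  Relation.ReflTransGen.tail h ⟨s, u, hs, hu, hsu, hg, e⟩

/-- Non-tight tail: a reverse move exists. -/
lemma exists_reverse {n : ℕ} {U : Set (Fin n)} {M g : Fin n →₀ ℕ} (hM : ∀ j, 0 < M j → j ∈ U)
    (h : g ∈ LBorelSet n U M) {j : Fin n} (hj : j ∈ U) (hlt : tl j g < tl j M) :
    ∃ s, s < j ∧ 0 < g s ∧ ∃ g' ∈ LBorelSet n U M,
      g' + Finsupp.single s 1 = g + Finsupp.single j 1 := by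
  have hA := adm_of_mem hM h
  have hne : (univ.filter (fun k => k < j ∧ 0 < g k)).Nonempty := by
    by_contra hc
    rw [Finset.not_nonempty_iff_eq_empty, Finset.filter_eq_empty_iff] at hc
    have h1 : tl j g = ∑ k, g k := by
      apply Finset.sum_subset (subset_univ _)
      intro k _ hk
      by_contra h0
      exact hc (mem_univ k) ⟨by simpa using hk, by omega⟩
    have h2 : tl j M ≤ ∑ k, M k := Finset.sum_le_sum_of_subset (subset_univ _)
    have := hA.deg
    omega
  obtain ⟨s, hs, hsmax⟩ := Finset.exists_max_image _ id hne
  simp only [mem_filter, mem_univ, true_and, id] at hs hsmax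
  obtain ⟨g', hg'⟩ := exists_move g hs.1.ne' (j := s) hs.2
  refine ⟨s, hs.1, hs.2, g', ?_, hg'⟩
  rw [mem_iff hM]
  refine ⟨?_, (deg_add_single hg').trans hA.deg, ?_⟩
  · intro k hk
    by_cases hkj : k = j
    · exact hkj ▸ hj
    · apply hA.supp
      have := DFunLike.congr_fun hg' k
      simp [Finsupp.single_apply, Ne.symm hkj] at this
      omega
  · intro u
    have e := congrArg (tl u) hg'
    rw [tl_add, tl_add, tl_single, tl_single] at e
    have h3 := hA.tail u
    split_ifs at e with h1 h2 h2
    · omega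
    · omega
    · -- s < u ≤ j
      have h4 : tl u g = tl j g := by
        symm
        apply Finset.sum_subset (fun k hk => by simp at hk ⊢; exact h2.trans hk)
        intro k hk hkj
        simp at hk hkj
        by_contra h0
        exact h1 (hk.trans (hsmax k ⟨hkj, by omega⟩))
      have h5 : tl j M ≤ tl u M :=
        Finset.sum_le_sum_of_subset (fun k hk => by simp at hk ⊢; exact h2.trans hk)
      omega
    · omega

/-- Sequence version of the uniqueness lemma: one-sided core. -/
lemma seq_core {n d : ℕ} (c : Fin n → ℕ) (f f' : Fin d → (Fin n →₀ ℕ))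
    (hs : ∀ p q, p < q → toColex (⇑(f p)) ≤ toColex (⇑(f q)))
    (hs' : ∀ p q, p < q → toColex (⇑(f' p)) ≤ toColex (⇑(f' q)))
    (hc' : ∀ p u, tl u (f' p) ≤ c u)
    (ha : ∀ p q j, f p j < f q j → (∀ k, j < k → f p k = f q k) → f q j ≤ f p j + 1)
    (hb : ∀ p q j, f p j < f q j → (∀ k, j < k → f p k = f q k) →
      ∀ u, u < j → 0 < f q u → c u ≤ tl u (f p))
    (k : Fin n) (hsum : ∑ p, f p k = ∑ p, f' p k)
    (hab : ∀ k', k < k' → ∀ p, f p k' = f' p k')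
    (p : Fin d) (hp : ∀ q, q < p → f q k = f' q k) (hlt : f p k < f' p k) : False := by
  refine absurd hsum (Finset.sum_lt_sum (fun q _ => ?_) ⟨p, mem_univ _, hlt⟩).ne
  rcases lt_trichotomy q p with h | h | h
  · exact (hp q h).le
  · exact h ▸ hlt.le
  · by_cases hag : ∀ k', k < k' → f p k' = f q k'
    · have h1 : f q k ≤ f p k + 1 := by
        by_cases h2 : f p k < f q k
        · exact ha p q k h2 hag
        · omega
      have h2 : f' p k ≤ f' q k :=
        Pi.apply_le_of_toColex (hs' p q h) (fun k' hk' => by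
          rw [← hab k' hk', ← hab k' hk']; exact hag k' hk')
      omega
    · have hne : (univ.filter (fun k' => k < k' ∧ f p k' ≠ f q k')).Nonempty := by
        push Not at hag
        obtain ⟨k', h1, h2⟩ := hag
        exact ⟨k', by simp [h1, h2]⟩
      obtain ⟨j, hj, hjmax⟩ := Finset.exists_max_image _ id hne
      simp only [mem_filter, mem_univ, true_and, id] at hj hjmax
      have hagj : ∀ k', j < k' → f p k' = f q k' := by
        intro k' hk'
        by_contra hc
        exact absurd (hjmax k' ⟨hj.1.trans hk', hc⟩) (not_le.2 hk')
      have hjle : f p j ≤ f q j := Pi.apply_le_of_toColex (hs p q h) hagj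
      have := hb p q j (lt_of_le_of_ne hjle hj.2) hagj k hj.1
      have h1 := hc' p k
      have h2 : tl k (f p) < tl k (f' p) := by
        have e : ∑ k' ∈ Finset.Ioi k, f p k' = ∑ k' ∈ Finset.Ioi k, f' p k' :=
          Finset.sum_congr rfl (fun k' hk' => hab k' (by simpa using hk') p)
        rw [tl_eq, tl_eq, e]
        omega
      by_contra h3
      have := this (by omega)
      omega

lemma seq_unique {n d : ℕ} (c : Fin n → ℕ) (f f' : Fin d → (Fin n →₀ ℕ))
    (hs : ∀ p q, p < q → toColex (⇑(f p)) ≤ toColex (⇑(f q)))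
    (hs' : ∀ p q, p < q → toColex (⇑(f' p)) ≤ toColex (⇑(f' q)))
    (hc : ∀ p u, tl u (f p) ≤ c u)
    (hc' : ∀ p u, tl u (f' p) ≤ c u)
    (ha : ∀ p q j, f p j < f q j → (∀ k, j < k → f p k = f q k) → f q j ≤ f p j + 1)
    (hb : ∀ p q j, f p j < f q j → (∀ k, j < k → f p k = f q k) →
      ∀ u, u < j → 0 < f q u → c u ≤ tl u (f p))
    (ha' : ∀ p q j, f' p j < f' q j → (∀ k, j < k → f' p k = f' q k) → f' q j ≤ f' p j + 1)
    (hb' : ∀ p q j, f' p j < f' q j → (∀ k, j < k → f' p k = f' q k) →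
      ∀ u, u < j → 0 < f' q u → c u ≤ tl u (f' p))
    (hsum : ∀ k, ∑ p, f p k = ∑ p, f' p k) : f = f' := by
  by_contra hne
  have hne1 : (univ.filter (fun k => ∃ p, f p k ≠ f' p k)).Nonempty := by
    by_contra hc
    rw [Finset.not_nonempty_iff_eq_empty, Finset.filter_eq_empty_iff] at hc
    exact hne (funext fun p => Finsupp.ext fun k => by
      by_contra h; exact hc (mem_univ k) ⟨p, h⟩)
  obtain ⟨k, hk, hkmax⟩ := Finset.exists_max_image _ id hne1
  simp only [mem_filter, mem_univ, true_and, id] at hk hkmax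
  have hab : ∀ k', k < k' → ∀ p, f p k' = f' p k' := by
    intro k' hk' p
    by_contra h
    exact absurd (hkmax k' ⟨p, h⟩) (not_le.2 hk')
  have hne2 : (univ.filter (fun p => f p k ≠ f' p k)).Nonempty := by
    obtain ⟨p, hp⟩ := hk
    exact ⟨p, by simp [hp]⟩
  obtain ⟨p, hp, hpmin⟩ := Finset.exists_min_image _ id hne2
  simp only [mem_filter, mem_univ, true_and, id] at hp hpmin
  have hq : ∀ q, q < p → f q k = f' q k := by
    intro q hq
    by_contra h
    exact absurd (hpmin q h) (not_le.2 hq)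
  rcases lt_or_gt_of_ne hp with h | h
  · exact seq_core c f f' hs hs' hc' ha hb k (hsum k) hab p hq h
  · exact seq_core c f' f hs' hs hc ha' hb' k (hsum k).symm
      (fun k' hk' p => (hab k' hk' p).symm) p (fun q hq' => (hq q hq').symm) h

lemma exists_seq {n : ℕ} (s : Multiset (Fin n →₀ ℕ)) {d : ℕ} (hd : s.card = d) :
    ∃ f : Fin d → (Fin n →₀ ℕ), s = Multiset.map f (univ : Finset (Fin d)).val ∧
      ∀ p q, p < q → toColex (⇑(f p)) ≤ toColex (⇑(f q)) := by
  classical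
  subst hd
  let r : (Fin n →₀ ℕ) → (Fin n →₀ ℕ) → Prop := fun a b => toColex (⇑a) ≤ toColex (⇑b)
  have : IsTrans _ r := ⟨fun a b c h1 h2 => le_trans h1 h2⟩
  have : Std.Antisymm r := ⟨fun a b h1 h2 => DFunLike.coe_injective (toColex.injective (le_antisymm h1 h2))⟩
  have : Std.Total r := ⟨fun a b => le_total _ _⟩
  have hlen : (s.sort r).length = s.card := Multiset.length_sort (r := r)
  refine ⟨fun p => (s.sort r)[p.1]'(by rw [hlen]; exact p.2), ?_, ?_⟩
  · conv_lhs => rw [← Multiset.sort_eq (r := r) s]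
    have : (univ : Finset (Fin s.card)).val = ((List.finRange s.card : List _) : Multiset _) := rfl
    rw [this, Multiset.map_coe]
    congr 1
    apply List.ext_getElem
    · simp
    · intro i h1 h2
      simp
  · intro p q hpq
    have := List.pairwise_iff_getElem.1 (Multiset.pairwise_sort (r := r) s) p.1 q.1
      (by rw [hlen]; exact p.2) (by rw [hlen]; exact q.2) hpq
    exact this

/-- Multiset version. -/
lemma multiset_unique {n : ℕ} (c : Fin n → ℕ) (s s' : Multiset (Fin n →₀ ℕ))
    (hc : ∀ g ∈ s, ∀ u, tl u g ≤ c u)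
    (hc' : ∀ g ∈ s', ∀ u, tl u g ≤ c u)
    (ha : ∀ g ∈ s, ∀ h ∈ s, ∀ j, g j < h j → (∀ k, j < k → g k = h k) → h j ≤ g j + 1)
    (hb : ∀ g ∈ s, ∀ h ∈ s, ∀ j, g j < h j → (∀ k, j < k → g k = h k) →
      ∀ u, u < j → 0 < h u → c u ≤ tl u g)
    (ha' : ∀ g ∈ s', ∀ h ∈ s', ∀ j, g j < h j → (∀ k, j < k → g k = h k) → h j ≤ g j + 1)
    (hb' : ∀ g ∈ s', ∀ h ∈ s', ∀ j, g j < h j → (∀ k, j < k → g k = h k) →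
      ∀ u, u < j → 0 < h u → c u ≤ tl u g)
    (hcard : s.card = s'.card) (hsum : s.sum = s'.sum) : s = s' := by
  obtain ⟨f, hf, hfs⟩ := exists_seq s rfl
  obtain ⟨f', hf', hfs'⟩ := exists_seq s' hcard.symm
  have hm : ∀ p, f p ∈ s := by
    intro p; rw [hf]; exact Multiset.mem_map_of_mem f (mem_univ p)
  have hm' : ∀ p, f' p ∈ s' := by
    intro p; rw [hf']; exact Multiset.mem_map_of_mem f' (mem_univ p)
  have hS : ∀ k, ∑ p, f p k = ∑ p, f' p k := by
    intro k
    have h1 : ∑ p, f p = ∑ p, f' p := by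
      have e1 : s.sum = ∑ p, f p := congrArg Multiset.sum hf
      have e2 : s'.sum = ∑ p, f' p := congrArg Multiset.sum hf'
      rw [← e1, ← e2, hsum]
    simpa using DFunLike.congr_fun h1 k
  rw [hf, hf', seq_unique c f f' hfs hfs' (fun p => hc _ (hm p)) (fun p => hc' _ (hm' p))
    (fun p q => ha _ (hm p) _ (hm q)) (fun p q => hb _ (hm p) _ (hm q))
    (fun p q => ha' _ (hm' p) _ (hm' q)) (fun p q => hb' _ (hm' p) _ (hm' q)) hS]

section setup

variable {n r : ℕ} {E : Fin r → Set (Fin n)} {M : Fin r → (Fin n →₀ ℕ)}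

lemma deg_of_mem {U : Set (Fin n)} {N g : Fin n →₀ ℕ} (h : g ∈ LBorelSet n U N) :
    ∑ k, g k = ∑ k, N k := by
  induction h with
  | refl => rfl
  | tail _ hs ih =>
    obtain ⟨i, j, _, _, _, _, e⟩ := hs
    exact (deg_add_single e).trans ih

lemma finite_LBorelSet (U : Set (Fin n)) (N : Fin n →₀ ℕ) : (LBorelSet n U N).Finite := by
  refine (Set.finite_Iic (Finsupp.equivFunOnFinite.symm fun _ : Fin n => ∑ k, N k)).subset ?_
  intro g hg
  rw [Set.mem_Iic]
  intro k
  rw [Finsupp.equivFunOnFinite_symm_apply_apply, ← deg_of_mem hg]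
  exact Finset.single_le_sum (f := fun k => g k) (fun _ _ => Nat.zero_le _) (mem_univ k)

noncomputable instance instFinG (U : Set (Fin n)) (N : Fin n →₀ ℕ) :
    Fintype {g : Fin n →₀ ℕ // g ∈ LBorelSet n U N} :=
  (finite_LBorelSet U N).fintype

noncomputable instance instFinT : Fintype (TVar n r E M) :=
  inferInstanceAs (Fintype (Σ i : Fin r, {g : Fin n →₀ ℕ // g ∈ LBorelSet n (E i) (M i)}))

/-- Key for the variable order (smaller key means greater variable). -/
def key : (Fin n ⊕ TVar n r E M) → Lex ((Lex (Fin r × Colex (Fin n → ℕ))) ⊕ Fin n)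
  | Sum.inl s => toLex (Sum.inr s)
  | Sum.inr T => toLex (Sum.inl (toLex (T.1, toColex (⇑T.2.1))))

lemma key_inj : Function.Injective (key (n := n) (r := r) (E := E) (M := M)) := by
  rintro (s | ⟨i, g⟩) (t | ⟨j, h⟩) e
  · simpa [key] using e
  · simp [key] at e
  · simp [key] at e
  · simp only [key, EmbeddingLike.apply_eq_iff_eq, Sum.inl.injEq, Prod.mk.injEq,
      DFunLike.coe_fn_eq] at e
    obtain ⟨rfl, e⟩ := e
    have : g = h := Subtype.ext e
    rw [this]

lemma grevlex_iff {U : Set (Fin n)} {N a b : Fin n →₀ ℕ} (ha : a ∈ LBorelSet n U N)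
    (hb : b ∈ LBorelSet n U N) : grevlexLT n a b ↔ toColex (⇑b) < toColex (⇑a) := by
  have h : ∑ k, a k = ∑ k, b k := (deg_of_mem ha).trans (deg_of_mem hb).symm
  constructor
  · rintro (h1 | ⟨_, j, h2, h3⟩)
    · omega
    · exact ⟨j, fun k hk => (h3 k hk).symm, h2⟩
  · rintro ⟨j, h3, h2⟩
    exact Or.inr ⟨h, j, h2, fun k hk => (h3 k hk).symm⟩

lemma mrVarLT_iff (v w : Fin n ⊕ TVar n r E M) : mrVarLT n r E M v w ↔ key w < key v := by
  rcases v with s | ⟨i, g⟩ <;> rcases w with t | ⟨j, h⟩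
  · simp [mrVarLT, key, Sum.Lex.inr_lt_inr_iff]
  · simp [mrVarLT, key, Sum.Lex.inl_lt_inr]
  · simp [mrVarLT, key, Sum.Lex.not_inr_lt_inl]
  · simp only [mrVarLT, key, Sum.Lex.inl_lt_inl_iff, Prod.Lex.toLex_lt_toLex]
    refine or_congr Iff.rfl ?_
    constructor
    · rintro ⟨rfl, h2⟩
      exact ⟨rfl, (grevlex_iff g.2 h.2).1 h2⟩
    · rintro ⟨h1, h2⟩
      obtain rfl : j = i := h1
      exact ⟨rfl, (grevlex_iff g.2 h.2).2 h2⟩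

noncomputable def lo : LinearOrder (Fin n ⊕ TVar n r E M) := LinearOrder.lift' key key_inj

lemma lex_iff (γ γ' : (Fin n ⊕ TVar n r E M) →₀ ℕ) :
    mrLexLT n r E M γ γ' ↔
      (letI := lo (n := n) (r := r) (E := E) (M := M); toLex γ < toLex γ') := by
  letI := lo (n := n) (r := r) (E := E) (M := M)
  rw [Finsupp.Lex.lt_iff]
  constructor
  · rintro ⟨v, h1, h2⟩
    exact ⟨v, fun w hw => h2 w ((mrVarLT_iff v w).2 hw), h1⟩
  · rintro ⟨v, h2, h1⟩
    exact ⟨v, h1, fun w hw => h2 w ((mrVarLT_iff v w).1 hw)⟩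

lemma lex_max (S : Finset ((Fin n ⊕ TVar n r E M) →₀ ℕ)) (hS : S.Nonempty) :
    ∃ l ∈ S, ∀ a ∈ S, a ≠ l → mrLexLT n r E M a l := by
  letI := lo (n := n) (r := r) (E := E) (M := M)
  obtain ⟨l, hl, hmax⟩ := Finset.exists_max_image S toLex hS
  refine ⟨l, hl, fun a ha hne => (lex_iff a l).2 (lt_of_le_of_ne (hmax a ha) ?_)⟩
  exact fun h => hne (toLex.injective h)

lemma lex_wf : WellFounded (mrLexLT n r E M) := by
  letI := lo (n := n) (r := r) (E := E) (M := M)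
  have hw : WellFounded ((· < ·) : Lex ((Fin n ⊕ TVar n r E M) →₀ ℕ) → _ → Prop) :=
    (Finsupp.Lex.wellFoundedLT_of_finite).wf
  have := InvImage.wf (fun γ : (Fin n ⊕ TVar n r E M) →₀ ℕ => toLex γ) hw
  exact Subrelation.wf (fun {a b} h => (lex_iff a b).1 h) this

lemma lex_add {a b : (Fin n ⊕ TVar n r E M) →₀ ℕ} (h : mrLexLT n r E M a b)
    (c : (Fin n ⊕ TVar n r E M) →₀ ℕ) : mrLexLT n r E M (c + a) (c + b) := by
  obtain ⟨v, h1, h2⟩ := h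
  refine ⟨v, by simpa using h1, fun w hw => by simpa using h2 w hw⟩

lemma lex_irrefl (a : (Fin n ⊕ TVar n r E M) →₀ ℕ) : ¬ mrLexLT n r E M a a := by
  rintro ⟨v, h1, _⟩
  exact lt_irrefl _ h1

lemma lex_pair {v a b c : Fin n ⊕ TVar n r E M} (hb : key v < key b)
    (hc : key v < key c) (ha : key v < key a) :
    mrLexLT n r E M (Finsupp.single b 1 + Finsupp.single c 1)
      (Finsupp.single v 1 + Finsupp.single a 1) := by
  classical
  have ne : ∀ {x y : Fin n ⊕ TVar n r E M}, key x < key y → ¬ y = x :=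
    fun h e => by subst e; exact lt_irrefl _ h
  refine ⟨v, ?_, ?_⟩
  · simp [Finsupp.single_apply, ne hb, ne hc]
  · intro w hw
    rw [mrVarLT_iff] at hw
    simp [Finsupp.single_apply, ne (hw.trans hb), ne (hw.trans hc), ne (hw.trans ha), ne hw]

lemma key_inr_lt {i j : Fin r} {g : {g : Fin n →₀ ℕ // g ∈ LBorelSet n (E i) (M i)}}
    {h : {g : Fin n →₀ ℕ // g ∈ LBorelSet n (E j) (M j)}}
    (hlt : i < j ∨ i = j ∧ toColex (⇑g.1) < toColex (⇑h.1)) :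
    key (n := n) (r := r) (E := E) (M := M) (Sum.inr ⟨i, g⟩) < key (Sum.inr ⟨j, h⟩) :=
  Sum.Lex.inl_lt_inl_iff.2 (Prod.Lex.toLex_lt_toLex.2 hlt)

lemma key_T_lt {i : Fin r} {g h : {g : Fin n →₀ ℕ // g ∈ LBorelSet n (E i) (M i)}}
    {j : Fin n} (h1 : g.1 j < h.1 j) (h2 : ∀ k, j < k → g.1 k = h.1 k) :
    key (n := n) (r := r) (E := E) (M := M) (Sum.inr ⟨i, g⟩) < key (Sum.inr ⟨i, h⟩) := by
  exact key_inr_lt (Or.inr ⟨rfl, j, h2, h1⟩)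

lemma key_T_lt_idx {i j : Fin r} {g : {g : Fin n →₀ ℕ // g ∈ LBorelSet n (E i) (M i)}}
    {h : {g : Fin n →₀ ℕ // g ∈ LBorelSet n (E j) (M j)}} (hij : i < j) :
    key (n := n) (r := r) (E := E) (M := M) (Sum.inr ⟨i, g⟩) < key (Sum.inr ⟨j, h⟩) := by
  exact key_inr_lt (Or.inl hij)

lemma key_T_lt_x {T : TVar n r E M} {s : Fin n} :
    key (n := n) (r := r) (E := E) (M := M) (Sum.inr T) <
      key (n := n) (r := r) (E := E) (M := M) (Sum.inl s) := by
  simp only [key]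
  exact Sum.Lex.inl_lt_inr _ _

lemma move_vals {g g' : Fin n →₀ ℕ} {s u : Fin n}
    (e : g' + Finsupp.single u 1 = g + Finsupp.single s 1) (k : Fin n) :
    g' k + (if u = k then 1 else 0) = g k + (if s = k then 1 else 0) := by
  have := DFunLike.congr_fun e k
  simpa [Finsupp.single_apply] using this

/-- Weights. -/
noncomputable def wt : (Fin n ⊕ TVar n r E M) → (Fin n ⊕ Fin r →₀ ℕ) :=
  Sum.elim (fun j => Finsupp.single (Sum.inl j) 1)
    (fun v => Finsupp.mapDomain Sum.inl v.2.1 + Finsupp.single (Sum.inr v.1) 1)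

lemma wt_inl (j : Fin n) : wt (n := n) (r := r) (E := E) (M := M) (Sum.inl j) =
    Finsupp.single (Sum.inl j) 1 := rfl

lemma wt_inr (i : Fin r) (g : {g : Fin n →₀ ℕ // g ∈ LBorelSet n (E i) (M i)}) :
    wt (n := n) (r := r) (E := E) (M := M) (Sum.inr ⟨i, g⟩) =
      Finsupp.mapDomain Sum.inl g.1 + Finsupp.single (Sum.inr i) 1 := rfl

noncomputable def W (γ : (Fin n ⊕ TVar n r E M) →₀ ℕ) : Fin n ⊕ Fin r →₀ ℕ :=
  γ.sum fun v k => k • wt v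

lemma W_add (a b : (Fin n ⊕ TVar n r E M) →₀ ℕ) : W (a + b) = W a + W b := by
  classical
  exact Finsupp.sum_add_index' (by simp) (by intros; rw [add_smul])

lemma W_single (p : Fin n ⊕ TVar n r E M) : W (Finsupp.single p 1) = wt p := by
  simp [W]

lemma mapDomain_move {g g' : Fin n →₀ ℕ} {s u : Fin n}
    (e : g' + Finsupp.single u 1 = g + Finsupp.single s 1) :
    (Finsupp.mapDomain Sum.inl g' : Fin n ⊕ Fin r →₀ ℕ) + Finsupp.single (Sum.inl u) 1 =
      Finsupp.mapDomain Sum.inl g + Finsupp.single (Sum.inl s) 1 := by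
  have := congrArg (Finsupp.mapDomain (Sum.inl : Fin n → Fin n ⊕ Fin r)) e
  simpa only [Finsupp.mapDomain_add, Finsupp.mapDomain_single] using this

variable (K : Type*) [Field K]

/-- The set of all quadrics. -/
def Q (E : Fin r → Set (Fin n)) (M : Fin r → (Fin n →₀ ℕ)) :
    Set (MvPolynomial (Fin n ⊕ TVar n r E M) K) :=
  symQuadrics K n r E M ∪ prinQuadrics K n r E M ∪ biQuadrics K n r E M

def Red (γ : (Fin n ⊕ TVar n r E M) →₀ ℕ) : Prop :=
  ∃ b ∈ Q K E M, ∃ lb ∈ b.support, (∀ c ∈ b.support, c ≠ lb → mrLexLT n r E M c lb) ∧ lb ≤ γ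

variable {K}

lemma XX {σ : Type*} (p q : σ) : (MvPolynomial.X p * MvPolynomial.X q : MvPolynomial σ K) =
    MvPolynomial.monomial (Finsupp.single p 1 + Finsupp.single q 1) 1 := by
  rw [MvPolynomial.X, MvPolynomial.X, MvPolynomial.monomial_mul, one_mul]

lemma supp_binom {σ : Type*} {e e' c : σ →₀ ℕ}
    (h : c ∈ (MvPolynomial.monomial e (1 : K) - MvPolynomial.monomial e' 1).support) :
    c = e ∨ c = e' := by
  classical
  by_contra hc
  push Not at hc
  rw [MvPolynomial.mem_support_iff, MvPolynomial.coeff_sub, MvPolynomial.coeff_monomial,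
    MvPolynomial.coeff_monomial, if_neg (Ne.symm hc.1), if_neg (Ne.symm hc.2), sub_zero] at h
  exact h rfl

lemma supp_binom_left {σ : Type*} {e e' : σ →₀ ℕ} (h : e ≠ e') :
    e ∈ (MvPolynomial.monomial e (1 : K) - MvPolynomial.monomial e' 1).support := by
  classical
  rw [MvPolynomial.mem_support_iff, MvPolynomial.coeff_sub, MvPolynomial.coeff_monomial,
    MvPolynomial.coeff_monomial, if_pos rfl, if_neg (Ne.symm h), sub_zero]
  exact one_ne_zero

lemma supp_binom_right {σ : Type*} {e e' : σ →₀ ℕ} (h : e ≠ e') :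
    e' ∈ (MvPolynomial.monomial e (1 : K) - MvPolynomial.monomial e' 1).support := by
  classical
  rw [MvPolynomial.mem_support_iff, MvPolynomial.coeff_sub, MvPolynomial.coeff_monomial,
    MvPolynomial.coeff_monomial, if_neg h, if_pos rfl, zero_sub]
  exact neg_ne_zero.2 one_ne_zero

lemma Q_binom {b : MvPolynomial (Fin n ⊕ TVar n r E M) K} (hb : b ∈ Q K E M) :
    ∃ e e', b = MvPolynomial.monomial e 1 - MvPolynomial.monomial e' 1 ∧ W e = W e' := by
  rcases hb with (hb | hb) | hb
  · obtain ⟨i, g, g', s, u, hsu, hs, hu, hg, e, rfl⟩ := hb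
    refine ⟨_, _, by rw [XX, XX], ?_⟩
    have := mapDomain_move (r := r) e
    simp only [W_add, W_single, wt_inl, wt_inr]
    rw [← add_assoc, ← add_assoc, add_comm (Finsupp.single (Sum.inl s) 1), ← this,
      add_comm (Finsupp.single (Sum.inl u) 1)]
  · obtain ⟨i, g, h, g', h', s, u, hsu, hs, hu, hg, hh, e1, e2, rfl⟩ := hb
    refine ⟨_, _, by rw [XX, XX], ?_⟩
    have t1 := mapDomain_move (r := r) e1
    have t2 := mapDomain_move (r := r) e2
    simp only [W_add, W_single, wt_inr]
    ext k
    have t1 := DFunLike.congr_fun t1 k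
    have t2 := DFunLike.congr_fun t2 k
    simp only [Finsupp.add_apply] at t1 t2 ⊢
    omega
  · obtain ⟨i, j, hij, g, g', h, h', s, u, hsu, _, _, _, _, hg, hh, e1, e2, rfl⟩ := hb
    refine ⟨_, _, by rw [XX, XX], ?_⟩
    have t1 := mapDomain_move (r := r) e1
    have t2 := mapDomain_move (r := r) e2
    simp only [W_add, W_single, wt_inr]
    ext k
    have t1 := DFunLike.congr_fun t1 k
    have t2 := DFunLike.congr_fun t2 k
    simp only [Finsupp.add_apply] at t1 t2 ⊢
    omega

lemma red_elim {γ : (Fin n ⊕ TVar n r E M) →₀ ℕ} (h : Red K γ) :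
    ∃ γ', W γ' = W γ ∧ mrLexLT n r E M γ' γ := by
  obtain ⟨b, hb, lb, hlb, hlead, hle⟩ := h
  obtain ⟨e, e', rfl, hW⟩ := Q_binom hb
  have hne : e ≠ e' := by
    rintro rfl
    simp at hlb
  obtain ⟨δ, rfl⟩ := exists_add_of_le hle
  rcases supp_binom hlb with rfl | rfl
  · exact ⟨δ + e', by rw [W_add, W_add, hW, add_comm],
      by rw [add_comm lb]; exact lex_add (hlead _ (supp_binom_right hne) hne.symm) δ⟩
  · exact ⟨δ + e, by rw [W_add, W_add, hW, add_comm],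
      by rw [add_comm lb]; exact lex_add (hlead _ (supp_binom_left hne) hne) δ⟩

lemma red_intro {γ e e' : (Fin n ⊕ TVar n r E M) →₀ ℕ}
    (hb : (MvPolynomial.monomial e 1 - MvPolynomial.monomial e' 1 :
        MvPolynomial (Fin n ⊕ TVar n r E M) K) ∈ Q K E M ∨
      (MvPolynomial.monomial e' 1 - MvPolynomial.monomial e 1 :
        MvPolynomial (Fin n ⊕ TVar n r E M) K) ∈ Q K E M)
    (hlt : mrLexLT n r E M e' e) (hle : e ≤ γ) : Red K γ := by
  have hne : e ≠ e' := by
    rintro rfl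
    exact lex_irrefl _ hlt
  rcases hb with hb | hb
  · refine ⟨_, hb, e, supp_binom_left hne, fun c hc hce => ?_, hle⟩
    rcases supp_binom hc with rfl | rfl
    · exact absurd rfl hce
    · exact hlt
  · refine ⟨_, hb, e, supp_binom_right hne.symm, fun c hc hce => ?_, hle⟩
    rcases supp_binom hc with rfl | rfl
    · exact hlt
    · exact absurd rfl hce

lemma pair_le {σ : Type*} {γ : σ →₀ ℕ} {v a : σ} (hva : v ≠ a) (hv : 0 < γ v) (ha : 0 < γ a) :
    Finsupp.single v 1 + Finsupp.single a 1 ≤ γ := by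
  classical
  intro k
  simp only [Finsupp.add_apply, Finsupp.single_apply]
  split_ifs with h1 h2 h2
  · exact absurd (h1.trans h2.symm) hva
  · subst h1; omega
  · subst h2; omega
  · omega

/-- Uniform reduction. -/
lemma red_pair {γ : (Fin n ⊕ TVar n r E M) →₀ ℕ} {v a b c : Fin n ⊕ TVar n r E M}
    (hb : (MvPolynomial.X v * MvPolynomial.X a - MvPolynomial.X b * MvPolynomial.X c :
        MvPolynomial (Fin n ⊕ TVar n r E M) K) ∈ Q K E M ∨
      (MvPolynomial.X b * MvPolynomial.X c - MvPolynomial.X v * MvPolynomial.X a :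
        MvPolynomial (Fin n ⊕ TVar n r E M) K) ∈ Q K E M)
    (kb : key v < key b) (kc : key v < key c) (ka : key v < key a)
    (hv : 0 < γ v) (ha : 0 < γ a) : Red K γ := by
  rw [XX, XX] at hb
  exact red_intro hb (lex_pair kb kc ka)
    (pair_le (fun h => by subst h; exact lt_irrefl _ ka) hv ha)

/-- The pair condition for standard monomials. -/
lemma pair_cond (hsupp : ∀ (i : Fin r) (j : Fin n), 0 < M i j → j ∈ E i)
    {γ : (Fin n ⊕ TVar n r E M) →₀ ℕ} (hst : ¬ Red K γ) {i : Fin r}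
    {g h : {g : Fin n →₀ ℕ // g ∈ LBorelSet n (E i) (M i)}}
    (hg : 0 < γ (Sum.inr ⟨i, g⟩)) (hh : 0 < γ (Sum.inr ⟨i, h⟩)) {j : Fin n}
    (hlt : g.1 j < h.1 j) (hab : ∀ k, j < k → g.1 k = h.1 k) {u : Fin n} (huj : u ≤ j)
    (hhu : 0 < h.1 u) (hu : u = j → g.1 j + 1 < h.1 j) : tl u (M i) ≤ tl u g.1 := by
  by_contra hc
  have hM := hsupp i
  have huE : u ∈ E i := (adm_of_mem hM h.2).supp u hhu
  obtain ⟨s, hsu, hgs, g', hg', e1⟩ := exists_reverse hM g.2 huE (not_le.1 hc)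
  have hsE : s ∈ E i := (adm_of_mem hM g.2).supp s hgs
  obtain ⟨h', e2⟩ := exists_move h.1 hsu.ne hhu
  have hh' := mem_move h.2 hsu hsE huE hhu e2
  apply hst
  refine red_pair (v := Sum.inr ⟨i, g⟩) (a := Sum.inr ⟨i, h⟩) (b := Sum.inr ⟨i, ⟨h', hh'⟩⟩)
    (c := Sum.inr ⟨i, ⟨g', hg'⟩⟩) (Or.inl ?_) ?_ ?_ ?_ hg hh
  · refine Or.inl (Or.inr ⟨i, h, g, ⟨h', hh'⟩, ⟨g', hg'⟩, s, u, hsu, hsE, huE, hhu, hgs, e2, e1, ?_⟩)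
    exact congrArg₂ _ (mul_comm _ _) rfl
  · have hv := move_vals e2
    apply key_T_lt (j := j)
    · have := hv j
      have hsj : s ≠ j := (hsu.trans_le huj).ne
      simp only [hsj, if_false] at this
      show g.1 j < h' j
      split_ifs at this with h1
      · have := hu h1; omega
      · omega
    · intro k hk
      have := hv k
      simp [(huj.trans_lt hk).ne, ((hsu.trans_le huj).trans hk).ne] at this
      show g.1 k = h' k
      rw [this, hab k hk]
  · have hv := move_vals e1
    apply key_T_lt (j := u)
    · have := hv u
      simp [hsu.ne] at this
      show g.1 u < g' u
      omega
    · intro k hk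
      have := hv k
      simp [hk.ne, (hsu.trans hk).ne] at this
      exact this.symm
  · exact key_T_lt hlt hab

noncomputable def P (γ : (Fin n ⊕ TVar n r E M) →₀ ℕ) (i : Fin r) (k : Fin n) : ℕ :=
  ∑ g : {g : Fin n →₀ ℕ // g ∈ LBorelSet n (E i) (M i)}, γ (Sum.inr ⟨i, g⟩) * g.1 k

noncomputable def cnt (γ : (Fin n ⊕ TVar n r E M) →₀ ℕ) (i : Fin r) : ℕ :=
  ∑ g : {g : Fin n →₀ ℕ // g ∈ LBorelSet n (E i) (M i)}, γ (Sum.inr ⟨i, g⟩)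

lemma sum_TVar {N : Type*} [AddCommMonoid N] (f : TVar n r E M → N) :
    ∑ T, f T = ∑ i : Fin r, ∑ g : {g : Fin n →₀ ℕ // g ∈ LBorelSet n (E i) (M i)}, f ⟨i, g⟩ :=
  Fintype.sum_sigma (α := fun i : Fin r => {g : Fin n →₀ ℕ // g ∈ LBorelSet n (E i) (M i)}) f

lemma W_eq (γ : (Fin n ⊕ TVar n r E M) →₀ ℕ) : W γ = ∑ v, γ v • wt v :=
  Finsupp.sum_fintype _ _ (by simp)

lemma W_inr (γ : (Fin n ⊕ TVar n r E M) →₀ ℕ) (i : Fin r) : W γ (Sum.inr i) = cnt γ i := by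
  classical
  rw [W_eq, Fintype.sum_sum_type, sum_TVar]
  have h0 : ∀ g : Fin n →₀ ℕ, (Finsupp.mapDomain Sum.inl g : Fin n ⊕ Fin r →₀ ℕ) (Sum.inr i) = 0 :=
    fun g => Finsupp.mapDomain_of_notMem_range _ _ (by simp)
  simp only [wt_inl, wt_inr, Finsupp.add_apply, Finsupp.finsetSum_apply,
    Finsupp.smul_apply, h0, Finsupp.single_apply, cnt]
  rw [Finset.sum_eq_single i]
  · simp
  · intro j _ hj
    simp [hj]
  · simp

lemma W_inl (γ : (Fin n ⊕ TVar n r E M) →₀ ℕ) (k : Fin n) :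
    W γ (Sum.inl k) = γ (Sum.inl k) + ∑ i, P γ i k := by
  classical
  rw [W_eq, Fintype.sum_sum_type, sum_TVar]
  have h0 : ∀ g : Fin n →₀ ℕ, (Finsupp.mapDomain Sum.inl g : Fin n ⊕ Fin r →₀ ℕ) (Sum.inl k) = g k :=
    fun g => Finsupp.mapDomain_apply Sum.inl_injective _ _
  simp [wt_inl, wt_inr, h0, Finsupp.single_apply, P, Finsupp.finsetSum_apply]

lemma tl_P (γ : (Fin n ⊕ TVar n r E M) →₀ ℕ) (i : Fin r) (j : Fin n) :
    ∑ k ∈ Finset.Ici j, P γ i k =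
      ∑ g : {g : Fin n →₀ ℕ // g ∈ LBorelSet n (E i) (M i)}, γ (Sum.inr ⟨i, g⟩) * tl j g.1 := by
  simp only [P]
  rw [Finset.sum_comm]
  simp [tl, Finset.mul_sum]

lemma P_not_lt (hsupp : ∀ (i : Fin r) (j : Fin n), 0 < M i j → j ∈ E i)
    (hLfree : ∀ (h j : Fin n) (u v : Fin r), h < j → u < v →
      h ∈ E u → j ∈ E u → j ∈ E v → h ∈ E v)
    {γ γ' : (Fin n ⊕ TVar n r E M) →₀ ℕ} (hst : ¬ Red K γ) (hW : W γ = W γ')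
    {i : Fin r} {j : Fin n} (hi : ∀ i', i' < i → P γ i' j = P γ' i' j)
    (hj : ∀ k, j < k → P γ i k = P γ' i k) : ¬ P γ i j < P γ' i j := by
  intro hlt
  have hM := hsupp i
  have hcnt : cnt γ i = cnt γ' i := by rw [← W_inr, ← W_inr, hW]
  have hjE : j ∈ E i := by
    by_contra hc
    have : P γ' i j = 0 := by
      apply Finset.sum_eq_zero
      intro g _
      have : g.1 j = 0 := by
        by_contra h0
        exact hc ((adm_of_mem hM g.2).supp j (by omega))
      simp [this]
    omega
  have hrest : 0 < γ (Sum.inl j) ∨ ∃ i', i < i' ∧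
      ∃ h : {g : Fin n →₀ ℕ // g ∈ LBorelSet n (E i') (M i')},
        0 < γ (Sum.inr ⟨i', h⟩) ∧ 0 < h.1 j := by
    by_contra hc
    push Not at hc
    obtain ⟨h1, h2⟩ := hc
    have e := DFunLike.congr_fun hW (Sum.inl j)
    rw [W_inl, W_inl] at e
    have : ∑ i, P γ i j < ∑ i, P γ' i j := by
      refine Finset.sum_lt_sum (fun i' _ => ?_) ⟨i, mem_univ _, hlt⟩
      rcases lt_trichotomy i' i with h | h | h
      · exact (hi i' h).le
      · exact h ▸ hlt.le
      · have : P γ i' j = 0 := by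
          apply Finset.sum_eq_zero
          intro g _
          have := h2 i' h g
          rcases Nat.eq_zero_or_pos (γ (Sum.inr ⟨i', g⟩)) with h0 | h0
          · simp [h0]
          · have := this h0
            simp [Nat.le_zero.1 this]
        omega
    omega
  have htight : ∀ g : {g : Fin n →₀ ℕ // g ∈ LBorelSet n (E i) (M i)},
      0 < γ (Sum.inr ⟨i, g⟩) → tl j (M i) ≤ tl j g.1 := by
    intro g hg
    by_contra hc
    obtain ⟨s, hsj, hgs, g', hg', e1⟩ := exists_reverse hM g.2 hjE (not_le.1 hc)
    have hsE : s ∈ E i := (adm_of_mem hM g.2).supp s hgs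
    have hv := move_vals e1
    have hg'j : g.1 j < g' j := by
      have := hv j
      simp [hsj.ne] at this
      omega
    have kg : key (n := n) (r := r) (E := E) (M := M) (Sum.inr ⟨i, g⟩) <
        key (Sum.inr ⟨i, ⟨g', hg'⟩⟩) := by
      apply key_T_lt (j := j) hg'j
      intro k hk
      have := hv k
      simp [hk.ne, (hsj.trans hk).ne] at this
      exact this.symm
    apply hst
    rcases hrest with hx | ⟨i', hii, h, hγ, hhj⟩
    · refine red_pair (v := Sum.inr ⟨i, g⟩) (a := Sum.inl j) (b := Sum.inr ⟨i, ⟨g', hg'⟩⟩)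
        (c := Sum.inl s) (Or.inr ?_) kg key_T_lt_x key_T_lt_x hg hx
      refine Or.inl (Or.inl ⟨i, ⟨g', hg'⟩, g, s, j, hsj, hsE, hjE, ?_, e1.symm, ?_⟩)
      · show 0 < g' j
        omega
      · exact congrArg₂ _ (mul_comm _ _) (mul_comm _ _)
    · have hM' := hsupp i'
      have hjE' : j ∈ E i' := (adm_of_mem hM' h.2).supp j hhj
      have hsE' : s ∈ E i' := hLfree s j i i' hsj hii hsE hjE hjE'
      obtain ⟨h', e2⟩ := exists_move h.1 hsj.ne hhj
      have hh' := mem_move h.2 hsj hsE' hjE' hhj e2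
      refine red_pair (v := Sum.inr ⟨i, g⟩) (a := Sum.inr ⟨i', h⟩) (b := Sum.inr ⟨i, ⟨g', hg'⟩⟩)
        (c := Sum.inr ⟨i', ⟨h', hh'⟩⟩) (Or.inl ?_) kg (key_T_lt_idx hii) (key_T_lt_idx hii) hg hγ
      exact Or.inr ⟨i, i', hii, g, ⟨g', hg'⟩, h, ⟨h', hh'⟩, s, j, hsj, hsE, hjE, hsE', hjE',
        hgs, hhj, e1, e2, rfl⟩
  have h1 : cnt γ i * tl j (M i) ≤ ∑ k ∈ Finset.Ici j, P γ i k := by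
    rw [tl_P, cnt, Finset.sum_mul]
    apply Finset.sum_le_sum
    intro g _
    rcases Nat.eq_zero_or_pos (γ (Sum.inr ⟨i, g⟩)) with h0 | h0
    · simp [h0]
    · exact Nat.mul_le_mul_left _ (htight g h0)
  have h2 : ∑ k ∈ Finset.Ici j, P γ' i k ≤ cnt γ' i * tl j (M i) := by
    rw [tl_P, cnt, Finset.sum_mul]
    apply Finset.sum_le_sum
    intro g _
    exact Nat.mul_le_mul_left _ ((adm_of_mem hM g.2).tail j)
  have h3 : ∑ k ∈ Finset.Ici j, P γ i k < ∑ k ∈ Finset.Ici j, P γ' i k := by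
    refine Finset.sum_lt_sum (fun k hk => ?_) ⟨j, by simp, hlt⟩
    rcases eq_or_lt_of_le (Finset.mem_Ici.1 hk) with h | h
    · exact h ▸ hlt.le
    · exact (hj k h).le
  rw [hcnt] at h1
  omega

lemma P_eq (hsupp : ∀ (i : Fin r) (j : Fin n), 0 < M i j → j ∈ E i)
    (hLfree : ∀ (h j : Fin n) (u v : Fin r), h < j → u < v →
      h ∈ E u → j ∈ E u → j ∈ E v → h ∈ E v)
    {γ γ' : (Fin n ⊕ TVar n r E M) →₀ ℕ} (hst : ¬ Red K γ) (hst' : ¬ Red K γ') (hW : W γ = W γ')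
    (i : Fin r) : ∀ k, P γ i k = P γ' i k := by
  induction i using WellFoundedLT.induction with
  | _ i ih =>
  intro k
  induction k using WellFoundedGT.induction with
  | _ k ihk =>
  have h1 := P_not_lt hsupp hLfree hst hW (i := i) (j := k) (fun i' hi' => ih i' hi' k) ihk
  have h2 := P_not_lt hsupp hLfree hst' hW.symm (i := i) (j := k)
    (fun i' hi' => (ih i' hi' k).symm) (fun k' hk' => (ihk k' hk').symm)
  omega

/-- The multiset of generators of index `i`. -/
noncomputable def ms (γ : (Fin n ⊕ TVar n r E M) →₀ ℕ) (i : Fin r) : Multiset (Fin n →₀ ℕ) :=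
  ∑ g : {g : Fin n →₀ ℕ // g ∈ LBorelSet n (E i) (M i)}, Multiset.replicate (γ (Sum.inr ⟨i, g⟩)) g.1

lemma mem_ms {γ : (Fin n ⊕ TVar n r E M) →₀ ℕ} {i : Fin r} {g : Fin n →₀ ℕ} (h : g ∈ ms γ i) :
    ∃ hg : g ∈ LBorelSet n (E i) (M i), 0 < γ (Sum.inr ⟨i, ⟨g, hg⟩⟩) := by
  rw [ms, Multiset.mem_sum] at h
  obtain ⟨g', _, hg'⟩ := h
  rw [Multiset.mem_replicate] at hg'
  obtain ⟨h1, rfl⟩ := hg'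
  exact ⟨g'.2, Nat.pos_of_ne_zero h1⟩

lemma count_ms [DecidableEq (Fin n →₀ ℕ)] (γ : (Fin n ⊕ TVar n r E M) →₀ ℕ) (i : Fin r)
    (g : {g : Fin n →₀ ℕ // g ∈ LBorelSet n (E i) (M i)}) :
    (ms γ i).count g.1 = γ (Sum.inr ⟨i, g⟩) := by
  rw [ms, Multiset.count_sum', Finset.sum_eq_single g]
  · simp
  · intro g' _ hne
    rw [Multiset.count_replicate, if_neg]
    exact fun h => hne (Subtype.ext h)
  · simp

lemma card_ms (γ : (Fin n ⊕ TVar n r E M) →₀ ℕ) (i : Fin r) : (ms γ i).card = cnt γ i := by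
  simp [ms, cnt]

lemma sum_ms (γ : (Fin n ⊕ TVar n r E M) →₀ ℕ) (i : Fin r) (k : Fin n) :
    (ms γ i).sum k = P γ i k := by
  have : (ms γ i).sum = ∑ g : {g : Fin n →₀ ℕ // g ∈ LBorelSet n (E i) (M i)},
      γ (Sum.inr ⟨i, g⟩) • g.1 := by
    rw [ms, Multiset.sum_sum]
    simp
  rw [this]
  simp [P, Finsupp.finsetSum_apply]

lemma std_unique (hsupp : ∀ (i : Fin r) (j : Fin n), 0 < M i j → j ∈ E i)
    (hLfree : ∀ (h j : Fin n) (u v : Fin r), h < j → u < v →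
      h ∈ E u → j ∈ E u → j ∈ E v → h ∈ E v)
    {γ γ' : (Fin n ⊕ TVar n r E M) →₀ ℕ} (hst : ¬ Red K γ) (hst' : ¬ Red K γ')
    (hW : W γ = W γ') : γ = γ' := by
  classical
  have hP := P_eq hsupp hLfree hst hst' hW
  have tlt : ∀ {g h : Fin n →₀ ℕ} {j : Fin n}, g j < h j → (∀ k, j < k → g k = h k) →
      tl j g < tl j h := by
    intro g h j h1 h2
    have e : ∑ k ∈ Finset.Ioi j, g k = ∑ k ∈ Finset.Ioi j, h k :=
      Finset.sum_congr rfl (fun k hk => h2 k (by simpa using hk))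
    rw [tl_eq, tl_eq, e]
    omega
  have hA : ∀ (i : Fin r) {δ : (Fin n ⊕ TVar n r E M) →₀ ℕ}, ¬ Red K δ →
      ∀ g ∈ ms δ i, ∀ h ∈ ms δ i, ∀ j, g j < h j → (∀ k, j < k → g k = h k) → h j ≤ g j + 1 := by
    intro i δ hδ g hg h hh j h1 h2
    by_contra hc
    obtain ⟨hg, hg0⟩ := mem_ms hg
    obtain ⟨hh, hh0⟩ := mem_ms hh
    have t1 := pair_cond hsupp hδ hg0 hh0 h1 h2 le_rfl (by show 0 < h j; omega)
      (fun _ => not_le.1 hc)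
    have t2 := (adm_of_mem (hsupp i) hh).tail j
    have t3 := tlt h1 h2
    exact absurd (t3.trans_le (t2.trans t1)) (lt_irrefl _)
  have hB : ∀ (i : Fin r) {δ : (Fin n ⊕ TVar n r E M) →₀ ℕ}, ¬ Red K δ →
      ∀ g ∈ ms δ i, ∀ h ∈ ms δ i, ∀ j, g j < h j → (∀ k, j < k → g k = h k) →
      ∀ u, u < j → 0 < h u → tl u (M i) ≤ tl u g := by
    intro i δ hδ g hg h hh j h1 h2 u hu hhu
    obtain ⟨hg, hg0⟩ := mem_ms hg
    obtain ⟨hh, hh0⟩ := mem_ms hh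
    exact pair_cond hsupp hδ hg0 hh0 h1 h2 hu.le hhu (fun e => absurd e hu.ne)
  have hC : ∀ (i : Fin r) (δ : (Fin n ⊕ TVar n r E M) →₀ ℕ), ∀ g ∈ ms δ i, ∀ u,
      tl u g ≤ tl u (M i) := by
    intro i δ g hg u
    exact (adm_of_mem (hsupp i) (mem_ms hg).1).tail u
  have hms : ∀ i, ms γ i = ms γ' i := by
    intro i
    refine multiset_unique (fun u => tl u (M i)) _ _ (hC i γ) (hC i γ') (hA i hst) (hB i hst)
      (hA i hst') (hB i hst') ?_ ?_
    · rw [card_ms, card_ms, ← W_inr, ← W_inr, hW]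
    · ext k
      rw [sum_ms, sum_ms, hP]
  ext v
  rcases v with k | ⟨i, g⟩
  · have e := DFunLike.congr_fun hW (Sum.inl k)
    rw [W_inl, W_inl, Finset.sum_congr rfl (fun i _ => hP i k)] at e
    omega
  · rw [← count_ms, ← count_ms, hms]

lemma exists_std (K : Type*) [Field K] (γ : (Fin n ⊕ TVar n r E M) →₀ ℕ) :
    ∃ m, W m = W γ ∧ ¬ Red K m ∧ ∀ a, W a = W γ → ¬ mrLexLT n r E M a m := by
  obtain ⟨m, hm, hmin⟩ := lex_wf.has_min {a : (Fin n ⊕ TVar n r E M) →₀ ℕ | W a = W γ} ⟨γ, rfl⟩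
  refine ⟨m, hm, fun hr => ?_, hmin⟩
  obtain ⟨a, ha, hlt⟩ := red_elim hr
  exact hmin a (ha.trans hm) hlt

lemma aeval_mono (s : (Fin n ⊕ TVar n r E M) →₀ ℕ) (c : K) :
    MvPolynomial.aeval (Sum.elim
      (fun j : Fin n => MvPolynomial.X (Sum.inl j))
      (fun v : TVar n r E M => MvPolynomial.monomial
        (Finsupp.mapDomain Sum.inl v.2.1 + Finsupp.single (Sum.inr v.1) 1) (1 : K)))
      (MvPolynomial.monomial s c) = (MvPolynomial.monomial (W s) c : MvPolynomial (Fin n ⊕ Fin r) K) := by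
  have h : (Sum.elim
      (fun j : Fin n => MvPolynomial.X (Sum.inl j))
      (fun v : TVar n r E M => MvPolynomial.monomial
        (Finsupp.mapDomain Sum.inl v.2.1 + Finsupp.single (Sum.inr v.1) 1) (1 : K)) :
        _ → MvPolynomial (Fin n ⊕ Fin r) K) = fun v => MvPolynomial.monomial (wt v) 1 := by
    ext1 v
    rcases v with j | v <;> rfl
  rw [h, MvPolynomial.aeval_monomial, W, MvPolynomial.monomial_finsupp_sum_index]
  congr 1
  apply Finsupp.prod_congr
  intro v _
  rw [MvPolynomial.monomial_pow, one_pow]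

lemma exists_other (f : MvPolynomial (Fin n ⊕ TVar n r E M) K)
    (hf : MvPolynomial.aeval (Sum.elim
      (fun j : Fin n => MvPolynomial.X (Sum.inl j))
      (fun v : TVar n r E M => MvPolynomial.monomial
        (Finsupp.mapDomain Sum.inl v.2.1 + Finsupp.single (Sum.inr v.1) 1) (1 : K))) f =
        (0 : MvPolynomial (Fin n ⊕ Fin r) K))
    {l : (Fin n ⊕ TVar n r E M) →₀ ℕ} (hl : l ∈ f.support) :
    ∃ a ∈ f.support, a ≠ l ∧ W a = W l := by
  classical
  by_contra hc
  push Not at hc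
  have h1 := congrArg (MvPolynomial.coeff (W l)) hf
  conv_lhs at h1 => rw [f.as_sum, map_sum]
  simp only [aeval_mono, MvPolynomial.coeff_sum, MvPolynomial.coeff_monomial,
    MvPolynomial.coeff_zero] at h1
  rw [Finset.sum_eq_single l (fun a ha hne => if_neg (hc a ha hne)) (fun h => absurd hl h),
    if_pos rfl] at h1
  exact (MvPolynomial.mem_support_iff.1 hl) h1

end setup

end MRQ

/-- Theorem 6.8 (Gröbner basis): with the hypotheses of the `𝖫`-free setting, the
quadrics of symmetric and fiber type form a Gröbner basis of the defining ideal
`ker φ` of the multi-Rees algebra with respect to the lexicographic order above: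
for every nonzero `f ∈ ker φ` the leading monomial of `f` is divisible by the leading
monomial of one of these quadrics. -/
theorem multiRees_quadrics_groebner
    (K : Type*) [Field K] {n r : ℕ}
    (E : Fin r → Set (Fin n)) (M : Fin r → (Fin n →₀ ℕ))
    (hEss : ∀ i : Fin r, E i = {j : Fin n |
      (∃ g ∈ LBorelSet n (E i) (M i), 0 < g j) ∧
      ∃ g ∈ LBorelSet n (E i) (M i), ∃ g' ∈ LBorelSet n (E i) (M i), g j ≠ g' j})
    (hsupp : ∀ (i : Fin r) (j : Fin n), 0 < M i j → j ∈ E i)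
    (hLfree : ∀ (h j : Fin n) (u v : Fin r), h < j → u < v →
      h ∈ E u → j ∈ E u → j ∈ E v → h ∈ E v)
    (φ : MvPolynomial (Fin n ⊕ TVar n r E M) K →ₐ[K] MvPolynomial (Fin n ⊕ Fin r) K)
    (hφ : φ = MvPolynomial.aeval (Sum.elim
      (fun j : Fin n => MvPolynomial.X (Sum.inl j))
      (fun v : TVar n r E M => MvPolynomial.monomial
        (Finsupp.mapDomain Sum.inl v.2.1 + Finsupp.single (Sum.inr v.1) 1) (1 : K)))) :
    ∀ f : MvPolynomial (Fin n ⊕ TVar n r E M) K, φ f = 0 → f ≠ 0 →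
      ∃ lf ∈ f.support, (∀ a ∈ f.support, a ≠ lf → mrLexLT n r E M a lf) ∧
        ∃ b ∈ symQuadrics K n r E M ∪ prinQuadrics K n r E M ∪ biQuadrics K n r E M,
          ∃ lb ∈ b.support, (∀ c ∈ b.support, c ≠ lb → mrLexLT n r E M c lb) ∧
            lb ≤ lf := by
  intro f hf hf0
  subst hφ
  obtain ⟨lf, hlf, hmax⟩ := MRQ.lex_max (n := n) (r := r) (E := E) (M := M) f.support
    (MvPolynomial.support_nonempty.2 hf0)
  refine ⟨lf, hlf, hmax, ?_⟩
  by_contra hst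
  obtain ⟨a, ha, hne, hWa⟩ := MRQ.exists_other f hf hlf
  obtain ⟨m, hm, hmst, hmin⟩ := MRQ.exists_std K lf
  have : lf = m := MRQ.std_unique (K := K) hsupp hLfree hst hmst hm.symm
  subst this
  exact hmin a hWa (hmax a ha hne)
end

section
/- Let I_1,…,I_r be principal L-Borel ideals in K[x_1,…,x_n] (I_i is the principal L_{U_i}-Borel ideal generated by a monomial M_i for some subset U_i of the variables) and suppose the collection admits an L-free ordering with respect to its essential variable sets. Then the multi-Rees algebra R[I_1t_1,…,I_rt_r] and the multi-fiber ring K[I_1t_1,…,I_rt_r] are normal domains: each is an integral domain that is integrally closed in its field of fractions. -/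
/-- The multi-Rees algebra `R[I_1t_1,…,I_rt_r]` of monomial ideals with minimal
generating sets `G_1,…,G_r`: the `K`-subalgebra of `K[x_1,…,x_n,t_1,…,t_r]` generated
by `x_1,…,x_n` together with all `g·t_i`, `g ∈ G_i`. -/
noncomputable def multiRees (K : Type*) [Field K] (n r : ℕ) (G : Fin r → Set (Fin n →₀ ℕ)) :
    Subalgebra K (MvPolynomial (Fin n ⊕ Fin r) K) :=
  Algebra.adjoin K
    ((Set.range fun i : Fin n => (MvPolynomial.X (Sum.inl i) :
        MvPolynomial (Fin n ⊕ Fin r) K)) ∪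
      {p | ∃ i : Fin r, ∃ g ∈ G i,
        p = MvPolynomial.monomial
          (Finsupp.mapDomain Sum.inl g + Finsupp.single (Sum.inr i) 1) (1 : K)})

/-- The multi-fiber ring `K[I_1t_1,…,I_rt_r]`: the `K`-subalgebra of
`K[x_1,…,x_n,t_1,…,t_r]` generated by all `g·t_i`, `g ∈ G_i`. -/
noncomputable def multiFiber (K : Type*) [Field K] (n r : ℕ) (G : Fin r → Set (Fin n →₀ ℕ)) :
    Subalgebra K (MvPolynomial (Fin n ⊕ Fin r) K) :=
  Algebra.adjoin K
    {p | ∃ i : Fin r, ∃ g ∈ G i,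
      p = MvPolynomial.monomial
        (Finsupp.mapDomain Sum.inl g + Finsupp.single (Sum.inr i) 1) (1 : K)}

open MvPolynomial in
/-- The grading homomorphism `x^w ↦ x^w T^{ℓ w}`. -/
noncomputable def gradHom (K : Type*) [Field K] (σ : Type*) (l : (σ →₀ ℕ) →+ ℤ) :
    MvPolynomial σ K →+* LaurentPolynomial (MvPolynomial σ K) :=
  MvPolynomial.eval₂Hom (LaurentPolynomial.C.comp MvPolynomial.C)
    (fun i => LaurentPolynomial.C (X i) * LaurentPolynomial.T (l (Finsupp.single i 1)))

lemma gradHom_monomial (K : Type*) [Field K] (σ : Type*) (l : (σ →₀ ℕ) →+ ℤ) (w : σ →₀ ℕ) (c : K) :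
    gradHom K σ l (MvPolynomial.monomial w c) =
      LaurentPolynomial.C (MvPolynomial.monomial w c) * LaurentPolynomial.T (l w) := by
  classical
  induction w using Finsupp.induction_linear generalizing c with
  | zero => simp [gradHom]
  | add f g hf hg =>
    have : MvPolynomial.monomial (f + g) c
      = MvPolynomial.monomial f c * MvPolynomial.monomial g (1 : K) := by
      simp [MvPolynomial.monomial_mul]
    rw [this, map_mul, hf, hg, map_add, LaurentPolynomial.T_add, map_mul]
    ring
  | single a b =>
    have h1 : MvPolynomial.monomial (Finsupp.single a b) c
      = MvPolynomial.C c * (MvPolynomial.X a : MvPolynomial σ K) ^ b := by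
      rw [MvPolynomial.C_mul_X_pow_eq_monomial]
    have h2 : l (Finsupp.single a b) = b * l (Finsupp.single a 1) := by
      have : Finsupp.single a b = b • Finsupp.single a 1 := by simp
      rw [this, map_nsmul]; simp
    rw [h1, map_mul, map_pow, h2, ← LaurentPolynomial.T_pow]
    simp [gradHom, mul_pow, mul_assoc]

lemma gradHom_coeff (K : Type*) [Field K] (σ : Type*) (l : (σ →₀ ℕ) →+ ℤ) (f : MvPolynomial σ K)
    (w : σ →₀ ℕ) :
    MvPolynomial.coeff w ((gradHom K σ l f).coeff (l w)) = MvPolynomial.coeff w f := by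
  classical
  induction f using MvPolynomial.induction_on' with
  | monomial u a =>
    rw [gradHom_monomial, ← LaurentPolynomial.single_eq_C_mul_T]
    simp only [AddMonoidAlgebra.coeff_single, Finsupp.single_apply, MvPolynomial.coeff_monomial]
    split_ifs <;> simp_all [MvPolynomial.coeff_monomial]
  | add p q hp hq =>
    rw [map_add, AddMonoidAlgebra.coeff_add, Finsupp.add_apply, MvPolynomial.coeff_add, hp, hq,
      MvPolynomial.coeff_add]

lemma laurent_integral {R : Type*} [CommRing R] [IsDomain R] [IsIntegrallyClosed (Polynomial R)]
    (y : LaurentPolynomial R) (hy : IsIntegral (Polynomial R) y) :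
    y ∈ (Polynomial.toLaurent : Polynomial R →+* LaurentPolynomial R).range := by
  have hle : Submonoid.powers (Polynomial.X : Polynomial R) ≤ nonZeroDivisors (Polynomial R) :=
    powers_le_nonZeroDivisors_of_noZeroDivisors Polynomial.X_ne_zero
  let F := FractionRing (Polynomial R)
  have hu : ∀ y : Submonoid.powers (Polynomial.X : Polynomial R),
      IsUnit (algebraMap (Polynomial R) F y) := fun y =>
    IsLocalization.map_units F (⟨y, hle y.2⟩ : nonZeroDivisors (Polynomial R))
  let g : LaurentPolynomial R →+* F :=
    IsLocalization.lift (M := Submonoid.powers (Polynomial.X : Polynomial R)) hu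
  have hg : ∀ p, g (Polynomial.toLaurent p) = algebraMap (Polynomial R) F p := fun p =>
    IsLocalization.lift_eq hu p
  have hinj : Function.Injective g := by
    refine (IsLocalization.lift_injective_iff hu).2 fun a b => ?_
    rw [LaurentPolynomial.algebraMap_eq_toLaurent, LaurentPolynomial.algebraMap_eq_toLaurent,
      Polynomial.toLaurent_inj, (IsFractionRing.injective (Polynomial R) F).eq_iff]
  have : IsIntegral (Polynomial R) (g y) :=
    hy.map_of_comp_eq (RingHom.id _) g (RingHom.ext fun p => (hg p).symm)
  obtain ⟨p, hp⟩ := IsIntegrallyClosed.algebraMap_eq_of_integral this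
  exact ⟨p, hinj (by rw [hg, hp])⟩

lemma nonneg_of_integral (K : Type*) [Field K] (σ : Type*) [Finite σ] (l : (σ →₀ ℕ) →+ ℤ)
    (W : Set (σ →₀ ℕ)) (hW : ∀ w ∈ W, 0 ≤ l w) (f : MvPolynomial σ K)
    (hf : IsIntegral (Algebra.adjoin K ((fun w => MvPolynomial.monomial w (1 : K)) '' W)) f)
    (w : σ →₀ ℕ) (hw : MvPolynomial.coeff w f ≠ 0) : 0 ≤ l w := by
  set P := Algebra.adjoin K ((fun w => MvPolynomial.monomial w (1 : K)) '' W) with hPdef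
  let tl := (Polynomial.toLaurent :
    Polynomial (MvPolynomial σ K) →+* LaurentPolynomial (MvPolynomial σ K))
  have hmon : ∀ w, 0 ≤ l w → ∀ c : K, gradHom K σ l (MvPolynomial.monomial w c) ∈ tl.range := by
    intro w hw c
    rw [gradHom_monomial]
    refine ⟨Polynomial.C (MvPolynomial.monomial w c) * Polynomial.X ^ (l w).toNat, ?_⟩
    simp only [tl]
    rw [Polynomial.toLaurent_C_mul_X_pow, Int.toNat_of_nonneg hw]
  have hP : ∀ p ∈ P, gradHom K σ l p ∈ tl.range := by
    intro p hp
    induction hp using Algebra.adjoin_induction with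
    | mem x hx => obtain ⟨w, hw, rfl⟩ := hx; exact hmon w (hW w hw) 1
    | algebraMap r =>
      rw [MvPolynomial.algebraMap_eq, MvPolynomial.C_apply]
      exact hmon 0 (by simp) r
    | add x y _ _ hx hy => rw [map_add]; exact add_mem hx hy
    | mul x y _ _ hx hy => rw [map_mul]; exact mul_mem hx hy
  let e := RingEquiv.ofLeftInverse (f := tl) (g := LaurentPolynomial.trunc)
    LaurentPolynomial.leftInverse_trunc_toLaurent
  let ph : P →+* tl.range :=
    ((gradHom K σ l).comp P.val.toRingHom).codRestrict tl.range (fun p => hP p p.2)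
  have hintegral : IsIntegral (Polynomial (MvPolynomial σ K)) (gradHom K σ l f) := by
    refine hf.map_of_comp_eq (e.symm.toRingHom.comp ph) (gradHom K σ l) ?_
    ext1 p
    have h1 : ∀ q : tl.range, tl (e.symm q) = q := by
      intro q
      exact congrArg Subtype.val (e.apply_symm_apply q)
    exact h1 (ph p)
  obtain ⟨q, hq⟩ := laurent_integral _ hintegral
  by_contra hneg
  apply hw
  rw [← gradHom_coeff K σ l f w, ← hq]
  have : (Polynomial.toLaurent q).coeff (l w) = 0 := by
    rw [← Finsupp.notMem_support_iff, LaurentPolynomial.support_coeff_toLaurent]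
    simp only [Finset.mem_map, not_exists, not_and]
    intro a _ ha
    apply hneg
    rw [← ha]
    simp
  rw [this]; simp

lemma normal_of_ineq (K : Type*) [Field K] (σ : Type*) [Finite σ] (L : Set ((σ →₀ ℕ) →+ ℤ))
    (W : Set (σ →₀ ℕ)) (hW : ∀ w ∈ W, ∀ l ∈ L, 0 ≤ l w)
    (hS : ∀ w, (∀ l ∈ L, 0 ≤ l w) → w ∈ AddSubmonoid.closure W) :
    IsIntegrallyClosed (Algebra.adjoin K ((fun w => MvPolynomial.monomial w (1 : K)) '' W)) := by
  set P := Algebra.adjoin K ((fun w => MvPolynomial.monomial w (1 : K)) '' W) with hPdef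
  have hcl : ∀ w ∈ AddSubmonoid.closure W, MvPolynomial.monomial w (1 : K) ∈ P := by
    intro w hw
    induction hw using AddSubmonoid.closure_induction with
    | mem x hx => exact Algebra.subset_adjoin ⟨x, hx, rfl⟩
    | zero => exact one_mem P
    | add x y _ _ hx hy =>
      have := mul_mem hx hy
      simpa [MvPolynomial.monomial_mul] using this
  have : IsIntegrallyClosedIn P (MvPolynomial σ K) := by
    refine isIntegrallyClosedIn_iff.2 ⟨Subtype.val_injective, fun {f} hf => ?_⟩
    suffices hm : f ∈ P from ⟨⟨f, hm⟩, rfl⟩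
    rw [f.as_sum]
    refine sum_mem fun w hw => ?_
    have h1 := hcl w (hS w fun l hl => nonneg_of_integral K σ l W (fun w hw => hW w hw l hl) f hf w
      (MvPolynomial.mem_support_iff.1 hw))
    have h2 := P.smul_mem h1 (MvPolynomial.coeff w f)
    simpa [MvPolynomial.smul_monomial] using h2
  exact IsIntegrallyClosed.of_isIntegrallyClosed_of_isIntegrallyClosedIn P (MvPolynomial σ K)

lemma lborel_add {n : ℕ} {U : Set (Fin n)} {m m' k k' : Fin n →₀ ℕ}
    (h : Relation.ReflTransGen (LBorelStep n U) m m')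
    (h' : Relation.ReflTransGen (LBorelStep n U) k k') :
    Relation.ReflTransGen (LBorelStep n U) (m + k) (m' + k') := by
  have key : ∀ c m m', LBorelStep n U m m' → LBorelStep n U (m + c) (m' + c) := by
    rintro c m m' ⟨i, j, hi, hj, hij, hm, he⟩
    refine ⟨i, j, hi, hj, hij, ?_, ?_⟩
    · simp only [Finsupp.add_apply]; omega
    · rw [add_right_comm, he, add_right_comm]
  refine (h.lift (fun x => x + k) (fun a b hab => key k a b hab)).trans ?_
  refine h'.lift (fun x => m' + x) (fun a b hab => ?_)
  show LBorelStep n U (m' + a) (m' + b)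
  rw [add_comm m' a, add_comm m' b]
  exact key m' a b hab

/-- The variables by which a factor `x_j` may be replaced. -/
def slotSet {n : ℕ} (U : Set (Fin n)) (j : Fin n) : Set (Fin n) :=
  {h | h = j ∨ (h < j ∧ h ∈ U ∧ j ∈ U)}

lemma lborel_sum {n : ℕ} {U : Set (Fin n)} {ι : Type*} (s : Finset ι) (p q : ι → Fin n)
    (h : ∀ x, p x ∈ slotSet U (q x)) :
    Relation.ReflTransGen (LBorelStep n U) (∑ x ∈ s, Finsupp.single (q x) 1)
      (∑ x ∈ s, Finsupp.single (p x) 1) := by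
  classical
  induction s using Finset.induction_on with
  | empty => simpa using Relation.ReflTransGen.refl
  | insert a s ha ih =>
    rw [Finset.sum_insert ha, Finset.sum_insert ha]
    refine lborel_add ?_ ih
    rcases h a with h | ⟨h1, h2, h3⟩
    · rw [h]
    · exact Relation.ReflTransGen.single ⟨p a, q a, h2, h3, h1, by simp, add_comm _ _⟩

lemma sum_single_tokens {n : ℕ} (a : Fin n →₀ ℕ) :
    ∑ t : (Σ h : Fin n, Fin (a h)), Finsupp.single t.1 1 = a := by
  classical
  rw [Fintype.sum_sigma]
  ext x
  simp [Finsupp.single_apply, Finsupp.finsetSum_apply]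

open Classical in
lemma exists_decomp {n r : ℕ} (U : Fin r → Set (Fin n)) (M : Fin r → (Fin n →₀ ℕ))
    (a : Fin n →₀ ℕ) (b : Fin r → ℕ)
    (hab : ∀ T : Finset (Fin r × Fin n), ∑ p ∈ T, b p.1 * M p.1 p.2 ≤
      ∑ h ∈ T.biUnion (fun p => (slotSet (U p.1) p.2).toFinset), a h) :
    ∃ g : (i : Fin r) → Fin (b i) → (Fin n →₀ ℕ),
      (∀ i c, g i c ∈ LBorelSet n (U i) (M i)) ∧ ∑ i, ∑ c, g i c ≤ a := by
  let t : (Σ p : Fin r × Fin n, Fin (b p.1) × Fin (M p.1 p.2)) → Finset (Σ h : Fin n, Fin (a h)) :=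
    fun s => (slotSet (U s.1.1) s.1.2).toFinset.sigma (fun _ => Finset.univ)
  obtain ⟨φ, hinj, hφ⟩ := (Finset.all_card_le_biUnion_card_iff_exists_injective t).1 (by
    intro F
    let T := F.image Sigma.fst
    calc F.card ≤ (T.sigma (fun p => (Finset.univ : Finset (Fin (b p.1) × Fin (M p.1 p.2))))).card := by
          apply Finset.card_le_card
          intro s hs
          simp only [Finset.mem_sigma, Finset.mem_univ, and_true]
          exact Finset.mem_image_of_mem _ hs
      _ = ∑ p ∈ T, b p.1 * M p.1 p.2 := by simp
      _ ≤ _ := hab T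
      _ = ((T.biUnion (fun p => (slotSet (U p.1) p.2).toFinset)).sigma
            (fun h => (Finset.univ : Finset (Fin (a h))))).card := by simp
      _ ≤ _ := by
          apply Finset.card_le_card
          intro s hs
          simp only [Finset.mem_sigma, Finset.mem_univ, and_true, Finset.mem_biUnion, T,
            Finset.mem_image] at hs
          obtain ⟨p, ⟨x, hx, rfl⟩, hp⟩ := hs
          simp only [Finset.mem_biUnion, t, Finset.mem_sigma, Finset.mem_univ, and_true]
          exact ⟨x, hx, hp⟩)
  have hφ' : ∀ s, (φ s).1 ∈ slotSet (U s.1.1) s.1.2 := by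
    intro s
    have := hφ s
    simpa [t] using this
  refine ⟨fun i c => ∑ x : (Σ j : Fin n, Fin (M i j)), Finsupp.single (φ ⟨(i, x.1), (c, x.2)⟩).1 1,
    fun i c => ?_, ?_⟩
  · have := lborel_sum (U := U i) (Finset.univ : Finset (Σ j : Fin n, Fin (M i j)))
      (fun x => (φ ⟨(i, x.1), (c, x.2)⟩).1) (fun x => x.1) (fun x => hφ' _)
    rw [sum_single_tokens] at this
    exact this
  · have h1 : ∑ s, Finsupp.single (φ s).1 1 ≤ a := by
      calc ∑ s, Finsupp.single (φ s).1 1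
          = ∑ t ∈ (Finset.univ.image φ : Finset (Σ h : Fin n, Fin (a h))),
              (Finsupp.single t.1 1 : Fin n →₀ ℕ) := by
            rw [Finset.sum_image (fun x _ y _ h => hinj h)]
        _ ≤ ∑ t : (Σ h : Fin n, Fin (a h)), (Finsupp.single t.1 1 : Fin n →₀ ℕ) :=
            Finset.sum_le_sum_of_subset (Finset.subset_univ _)
        _ = a := sum_single_tokens a
    refine le_trans (le_of_eq ?_) h1
    rw [Fintype.sum_sigma, Fintype.sum_prod_type]
    refine Finset.sum_congr rfl fun i _ => ?_
    simp_rw [Fintype.sum_prod_type, Fintype.sum_sigma]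
    rw [Finset.sum_comm]

lemma lborel_ineq {n : ℕ} {U : Set (Fin n)} {M g : Fin n →₀ ℕ} (hg : g ∈ LBorelSet n U M)
    (C : Finset (Fin n)) (hC : ∀ h j, j ∈ C → h ∈ slotSet U j → h ∈ C) :
    ∑ j ∈ C, M j ≤ ∑ j ∈ C, g j := by
  induction hg with
  | refl => exact le_rfl
  | @tail b c _ hstep ih =>
    refine ih.trans ?_
    obtain ⟨i, j, hi, hj, hij, -, he⟩ := hstep
    have h1 : ∑ x ∈ C, (c + Finsupp.single j 1 : Fin n →₀ ℕ) x = ∑ x ∈ C, (b + Finsupp.single i 1 : Fin n →₀ ℕ) x := by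
      rw [he]
    simp only [Finsupp.add_apply, Finset.sum_add_distrib, Finsupp.single_apply,
      Finset.sum_ite_eq] at h1
    have h2 : j ∈ C → i ∈ C := fun h => hC i j h (Or.inr ⟨hij, hi, hj⟩)
    split_ifs at h1 <;> first | omega | tauto

lemma lborel_deg {n : ℕ} {U : Set (Fin n)} {M g : Fin n →₀ ℕ} (hg : g ∈ LBorelSet n U M) :
    ∑ j, g j = ∑ j, M j := by
  induction hg with
  | refl => rfl
  | @tail b c _ hstep ih =>
    rw [← ih]
    obtain ⟨i, j, hi, hj, hij, -, he⟩ := hstep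
    have h1 : ∑ x, (c + Finsupp.single j 1 : Fin n →₀ ℕ) x = ∑ x, (b + Finsupp.single i 1 : Fin n →₀ ℕ) x := by
      rw [he]
    simp only [Finsupp.add_apply, Finset.sum_add_distrib, Finsupp.single_apply,
      Finset.sum_ite_eq] at h1
    simpa using h1

open Classical in
/-- The Hall inequality attached to a set `T` of slots. -/
noncomputable def hallForm {n r : ℕ} (U : Fin r → Set (Fin n)) (M : Fin r → (Fin n →₀ ℕ))
    (T : Finset (Fin r × Fin n)) : ((Fin n ⊕ Fin r) →₀ ℕ) →+ ℤ :=
  AddMonoidHom.mk' (fun w =>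
    (∑ h ∈ T.biUnion (fun p => (slotSet (U p.1) p.2).toFinset), (w (Sum.inl h) : ℤ))
      - ∑ p ∈ T, (w (Sum.inr p.1) : ℤ) * (M p.1 p.2 : ℤ)) (by
    intro v w
    simp only [Finsupp.add_apply, Nat.cast_add, add_mul, Finset.sum_add_distrib]
    ring)

/-- The degree inequality. -/
noncomputable def degForm {n r : ℕ} (M : Fin r → (Fin n →₀ ℕ)) :
    ((Fin n ⊕ Fin r) →₀ ℕ) →+ ℤ :=
  AddMonoidHom.mk' (fun w =>
    (∑ i, (w (Sum.inr i) : ℤ) * ∑ j, (M i j : ℤ)) - ∑ h, (w (Sum.inl h) : ℤ)) (by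
    intro v w
    simp only [Finsupp.add_apply, Nat.cast_add, add_mul, Finset.sum_add_distrib]
    ring)

/-- Exponent vector of the generator `g t_i`. -/
noncomputable def genVec {n r : ℕ} (i : Fin r) (g : Fin n →₀ ℕ) : (Fin n ⊕ Fin r) →₀ ℕ :=
  Finsupp.mapDomain Sum.inl g + Finsupp.single (Sum.inr i) 1

lemma genVec_inl {n r : ℕ} (i : Fin r) (g : Fin n →₀ ℕ) (h : Fin n) :
    genVec i g (Sum.inl h) = g h := by
  simp [genVec, Finsupp.mapDomain_apply Sum.inl_injective]

lemma genVec_inr {n r : ℕ} (i k : Fin r) (g : Fin n →₀ ℕ) :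
    genVec i g (Sum.inr k) = if i = k then 1 else 0 := by
  classical
  simp [genVec, Finsupp.single_apply, Finsupp.mapDomain_of_notMem_range]

lemma hallForm_gen {n r : ℕ} (U : Fin r → Set (Fin n)) (M : Fin r → (Fin n →₀ ℕ))
    (T : Finset (Fin r × Fin n)) (i : Fin r) (g : Fin n →₀ ℕ) (hg : g ∈ LBorelSet n (U i) (M i)) :
    0 ≤ hallForm U M T (genVec i g) := by
  classical
  let J : Finset (Fin n) := Finset.univ.filter (fun j => (i, j) ∈ T)
  let C : Finset (Fin n) := J.biUnion (fun j => (slotSet (U i) j).toFinset)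
  have hC : ∀ h j, j ∈ C → h ∈ slotSet (U i) j → h ∈ C := by
    intro h j hj hh
    simp only [C, Finset.mem_biUnion, Set.mem_toFinset] at hj ⊢
    obtain ⟨k, hk, hjk⟩ := hj
    refine ⟨k, hk, ?_⟩
    rcases hh with rfl | ⟨h1, h2, h3⟩
    · exact hjk
    · rcases hjk with rfl | ⟨h4, h5, h6⟩
      · exact Or.inr ⟨h1, h2, h3⟩
      · exact Or.inr ⟨h1.trans h4, h2, h6⟩
  have h1 := lborel_ineq hg C hC
  have h2 : ∑ j ∈ J, M i j ≤ ∑ j ∈ C, M i j := by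
    apply Finset.sum_le_sum_of_subset
    intro j hj
    simp only [C, Finset.mem_biUnion, Set.mem_toFinset]
    exact ⟨j, hj, Or.inl rfl⟩
  have h3 : ∑ j ∈ C, g j ≤ ∑ h ∈ T.biUnion (fun p => (slotSet (U p.1) p.2).toFinset), g h := by
    apply Finset.sum_le_sum_of_subset
    intro j hj
    simp only [C, J, Finset.mem_biUnion, Set.mem_toFinset, Finset.mem_filter, Finset.mem_univ,
      true_and] at hj ⊢
    obtain ⟨k, hk, hjk⟩ := hj
    exact ⟨(i, k), hk, hjk⟩
  have h4 : ∑ p ∈ T, (if i = p.1 then 1 else 0) * M p.1 p.2 = ∑ j ∈ J, M i j := by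
    simp only [ite_mul, one_mul, zero_mul]
    rw [← Finset.sum_filter]
    refine Finset.sum_bij' (fun p _ => p.2) (fun j _ => (i, j)) ?_ ?_ ?_ ?_ ?_ <;>
      simp +contextual [J]
  simp only [hallForm, AddMonoidHom.mk'_apply, genVec_inl, genVec_inr, sub_nonneg]
  have h5 := h4.le.trans (h2.trans (h1.trans h3))
  convert (Int.ofNat_le.2 h5) using 1 <;> simp

lemma degForm_gen {n r : ℕ} (U : Fin r → Set (Fin n)) (M : Fin r → (Fin n →₀ ℕ))
    (i : Fin r) (g : Fin n →₀ ℕ) (hg : g ∈ LBorelSet n (U i) (M i)) :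
    0 ≤ degForm M (genVec i g) := by
  have := lborel_deg hg
  simp only [degForm, AddMonoidHom.mk'_apply, genVec_inl, genVec_inr, sub_nonneg]
  simp
  exact_mod_cast this.le

lemma decomp_vec {n r : ℕ} (U : Fin r → Set (Fin n)) (M : Fin r → (Fin n →₀ ℕ))
    (w : (Fin n ⊕ Fin r) →₀ ℕ) (hw : ∀ T, 0 ≤ hallForm U M T w) :
    ∃ v ∈ AddSubmonoid.closure {v | ∃ i, ∃ g ∈ LBorelSet n (U i) (M i), v = genVec i g},
      ∃ d : Fin n →₀ ℕ, w = v + Finsupp.mapDomain Sum.inl d ∧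
        (0 ≤ degForm M w → d = 0) := by
  classical
  let a : Fin n →₀ ℕ := Finsupp.equivFunOnFinite.symm (fun h => w (Sum.inl h))
  obtain ⟨g, hg, hle⟩ := exists_decomp U M a (fun i => w (Sum.inr i)) (by
    intro T
    have := hw T
    simp only [hallForm, AddMonoidHom.mk'_apply, sub_nonneg] at this
    simp only [a, Finsupp.equivFunOnFinite_symm_apply_apply]
    have h2 := this
    zify
    convert h2)
  obtain ⟨d, hd⟩ := exists_add_of_le hle
  have ha : ∀ h, w (Sum.inl h) = (∑ i, ∑ c, g i c h) + d h := by
    intro h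
    have : a h = w (Sum.inl h) := rfl
    rw [← this, hd]
    simp [Finsupp.finsetSum_apply]
  refine ⟨∑ i, ∑ c, genVec i (g i c), ?_, d, ?_, ?_⟩
  · exact sum_mem fun i _ => sum_mem fun c _ =>
      AddSubmonoid.subset_closure ⟨i, g i c, hg i c, rfl⟩
  · ext x
    rcases x with h | k
    · rw [ha]
      simp [Finsupp.finsetSum_apply, genVec_inl, Finsupp.mapDomain_apply Sum.inl_injective]
    · simp [Finsupp.finsetSum_apply, genVec_inr, Finsupp.mapDomain_of_notMem_range]
  · intro h0
    simp only [degForm, AddMonoidHom.mk'_apply, sub_nonneg] at h0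
    have h1 : ∑ h, w (Sum.inl h) ≤ ∑ i, w (Sum.inr i) * ∑ j, M i j := by exact_mod_cast h0
    have h2 : ∑ h, w (Sum.inl h) = (∑ i, w (Sum.inr i) * ∑ j, M i j) + ∑ h, d h := by
      simp_rw [ha, Finset.sum_add_distrib]
      congr 1
      rw [Finset.sum_comm]
      refine Finset.sum_congr rfl fun i _ => ?_
      rw [Finset.sum_comm]
      simp_rw [lborel_deg (hg i _)]
      simp
    have h3 : ∑ h, d h = 0 := by omega
    ext h
    simpa using (Finset.sum_eq_zero_iff.1 h3) h (Finset.mem_univ h)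

/-- Corollary 6.10: if `I_1,…,I_r` are principal `L`-Borel ideals (with `I_i` the
principal `L_{U_i}`-Borel ideal generated by `M_i`) whose collection admits an
`𝖫`-free ordering with respect to its essential variable sets `E_1,…,E_r`, then the
multi-Rees algebra `R[I_1t_1,…,I_rt_r]` and the multi-fiber ring `K[I_1t_1,…,I_rt_r]`
are normal domains: integral domains integrally closed in their fields of fractions. -/
theorem multiRees_LBorel_normal
    (K : Type*) [Field K] {n r : ℕ}
    (U : Fin r → Set (Fin n)) (M : Fin r → (Fin n →₀ ℕ))
    (E : Fin r → Set (Fin n))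
    (hE : ∀ i : Fin r, E i = {j : Fin n |
      (∃ g ∈ LBorelSet n (U i) (M i), 0 < g j) ∧
      ∃ g ∈ LBorelSet n (U i) (M i), ∃ g' ∈ LBorelSet n (U i) (M i), g j ≠ g' j})
    (hLfree : ∃ σ : Equiv.Perm (Fin r),
      ∀ (h j : Fin n) (u v : Fin r), h < j → u < v →
        h ∈ E (σ u) → j ∈ E (σ u) → j ∈ E (σ v) → h ∈ E (σ v)) :
    (IsDomain (multiRees K n r fun i => LBorelSet n (U i) (M i)) ∧
      IsIntegrallyClosed (multiRees K n r fun i => LBorelSet n (U i) (M i))) ∧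
    (IsDomain (multiFiber K n r fun i => LBorelSet n (U i) (M i)) ∧
      IsIntegrallyClosed (multiFiber K n r fun i => LBorelSet n (U i) (M i))) := by
  let W : Set ((Fin n ⊕ Fin r) →₀ ℕ) := {v | ∃ i, ∃ g ∈ LBorelSet n (U i) (M i), v = genVec i g}
  let X : Set ((Fin n ⊕ Fin r) →₀ ℕ) := Set.range fun h : Fin n => Finsupp.single (Sum.inl h) 1
  have hfib : multiFiber K n r (fun i => LBorelSet n (U i) (M i)) =
      Algebra.adjoin K ((fun w => MvPolynomial.monomial w (1 : K)) '' W) := by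
    unfold multiFiber
    congr 1
    ext p
    constructor
    · rintro ⟨i, g, hg, rfl⟩
      exact ⟨_, ⟨i, g, hg, rfl⟩, rfl⟩
    · rintro ⟨_, ⟨i, g, hg, rfl⟩, rfl⟩
      exact ⟨i, g, hg, rfl⟩
  have hrees : multiRees K n r (fun i => LBorelSet n (U i) (M i)) =
      Algebra.adjoin K ((fun w => MvPolynomial.monomial w (1 : K)) '' (X ∪ W)) := by
    unfold multiRees
    congr 1
    rw [Set.image_union]
    congr 1
    · ext p
      constructor
      · rintro ⟨h, rfl⟩
        exact ⟨_, ⟨h, rfl⟩, rfl⟩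
      · rintro ⟨_, ⟨h, rfl⟩, rfl⟩
        exact ⟨h, rfl⟩
    · ext p
      constructor
      · rintro ⟨i, g, hg, rfl⟩
        exact ⟨_, ⟨i, g, hg, rfl⟩, rfl⟩
      · rintro ⟨_, ⟨i, g, hg, rfl⟩, rfl⟩
        exact ⟨i, g, hg, rfl⟩
  refine ⟨⟨inferInstance, ?_⟩, ⟨inferInstance, ?_⟩⟩
  · rw [hrees]
    refine normal_of_ineq K _ (Set.range (hallForm U M)) _ ?_ ?_
    · rintro w hw _ ⟨T, rfl⟩
      rcases hw with ⟨h, rfl⟩ | ⟨i, g, hg, rfl⟩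
      · simp only [hallForm, AddMonoidHom.mk'_apply]
        simp only [Finsupp.single_apply, reduceCtorEq, if_false, Nat.cast_zero, zero_mul,
          Finset.sum_const_zero, sub_zero]
        exact Finset.sum_nonneg fun _ _ => Int.natCast_nonneg _
      · exact hallForm_gen U M T i g hg
    · intro w hw
      obtain ⟨v, hv, d, rfl, -⟩ := decomp_vec U M w (fun T => hw _ ⟨T, rfl⟩)
      refine add_mem (AddSubmonoid.closure_mono Set.subset_union_right hv) ?_
      clear hw
      induction d using Finsupp.induction_linear with
      | zero => simp
      | add f g hf hg => rw [Finsupp.mapDomain_add]; exact add_mem hf hg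
      | single a b =>
        rw [Finsupp.mapDomain_single]
        have hs : Finsupp.single (Sum.inl a : Fin n ⊕ Fin r) b =
            b • Finsupp.single (Sum.inl a) 1 := by simp
        rw [hs]
        have hx : Finsupp.single (Sum.inl a : Fin n ⊕ Fin r) 1 ∈ X := ⟨a, rfl⟩
        exact nsmul_mem (AddSubmonoid.subset_closure (Set.mem_union_left W hx)) b
  · rw [hfib]
    refine normal_of_ineq K _ (insert (degForm M) (Set.range (hallForm U M))) _ ?_ ?_
    · rintro _ ⟨i, g, hg, rfl⟩ l (rfl | ⟨T, rfl⟩)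
      · exact degForm_gen U M i g hg
      · exact hallForm_gen U M T i g hg
    · intro w hw
      obtain ⟨v, hv, d, hd, h0⟩ := decomp_vec U M w (fun T => hw _ (Or.inr ⟨T, rfl⟩))
      rw [hd, h0 (hw _ (Or.inl rfl))]
      simpa using hv
end

section
/- Let I_1,…,I_r be principal Borel ideals in K[x_1,…,x_n], i.e., I_i is generated by Borel(M_i) for a monomial M_i. Then the multi-Rees algebra R[I_1t_1,…,I_rt_r] and the multi-fiber ring K[I_1t_1,…,I_rt_r] are normal domains: each is an integral domain that is integrally closed in its field of fractions. -/
/-- A Borel move: `m'` is obtained from `m` by replacing one factor `x_j` by `x_i` with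
`i < j`. -/
def BorelStep (n : ℕ) (m m' : Fin n →₀ ℕ) : Prop :=
  ∃ i j : Fin n, i < j ∧ 0 < m j ∧ m' + Finsupp.single j 1 = m + Finsupp.single i 1

/-- `Borel(M)`: all monomials obtainable from `M` by Borel moves (including `M`);
this is the minimal generating set of the principal Borel ideal `⟨Borel(M)⟩`. -/
def BorelSet (n : ℕ) (M : Fin n →₀ ℕ) : Set (Fin n →₀ ℕ) :=
  {m | Relation.ReflTransGen (BorelStep n) M m}

open MvPolynomial in
/-- twist -/
noncomputable def twistHom (K : Type*) [Field K] {σ : Type*} (l : (σ →₀ ℕ) →+ ℤ) :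
    MvPolynomial σ K →+* LaurentPolynomial (MvPolynomial σ K) :=
  eval₂Hom ((LaurentPolynomial.C).comp MvPolynomial.C)
    (fun x => LaurentPolynomial.C (X x) * LaurentPolynomial.T (l (Finsupp.single x 1)))

open MvPolynomial in
lemma twistHom_monomial_one (K : Type*) [Field K] {σ : Type*} (l : (σ →₀ ℕ) →+ ℤ)
    (s : σ →₀ ℕ) : twistHom K l (monomial s 1) =
      LaurentPolynomial.C (monomial s 1) * LaurentPolynomial.T (l s) := by
  induction s using Finsupp.induction_linear with
  | zero =>
    have : (monomial (0 : σ →₀ ℕ)) (1 : K) = 1 := rfl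
    rw [this]; simp
  | add s t hs ht =>
    have : (monomial (s + t)) (1 : K) = monomial s 1 * monomial t 1 := by
      rw [monomial_mul, one_mul]
    rw [this, map_mul, hs, ht, map_mul, map_add, LaurentPolynomial.T_add]
    ring
  | single x k =>
    have h1 : (monomial (Finsupp.single x k)) (1 : K) = X x ^ k := by
      rw [X_pow_eq_monomial]
    have h2 : Finsupp.single x k = k • Finsupp.single x 1 := by simp
    have h3 : l (Finsupp.single x k) = k * l (Finsupp.single x 1) := by
      rw [h2, map_nsmul]; simp
    rw [h1, map_pow, h3, ← LaurentPolynomial.T_pow, map_pow, ← mul_pow]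
    congr 1
    simp [twistHom]

open MvPolynomial in
lemma twistHom_monomial (K : Type*) [Field K] {σ : Type*} (l : (σ →₀ ℕ) →+ ℤ)
    (s : σ →₀ ℕ) (c : K) : twistHom K l (monomial s c) =
      LaurentPolynomial.C (monomial s c) * LaurentPolynomial.T (l s) := by
  have : (monomial s) c = C c * monomial s 1 := by rw [C_mul_monomial, mul_one]
  rw [this, map_mul, twistHom_monomial_one, map_mul, mul_assoc]
  congr 1
  simp [twistHom]

lemma twistHom_coeff (K : Type*) [Field K] {σ : Type*} (l : (σ →₀ ℕ) →+ ℤ)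
    (s : σ →₀ ℕ) (f : MvPolynomial σ K) :
    MvPolynomial.coeff s ((twistHom K l f).coeff (l s)) = MvPolynomial.coeff s f := by
  classical
  induction f using MvPolynomial.induction_on' with
  | monomial t c =>
    rw [twistHom_monomial, ← LaurentPolynomial.single_eq_C_mul_T]
    by_cases h : t = s
    · subst h; rw [AddMonoidAlgebra.coeff_single, Finsupp.single_eq_same]
    · rw [AddMonoidAlgebra.coeff_single, Finsupp.single_apply, MvPolynomial.coeff_monomial, if_neg h]
      split_ifs <;> simp [MvPolynomial.coeff_monomial, h]
  | add p q hp hq =>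
    rw [map_add, AddMonoidAlgebra.coeff_add, Finsupp.add_apply, MvPolynomial.coeff_add,
      MvPolynomial.coeff_add, hp, hq]

lemma laurent_closed (R : Type*) [CommRing R] [IsDomain R] [IsIntegrallyClosed (Polynomial R)] :
    IsIntegrallyClosedIn (Polynomial R) (LaurentPolynomial R) := by
  have hle : Submonoid.powers (Polynomial.X : Polynomial R) ≤ nonZeroDivisors (Polynomial R) := by
    rw [Submonoid.powers_le]
    exact mem_nonZeroDivisors_of_ne_zero Polynomial.X_ne_zero
  have hu : ∀ y : Submonoid.powers (Polynomial.X : Polynomial R),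
      IsUnit (Algebra.ofId (Polynomial R) (FractionRing (Polynomial R)) y) := fun y =>
    IsLocalization.map_units (M := nonZeroDivisors (Polynomial R)) _ ⟨y.1, hle y.2⟩
  let F : LaurentPolynomial R →ₐ[Polynomial R] FractionRing (Polynomial R) :=
    IsLocalization.liftAlgHom (M := Submonoid.powers (Polynomial.X : Polynomial R)) hu
  refine AlgHom.isIntegrallyClosedIn F ?_ inferInstance
  have := (IsLocalization.lift_injective_iff (S := LaurentPolynomial R) (M := Submonoid.powers (Polynomial.X : Polynomial R)) (g := algebraMap (Polynomial R) (FractionRing (Polynomial R))) hu).2 (by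
    intro x y
    rw [(IsFractionRing.injective (Polynomial R) (FractionRing (Polynomial R))).eq_iff]
    exact Polynomial.toLaurent_injective.eq_iff)
  exact this

lemma integral_coeff (K : Type*) [Field K] {σ : Type*} (l : (σ →₀ ℕ) →+ ℤ)
    (A : Subalgebra K (MvPolynomial σ K))
    (hA : ∀ f ∈ A, twistHom K l f ∈ (Polynomial.toLaurent (R := MvPolynomial σ K)).range)
    (f : MvPolynomial σ K) (hf : IsIntegral A f) (s : σ →₀ ℕ) (hs : l s < 0) :
    MvPolynomial.coeff s f = 0 := by
  let e := RingEquiv.ofBijective (Polynomial.toLaurent (R := MvPolynomial σ K)).rangeRestrict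
    ⟨fun x y h => Polynomial.toLaurent_injective (congrArg Subtype.val h),
      RingHom.rangeRestrict_surjective _⟩
  let θ0 : A →+* (Polynomial.toLaurent (R := MvPolynomial σ K)).range :=
    RingHom.codRestrict ((twistHom K l).comp (algebraMap A (MvPolynomial σ K))) _
      (fun x => hA x.1 x.2)
  let θ : A →+* Polynomial (MvPolynomial σ K) := (e.symm : _ →+* _).comp θ0
  have h1 : IsIntegral (Polynomial (MvPolynomial σ K)) (twistHom K l f) := by
    refine hf.map_of_comp_eq θ (twistHom K l) ?_
    ext1 x
    have : e (e.symm (θ0 x)) = θ0 x := e.apply_symm_apply _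
    exact congrArg Subtype.val this
  have := laurent_closed (MvPolynomial σ K)
  obtain ⟨p, hp⟩ := IsIntegrallyClosedIn.algebraMap_eq_of_integral h1
  rw [← twistHom_coeff K l, ← hp, LaurentPolynomial.algebraMap_eq_toLaurent]
  have : (Polynomial.toLaurent p).coeff (l s) = 0 := by
    rw [← Finsupp.notMem_support_iff, LaurentPolynomial.support_coeff_toLaurent]
    simp only [Finset.mem_map, not_exists, not_and]
    intro k _ hk
    have : (k : ℤ) = l s := hk
    omega
  rw [this]; simp

theorem closed_of_cone (K : Type*) [Field K] {σ : Type*} (G : Set (σ →₀ ℕ))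
    (L : Set ((σ →₀ ℕ) →+ ℤ)) (h1 : ∀ g ∈ G, ∀ l ∈ L, 0 ≤ l g)
    (h2 : ∀ s, (∀ l ∈ L, 0 ≤ l s) → s ∈ AddSubmonoid.closure G) :
    IsIntegrallyClosed (Algebra.adjoin K
      ((fun g => MvPolynomial.monomial g (1 : K)) '' G)) := by
  set A := Algebra.adjoin K ((fun g => MvPolynomial.monomial g (1 : K)) '' G) with hAdef
  have hmon : ∀ s ∈ AddSubmonoid.closure G, MvPolynomial.monomial s (1 : K) ∈ A := by
    intro s hs
    induction hs using AddSubmonoid.closure_induction with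
    | mem x hx => exact Algebra.subset_adjoin ⟨x, hx, rfl⟩
    | zero => exact A.one_mem
    | add x y _ _ hx hy =>
      have := A.mul_mem hx hy
      rwa [MvPolynomial.monomial_mul, one_mul] at this
  have key : ∀ f : MvPolynomial σ K, IsIntegral A f → f ∈ A := by
    intro f hf
    rw [f.as_sum]
    refine A.sum_mem fun s hs => ?_
    have : s ∈ AddSubmonoid.closure G := by
      refine h2 s fun l hl => ?_
      by_contra hneg
      refine (MvPolynomial.mem_support_iff.1 hs) (integral_coeff K l A ?_ f hf s (not_le.1 hneg))
      intro f hf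
      induction hf using Algebra.adjoin_induction with
      | mem x hx =>
        obtain ⟨g, hg, rfl⟩ := hx
        obtain ⟨k, hk⟩ := Int.eq_ofNat_of_zero_le (h1 g hg l hl)
        refine ⟨Polynomial.C (MvPolynomial.monomial g 1) * Polynomial.X ^ k, ?_⟩
        rw [twistHom_monomial, hk, Polynomial.toLaurent_C_mul_X_pow]
      | algebraMap r =>
        refine ⟨Polynomial.C (MvPolynomial.C r), ?_⟩
        rw [Polynomial.toLaurent_C]
        simp [twistHom, MvPolynomial.algebraMap_eq]
      | add x y _ _ hx hy => rw [map_add]; exact add_mem hx hy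
      | mul x y _ _ hx hy => rw [map_mul]; exact mul_mem hx hy
    have h3 := A.smul_mem (hmon s this) (MvPolynomial.coeff s f)
    rwa [MvPolynomial.smul_monomial, smul_eq_mul, mul_one] at h3
  have hinj : Function.Injective (algebraMap A (MvPolynomial σ K)) := Subtype.val_injective
  rw [isIntegrallyClosed_iff (FractionRing A)]
  intro x hx
  let ψ : FractionRing A →+* FractionRing (MvPolynomial σ K) := IsFractionRing.map hinj
  have hψ : ∀ a : A, ψ (algebraMap _ _ a) =
      algebraMap (MvPolynomial σ K) _ (algebraMap A (MvPolynomial σ K) a) :=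
    fun a => IsLocalization.map_eq _ a
  have hx2 : IsIntegral (MvPolynomial σ K) (ψ x) := by
    refine hx.map_of_comp_eq (algebraMap A (MvPolynomial σ K)) ψ ?_
    ext1 a
    exact (hψ a).symm
  obtain ⟨f, hf⟩ := IsIntegrallyClosed.algebraMap_eq_of_integral hx2
  have hfi : IsIntegral A f := by
    obtain ⟨p, hp, hp0⟩ := hx
    refine ⟨p, hp, ?_⟩
    apply IsFractionRing.injective (MvPolynomial σ K) (FractionRing (MvPolynomial σ K))
    rw [Polynomial.hom_eval₂, map_zero, hf]
    have := congrArg ψ hp0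
    rw [Polynomial.hom_eval₂, map_zero] at this
    rw [← this]
    congr 1
    ext1 a
    exact (hψ a).symm
  refine ⟨⟨f, key f hfi⟩, ψ.injective ?_⟩
  rw [hψ, ← hf]
  rfl
/-- head -/
def headSum {n r : ℕ} (k : Fin n) (s : Fin n ⊕ Fin r →₀ ℕ) : ℕ :=
  ∑ i, if i ≤ k then s (Sum.inl i) else 0

lemma headSum_add {n r : ℕ} (k : Fin n) (s t : Fin n ⊕ Fin r →₀ ℕ) :
    headSum k (s + t) = headSum k s + headSum k t := by
  unfold headSum
  rw [← Finset.sum_add_distrib]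
  refine Finset.sum_congr rfl fun i _ => ?_
  split_ifs <;> simp

lemma headSum_single {n r : ℕ} (k i : Fin n) :
    headSum k (Finsupp.single (Sum.inl i) 1 : Fin n ⊕ Fin r →₀ ℕ) = if i ≤ k then 1 else 0 := by
  unfold headSum
  rw [Finset.sum_eq_single i]
  · simp
  · intro b _ hb; simp [hb.symm]
  · simp

lemma headSum_mono {n r : ℕ} {k l : Fin n} (h : k ≤ l) (s : Fin n ⊕ Fin r →₀ ℕ) :
    headSum k s ≤ headSum l s := by
  unfold headSum
  refine Finset.sum_le_sum fun i _ => ?_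
  split_ifs with h1 h2
  · exact le_rfl
  · exact absurd (h1.trans h) h2
  · exact Nat.zero_le _
  · exact le_rfl

lemma headSum_eq {n r : ℕ} {k l : Fin n} (h : k ≤ l) (s : Fin n ⊕ Fin r →₀ ℕ)
    (hz : ∀ j, k < j → j ≤ l → s (Sum.inl j) = 0) :
    headSum l s = headSum k s := by
  unfold headSum
  refine Finset.sum_congr rfl fun i _ => ?_
  split_ifs with h1 h2 h2
  · rfl
  · exact hz i (not_le.1 h2) h1
  · exact absurd (h2.trans h) h1
  · rfl

/-- degree -/
def totSum {n r : ℕ} (s : Fin n ⊕ Fin r →₀ ℕ) : ℕ := ∑ i, s (Sum.inl i)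

lemma headSum_le_totSum {n r : ℕ} (k : Fin n) (s : Fin n ⊕ Fin r →₀ ℕ) :
    headSum k s ≤ totSum s := by
  refine Finset.sum_le_sum fun i _ => ?_
  split_ifs <;> simp

lemma totSum_eq {n r : ℕ} {k : Fin n} (s : Fin n ⊕ Fin r →₀ ℕ)
    (hz : ∀ j, k < j → s (Sum.inl j) = 0) : totSum s = headSum k s := by
  refine Finset.sum_congr rfl fun i _ => ?_
  split_ifs with h
  · rfl
  · exact hz i (not_le.1 h)

lemma totSum_add {n r : ℕ} (s t : Fin n ⊕ Fin r →₀ ℕ) :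
    totSum (s + t) = totSum s + totSum t := by
  unfold totSum
  rw [← Finset.sum_add_distrib]
  rfl

lemma totSum_single {n r : ℕ} (i : Fin n) :
    totSum (Finsupp.single (Sum.inl i) 1 : Fin n ⊕ Fin r →₀ ℕ) = 1 := by
  unfold totSum
  rw [Finset.sum_eq_single i]
  · simp
  · intro b _ hb; simp [hb.symm]
  · simp

lemma eq_of_headSum {n r : ℕ} (a b : Fin n ⊕ Fin r →₀ ℕ)
    (h : ∀ k, headSum k b = headSum k a) (hr : ∀ i, b (Sum.inr i) = a (Sum.inr i)) : b = a := by
  have hl : ∀ m : ℕ, ∀ hm : m < n, b (Sum.inl ⟨m, hm⟩) = a (Sum.inl ⟨m, hm⟩) := by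
    intro m
    induction m using Nat.strong_induction_on with
    | _ m ih =>
      intro hm
      have := h ⟨m, hm⟩
      unfold headSum at this
      rw [← Finset.add_sum_erase _ _ (Finset.mem_univ (⟨m, hm⟩ : Fin n)),
        ← Finset.add_sum_erase _ (fun i => if i ≤ _ then a (Sum.inl i) else 0)
          (Finset.mem_univ (⟨m, hm⟩ : Fin n))] at this
      have h2 : ∑ i ∈ Finset.univ.erase (⟨m, hm⟩ : Fin n),
          (if i ≤ (⟨m, hm⟩ : Fin n) then b (Sum.inl i) else 0) =
          ∑ i ∈ Finset.univ.erase (⟨m, hm⟩ : Fin n),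
          (if i ≤ (⟨m, hm⟩ : Fin n) then a (Sum.inl i) else 0) := by
        refine Finset.sum_congr rfl fun i hi => ?_
        split_ifs with hle
        · have hne := Finset.ne_of_mem_erase hi
          exact ih i.1 (lt_of_le_of_ne hle (fun h => hne (Fin.ext h))) i.2
        · rfl
      simp only [le_refl, if_true] at this
      omega
  ext x
  rcases x with i | i
  · exact hl i.1 i.2
  · exact hr i

lemma reach {n r : ℕ} (Q : Set (Fin n ⊕ Fin r →₀ ℕ)) (a : Fin n ⊕ Fin r →₀ ℕ)
    (hmove : ∀ b ∈ Q, ∀ i j : Fin n, i < j → 0 < b (Sum.inl j) → ∀ b',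
      b' + Finsupp.single (Sum.inl j) 1 = b + Finsupp.single (Sum.inl i) 1 → b' ∈ Q)
    (hadd : ∀ b ∈ Q, ∀ k, totSum b < totSum a → b + Finsupp.single (Sum.inl k) 1 ∈ Q) :
    ∀ d : ℕ, ∀ b ∈ Q, (∀ k, headSum k b ≤ headSum k a) →
      (∀ i, b (Sum.inr i) = a (Sum.inr i)) →
      (∑ k, headSum k a ≤ d + ∑ k, headSum k b) → a ∈ Q := by
  intro d
  induction d with
  | zero =>
    intro b hb hh hr hd
    have : b = a := by
      refine eq_of_headSum a b ?_ hr
      have h1 : ∑ k, headSum k b = ∑ k, headSum k a :=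
        le_antisymm (Finset.sum_le_sum fun k _ => hh k) (by omega)
      intro k
      exact (Finset.sum_eq_sum_iff_of_le (fun k _ => hh k)).1 h1 k (Finset.mem_univ _)
    exact this ▸ hb
  | succ d ih =>
    intro b hb hh hr hd
    by_cases hall : ∀ k, headSum k b = headSum k a
    · exact eq_of_headSum a b hall hr ▸ hb
    push Not at hall
    obtain ⟨k, hk⟩ := hall
    have hk : headSum k b < headSum k a := lt_of_le_of_ne (hh k) hk
    -- any valid increment suffices
    have step : ∀ b' ∈ Q, (∀ l, headSum l b ≤ headSum l b') → headSum k b < headSum k b' →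
        (∀ l, headSum l b' ≤ headSum l a) → (∀ i, b' (Sum.inr i) = b (Sum.inr i)) → a ∈ Q := by
      intro b' hb' h1 h2 h3 h4
      refine ih b' hb' h3 (fun i => (h4 i).trans (hr i)) ?_
      have : ∑ k, headSum k b < ∑ k, headSum k b' :=
        Finset.sum_lt_sum (fun l _ => h1 l) ⟨k, Finset.mem_univ _, h2⟩
      omega
    by_cases hj : ∃ j, k < j ∧ 0 < b (Sum.inl j)
    · let S : Finset (Fin n) := Finset.univ.filter fun j => k < j ∧ 0 < b (Sum.inl j)
      have hS : S.Nonempty := by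
        obtain ⟨j, hj⟩ := hj
        exact ⟨j, by simp [S, hj]⟩
      obtain ⟨hkj, hbj⟩ : k < S.min' hS ∧ 0 < b (Sum.inl (S.min' hS)) := by
        have := S.min'_mem hS
        exact (Finset.mem_filter.1 this).2
      have hmin : ∀ i, k < i → i < S.min' hS → b (Sum.inl i) = 0 := by
        intro i hki hi
        by_contra hne
        have : i ∈ S := by simp [S, hki, Nat.pos_of_ne_zero hne]
        exact absurd (S.min'_le i this) (not_le.2 hi)
      set j := S.min' hS
      obtain ⟨b', hb'⟩ : ∃ b' : Fin n ⊕ Fin r →₀ ℕ,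
          b' + Finsupp.single (Sum.inl j) 1 = b + Finsupp.single (Sum.inl k) 1 := by
        refine ⟨b - Finsupp.single (Sum.inl j) 1 + Finsupp.single (Sum.inl k) 1, ?_⟩
        rw [add_right_comm, tsub_add_cancel_of_le]
        rw [Finsupp.single_le_iff]; exact hbj
      have hheads : ∀ l, headSum l b' + (if j ≤ l then 1 else 0) =
          headSum l b + (if k ≤ l then 1 else 0) := by
        intro l
        have := congrArg (headSum l) hb'
        rwa [headSum_add, headSum_add, headSum_single, headSum_single] at this
      refine step b' (hmove b hb k j hkj hbj b' hb') ?_ ?_ ?_ ?_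
      · intro l
        have := hheads l
        split_ifs at this with h1 h2
        · omega
        · exact absurd (hkj.le.trans h1) h2
        · omega
        · omega
      · have := hheads k
        rw [if_neg (not_le.2 hkj), if_pos le_rfl] at this
        omega
      · intro l
        have h0 := hheads l
        have h00 := hh l
        split_ifs at h0 with h1 h2 h2
        · omega
        · omega
        · have e := headSum_eq h2 b (fun i hi hil => hmin i hi (lt_of_le_of_lt hil (not_le.1 h1)))
          have := headSum_mono h2 a
          omega
        · omega
      · intro i
        have := DFunLike.congr_fun hb' (Sum.inr i)
        simpa using this
    · push Not at hj
      have hz : ∀ j, k < j → b (Sum.inl j) = 0 := fun j h => Nat.le_zero.1 (hj j h)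
      refine step _ (hadd b hb k ?_) ?_ ?_ ?_ ?_
      · rw [totSum_eq b hz]
        exact hk.trans_le (headSum_le_totSum _ _)
      · intro l; rw [headSum_add]; omega
      · rw [headSum_add, headSum_single]; simp
      · intro l
        rw [headSum_add, headSum_single]
        have := hh l
        split_ifs with h
        · have e := headSum_eq h b (fun i hi _ => hz i hi)
          have := headSum_mono h a
          omega
        · omega
      · intro i; simp

lemma closure_move {n r : ℕ} (G : Set (Fin n ⊕ Fin r →₀ ℕ))
    (hG : ∀ g ∈ G, ∀ i j : Fin n, i < j → 0 < g (Sum.inl j) → ∃ g' ∈ G,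
      g' + Finsupp.single (Sum.inl j) 1 = g + Finsupp.single (Sum.inl i) 1) :
    ∀ b ∈ AddSubmonoid.closure G, ∀ i j : Fin n, i < j → 0 < b (Sum.inl j) → ∀ b',
      b' + Finsupp.single (Sum.inl j) 1 = b + Finsupp.single (Sum.inl i) 1 →
      b' ∈ AddSubmonoid.closure G := by
  suffices h : ∀ b ∈ AddSubmonoid.closure G, ∀ i j : Fin n, i < j → 0 < b (Sum.inl j) →
      ∃ b' ∈ AddSubmonoid.closure G,
      b' + Finsupp.single (Sum.inl j) 1 = b + Finsupp.single (Sum.inl i) 1 by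
    intro b hb i j hij hj b' hb'
    obtain ⟨b2, h2, h3⟩ := h b hb i j hij hj
    rw [← h3] at hb'
    exact (add_right_cancel hb') ▸ h2
  intro b hb i j hij
  induction hb using AddSubmonoid.closure_induction with
  | mem x hx =>
    intro hj
    obtain ⟨g, hg, h⟩ := hG x hx i j hij hj
    exact ⟨g, AddSubmonoid.subset_closure hg, h⟩
  | zero => intro hj; simp at hj
  | add x y hx hy ihx ihy =>
    intro hj
    by_cases h : 0 < x (Sum.inl j)
    · obtain ⟨b', h1, h2⟩ := ihx h
      refine ⟨b' + y, add_mem h1 hy, ?_⟩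
      rw [add_right_comm, h2]; abel
    · obtain ⟨b', h1, h2⟩ := ihy (by
        have : (x + y) (Sum.inl j) = x (Sum.inl j) + y (Sum.inl j) := rfl
        omega)
      refine ⟨x + b', add_mem hx h1, ?_⟩
      rw [add_assoc, h2]; abel

/-- exponent of `g * t_i` -/
noncomputable def genExp {n r : ℕ} (i : Fin r) (g : Fin n →₀ ℕ) : Fin n ⊕ Fin r →₀ ℕ :=
  Finsupp.mapDomain Sum.inl g + Finsupp.single (Sum.inr i) 1

lemma genExp_inl {n r : ℕ} (i : Fin r) (g : Fin n →₀ ℕ) (j : Fin n) :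
    genExp i g (Sum.inl j) = g j := by
  simp [genExp, Finsupp.mapDomain_apply Sum.inl_injective]

lemma genExp_inr {n r : ℕ} (i : Fin r) (g : Fin n →₀ ℕ) (j : Fin r) :
    genExp i g (Sum.inr j) = if i = j then 1 else 0 := by
  classical
  have : Finsupp.mapDomain Sum.inl g (Sum.inr j : Fin n ⊕ Fin r) = 0 :=
    Finsupp.mapDomain_of_notMem_range _ _ (by simp)
  simp [genExp, this, Finsupp.single_apply]

lemma genExp_step {n r : ℕ} (i : Fin r) {m m' : Fin n →₀ ℕ} {p q : Fin n}
    (h : m' + Finsupp.single q 1 = m + Finsupp.single p 1) :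
    genExp i m' + Finsupp.single (Sum.inl q) 1 = genExp i m + Finsupp.single (Sum.inl p) 1 := by
  have := congrArg (Finsupp.mapDomain (Sum.inl : Fin n → Fin n ⊕ Fin r)) h
  rw [Finsupp.mapDomain_add, Finsupp.mapDomain_add, Finsupp.mapDomain_single,
    Finsupp.mapDomain_single] at this
  unfold genExp
  rw [add_right_comm, this, add_right_comm]

lemma borel_sums {n r : ℕ} (i : Fin r) {M m : Fin n →₀ ℕ} (h : m ∈ BorelSet n M) :
    (∀ k, headSum k (genExp i M) ≤ headSum k (genExp i m)) ∧
      totSum (genExp i m) = totSum (genExp i M) := by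
  change Relation.ReflTransGen (BorelStep n) M m at h
  induction h with
  | refl => exact ⟨fun _ => le_rfl, rfl⟩
  | tail _ hs ih =>
    obtain ⟨p, q, hpq, _, he⟩ := hs
    have he := genExp_step i he
    constructor
    · intro k
      refine (ih.1 k).trans ?_
      have := congrArg (headSum k) he
      rw [headSum_add, headSum_add, headSum_single, headSum_single] at this
      split_ifs at this with h1 h2
      · omega
      · exact absurd (hpq.le.trans h1) h2
      · omega
      · omega
    · have := congrArg totSum he
      rw [totSum_add, totSum_add, totSum_single, totSum_single] at this
      rw [← ih.2]; omega

/-- the weight hom -/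
noncomputable def wHom {n r : ℕ} (F : (Fin n ⊕ Fin r →₀ ℕ) →+ ℕ) (w : Fin r → ℕ) :
    (Fin n ⊕ Fin r →₀ ℕ) →+ ℤ where
  toFun s := (F s : ℤ) - ∑ i, (s (Sum.inr i) : ℤ) * w i
  map_zero' := by simp
  map_add' s t := by
    simp only [map_add, Finsupp.add_apply, Nat.cast_add, add_mul, Finset.sum_add_distrib]
    ring

/-- head hom -/
noncomputable def headHom {n r : ℕ} (k : Fin n) : (Fin n ⊕ Fin r →₀ ℕ) →+ ℕ where
  toFun := headSum k
  map_zero' := by simp [headSum]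
  map_add' := headSum_add k

/-- degree hom -/
noncomputable def totHom {n r : ℕ} : (Fin n ⊕ Fin r →₀ ℕ) →+ ℕ where
  toFun := totSum
  map_zero' := by simp [totSum]
  map_add' := totSum_add

lemma wHom_genExp {n r : ℕ} (F : (Fin n ⊕ Fin r →₀ ℕ) →+ ℕ) (w : Fin r → ℕ)
    (i : Fin r) (g : Fin n →₀ ℕ) : wHom F w (genExp i g) = F (genExp i g) - w i := by
  simp [wHom, genExp_inr]

lemma wHom_nonneg {n r : ℕ} (F : (Fin n ⊕ Fin r →₀ ℕ) →+ ℕ) (M : Fin r → Fin n →₀ ℕ)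
    (s : Fin n ⊕ Fin r →₀ ℕ) : wHom F (fun i => F (genExp i (M i))) s =
      F s - F (∑ i, s (Sum.inr i) • genExp i (M i)) := by
  simp [wHom, map_sum]

lemma start_inr {n r : ℕ} (M : Fin r → Fin n →₀ ℕ) (s : Fin n ⊕ Fin r →₀ ℕ) (j : Fin r) :
    (∑ i, s (Sum.inr i) • genExp i (M i)) (Sum.inr j) = s (Sum.inr j) := by
  simp [Finsupp.finsetSum_apply, genExp_inr]

/-- fiber exponents -/
def fibG {n r : ℕ} (M : Fin r → Fin n →₀ ℕ) : Set (Fin n ⊕ Fin r →₀ ℕ) :=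
  {s | ∃ i : Fin r, ∃ g ∈ BorelSet n (M i), s = genExp i g}

lemma fibG_move {n r : ℕ} (M : Fin r → Fin n →₀ ℕ) :
    ∀ g ∈ fibG M, ∀ i j : Fin n, i < j → 0 < g (Sum.inl j) → ∃ g' ∈ fibG M,
      g' + Finsupp.single (Sum.inl j) 1 = g + Finsupp.single (Sum.inl i) 1 := by
  rintro _ ⟨t, g, hg, rfl⟩ i j hij hj
  rw [genExp_inl] at hj
  have he : (g - Finsupp.single j 1 + Finsupp.single i 1) + Finsupp.single j 1
      = g + Finsupp.single i 1 := by
    rw [add_right_comm, tsub_add_cancel_of_le]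
    rw [Finsupp.single_le_iff]; exact hj
  refine ⟨genExp t (g - Finsupp.single j 1 + Finsupp.single i 1), ⟨t, _, ?_, rfl⟩,
    genExp_step t he⟩
  exact Relation.ReflTransGen.tail hg ⟨i, j, hij, hj, he⟩

lemma start_mem {n r : ℕ} (M : Fin r → Fin n →₀ ℕ) (s : Fin n ⊕ Fin r →₀ ℕ) :
    ∑ i, s (Sum.inr i) • genExp i (M i) ∈ AddSubmonoid.closure (fibG M) := by
  refine sum_mem fun i _ => nsmul_mem (AddSubmonoid.subset_closure ?_) _
  exact ⟨i, M i, Relation.ReflTransGen.refl, rfl⟩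

/-- Rees exponents -/
def reesG {n r : ℕ} (M : Fin r → Fin n →₀ ℕ) : Set (Fin n ⊕ Fin r →₀ ℕ) :=
  (Set.range fun i : Fin n => Finsupp.single (Sum.inl i) 1) ∪ fibG M

lemma reesG_move {n r : ℕ} (M : Fin r → Fin n →₀ ℕ) :
    ∀ g ∈ reesG M, ∀ i j : Fin n, i < j → 0 < g (Sum.inl j) → ∃ g' ∈ reesG M,
      g' + Finsupp.single (Sum.inl j) 1 = g + Finsupp.single (Sum.inl i) 1 := by
  classical
  rintro g (⟨k, rfl⟩ | hg) i j hij hj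
  · have : k = j := by
      by_contra h
      simp [h] at hj
    subst this
    exact ⟨_, Or.inl ⟨i, rfl⟩, add_comm _ _⟩
  · obtain ⟨g', h1, h2⟩ := fibG_move M g hg i j hij hj
    exact ⟨g', Or.inr h1, h2⟩

lemma wHom_gen_nonneg {n r : ℕ} (M : Fin r → Fin n →₀ ℕ) (k : Fin n) :
    ∀ g ∈ fibG M, 0 ≤ wHom (headHom k) (fun i => headHom k (genExp i (M i))) g := by
  rintro _ ⟨i, g, hg, rfl⟩
  rw [wHom_genExp]
  have := (borel_sums i hg).1 k
  have h : headHom k (genExp i (M i)) ≤ headHom k (genExp i g) := this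
  omega

theorem rees_closed (K : Type*) [Field K] {n r : ℕ} (M : Fin r → (Fin n →₀ ℕ)) :
    IsIntegrallyClosed (Algebra.adjoin K
      ((fun g => MvPolynomial.monomial g (1 : K)) '' reesG M)) := by
  refine closed_of_cone K _
    (Set.range fun k : Fin n => wHom (headHom k) (fun i => headHom k (genExp i (M i)))) ?_ ?_
  · rintro g hg _ ⟨k, rfl⟩
    rcases hg with ⟨i, rfl⟩ | hg
    · simp [wHom]
    · exact wHom_gen_nonneg M k g hg
  · intro s hs
    refine reach (AddSubmonoid.closure (reesG M)) s (closure_move _ (reesG_move M)) ?_ _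
      (∑ i, s (Sum.inr i) • genExp i (M i)) ?_ ?_ (start_inr M s) (Nat.le_add_right _ _)
    · intro b hb k _
      exact add_mem hb (AddSubmonoid.subset_closure (Or.inl ⟨k, rfl⟩))
    · exact AddSubmonoid.closure_mono Set.subset_union_right (start_mem M s)
    · intro k
      have h := hs _ ⟨k, rfl⟩
      dsimp only at h
      rw [wHom_nonneg] at h
      have h2 : headHom k (∑ i, s (Sum.inr i) • genExp i (M i)) ≤ headHom k s := by omega
      exact h2

theorem fiber_closed (K : Type*) [Field K] {n r : ℕ} (M : Fin r → (Fin n →₀ ℕ)) :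
    IsIntegrallyClosed (Algebra.adjoin K
      ((fun g => MvPolynomial.monomial g (1 : K)) '' fibG M)) := by
  refine closed_of_cone K _
    ((Set.range fun k : Fin n => wHom (headHom k) (fun i => headHom k (genExp i (M i)))) ∪
      {wHom totHom (fun i => totHom (genExp i (M i))),
        -wHom totHom (fun i => totHom (genExp i (M i)))}) ?_ ?_
  · have hz : ∀ g ∈ fibG M, wHom totHom (fun i => totHom (genExp i (M i))) g = 0 := by
      rintro _ ⟨i, g, hg, rfl⟩
      rw [wHom_genExp]
      have h : totHom (genExp i g) = totHom (genExp i (M i)) := (borel_sums i hg).2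
      omega
    rintro g hg _ (⟨k, rfl⟩ | rfl | rfl)
    · exact wHom_gen_nonneg M k g hg
    · rw [hz g hg]
    · rw [AddMonoidHom.neg_apply, hz g hg, neg_zero]
  · intro s hs
    have h1 := hs _ (Or.inr (Or.inl rfl))
    have h2 := hs _ (Or.inr (Or.inr rfl))
    rw [AddMonoidHom.neg_apply] at h2
    rw [wHom_nonneg] at h1 h2
    have ht : totHom (∑ i, s (Sum.inr i) • genExp i (M i)) = totHom s := by omega
    refine (reach {b | b ∈ AddSubmonoid.closure (fibG M) ∧ totSum b = totSum s} s ?_ ?_ _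
      (∑ i, s (Sum.inr i) • genExp i (M i)) ⟨start_mem M s, ht⟩ ?_ (start_inr M s)
        (Nat.le_add_right _ _)).1
    · rintro b ⟨hb, hbt⟩ i j hij hj b' he
      refine ⟨closure_move _ (fibG_move M) b hb i j hij hj b' he, ?_⟩
      have := congrArg totSum he
      rw [totSum_add, totSum_add, totSum_single, totSum_single] at this
      omega
    · rintro b ⟨_, hbt⟩ k hlt
      omega
    · intro k
      have h := hs _ (Or.inl ⟨k, rfl⟩)
      dsimp only at h
      rw [wHom_nonneg] at h
      have h2 : headHom k (∑ i, s (Sum.inr i) • genExp i (M i)) ≤ headHom k s := by omega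
      exact h2

lemma multiFiber_eq (K : Type*) [Field K] {n r : ℕ} (M : Fin r → (Fin n →₀ ℕ)) :
    (multiFiber K n r fun i => BorelSet n (M i)) =
      Algebra.adjoin K ((fun g => MvPolynomial.monomial g (1 : K)) '' fibG M) := by
  unfold multiFiber
  congr 1
  ext p
  constructor
  · rintro ⟨i, g, hg, rfl⟩
    exact ⟨_, ⟨i, g, hg, rfl⟩, rfl⟩
  · rintro ⟨_, ⟨i, g, hg, rfl⟩, rfl⟩
    exact ⟨i, g, hg, rfl⟩

lemma multiRees_eq (K : Type*) [Field K] {n r : ℕ} (M : Fin r → (Fin n →₀ ℕ)) :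
    (multiRees K n r fun i => BorelSet n (M i)) =
      Algebra.adjoin K ((fun g => MvPolynomial.monomial g (1 : K)) '' reesG M) := by
  unfold multiRees
  congr 1
  ext p
  constructor
  · rintro (⟨i, rfl⟩ | ⟨i, g, hg, rfl⟩)
    · exact ⟨_, Or.inl ⟨i, rfl⟩, rfl⟩
    · exact ⟨_, Or.inr ⟨i, g, hg, rfl⟩, rfl⟩
  · rintro ⟨_, (⟨i, rfl⟩ | ⟨i, g, hg, rfl⟩), rfl⟩
    · exact Or.inl ⟨i, rfl⟩
    · exact Or.inr ⟨i, g, hg, rfl⟩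

/-- Corollary 6.11, normality part: for any collection of principal Borel ideals
`I_i = ⟨Borel(M_i)⟩`, the multi-Rees algebra `R[I_1t_1,…,I_rt_r]` and the multi-fiber
ring `K[I_1t_1,…,I_rt_r]` are normal domains: integral domains integrally closed in
their fields of fractions. -/
theorem multiRees_principal_borel_normal
    (K : Type*) [Field K] {n r : ℕ} (M : Fin r → (Fin n →₀ ℕ)) :
    (IsDomain (multiRees K n r fun i => BorelSet n (M i)) ∧
      IsIntegrallyClosed (multiRees K n r fun i => BorelSet n (M i))) ∧
    (IsDomain (multiFiber K n r fun i => BorelSet n (M i)) ∧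
      IsIntegrallyClosed (multiFiber K n r fun i => BorelSet n (M i))) := by
  refine ⟨⟨inferInstance, ?_⟩, ⟨inferInstance, ?_⟩⟩
  · rw [multiRees_eq]; exact rees_closed K M
  · rw [multiFiber_eq]; exact fiber_closed K M
end

section
/- Let E_1,…,E_r be nonempty subsets of {x_1,…,x_n}, k_1,…,k_r positive integers, and I_i = ⟨x_j : x_j ∈ E_i⟩^{k_i} the k_i-th power of the ideal generated by the variables in E_i. Suppose there exist a permutation of the variables x_1,…,x_n and a reindexing of the ideals after which the incidence condition is L-free: for all 1 ≤ h < j ≤ n and 1 ≤ u < v ≤ r (in the new orderings), x_h ∈ E_u, x_j ∈ E_u and x_j ∈ E_v imply x_h ∈ E_v. Then the multi-Rees algebra R[I_1t_1,…,I_rt_r] and the multi-fiber ring K[I_1t_1,…,I_rt_r] are normal domains: each is an integral domain that is integrally closed in its field of fractions. -/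
open MvPolynomial in
/-- Polynomials whose exponents satisfy a family of homogeneous linear inequalities. -/
noncomputable def wtSub (K : Type*) [Field K] {σ : Type*} (Λ : Set ((σ → ℕ) × (σ → ℕ))) :
    Subalgebra K (MvPolynomial σ K) where
  carrier := {f | ∀ m ∈ f.support, ∀ t ∈ Λ, Finsupp.weight t.2 m ≤ Finsupp.weight t.1 m}
  mul_mem' := by
    classical
    intro f g hf hg m hm t ht
    obtain ⟨a, ha, b, hb, rfl⟩ := Finset.mem_add.1 (MvPolynomial.support_mul f g hm)
    rw [map_add, map_add]
    exact add_le_add (hf a ha t ht) (hg b hb t ht)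
  add_mem' := by
    classical
    intro f g hf hg m hm t ht
    rcases Finset.mem_union.1 (MvPolynomial.support_add hm) with h | h
    · exact hf m h t ht
    · exact hg m h t ht
  algebraMap_mem' := by
    classical
    intro c m hm t ht
    rw [MvPolynomial.algebraMap_eq, MvPolynomial.mem_support_iff, MvPolynomial.coeff_C] at hm
    have : m = 0 := by
      by_contra h
      exact hm (if_neg (Ne.symm h))
    simp [this]

theorem mem_wtSub {K : Type*} [Field K] {σ : Type*} {Λ : Set ((σ → ℕ) × (σ → ℕ))}
    {f : MvPolynomial σ K} : f ∈ wtSub K Λ ↔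
      ∀ m ∈ f.support, ∀ t ∈ Λ, Finsupp.weight t.2 m ≤ Finsupp.weight t.1 m := Iff.rfl

/-- Torus action `x_j ↦ x_j T^(p_j - q_j)`. -/
noncomputable def twist (K : Type*) [Field K] {σ : Type*} (p q : σ → ℕ) :
    MvPolynomial σ K →+* FractionRing (Polynomial (MvPolynomial σ K)) :=
  MvPolynomial.eval₂Hom
    ((algebraMap (Polynomial (MvPolynomial σ K)) _).comp (Polynomial.C.comp MvPolynomial.C))
    (fun j => algebraMap (Polynomial (MvPolynomial σ K)) _
        (Polynomial.C (MvPolynomial.X j) * Polynomial.X ^ p j) /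
      algebraMap (Polynomial (MvPolynomial σ K)) _ (Polynomial.X ^ q j))

theorem twist_monomial {K : Type*} [Field K] {σ : Type*} (p q : σ → ℕ) (m : σ →₀ ℕ) (c : K) :
    twist K p q (MvPolynomial.monomial m c) *
      algebraMap (Polynomial (MvPolynomial σ K)) _ (Polynomial.X ^ (Finsupp.weight q m)) =
      algebraMap (Polynomial (MvPolynomial σ K)) _
        (Polynomial.C (MvPolynomial.monomial m c) * Polynomial.X ^ (Finsupp.weight p m)) := by
  have hX : (algebraMap (Polynomial (MvPolynomial σ K))
      (FractionRing (Polynomial (MvPolynomial σ K))) Polynomial.X) ≠ 0 := by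
    rw [Ne, IsFractionRing.to_map_eq_zero_iff]
    exact Polynomial.X_ne_zero
  rw [twist, MvPolynomial.eval₂Hom_monomial, MvPolynomial.monomial_eq, Finsupp.weight_apply,
    Finsupp.weight_apply]
  simp only [Finsupp.prod, Finsupp.sum, map_mul, map_prod, map_pow, div_pow, mul_pow,
    Finset.prod_mul_distrib, Finset.prod_div_distrib, ← Finset.prod_pow_eq_pow_sum,
    RingHom.comp_apply, smul_eq_mul, ← pow_mul]
  have h2 : (∏ x ∈ m.support, (algebraMap (Polynomial (MvPolynomial σ K))
      (FractionRing (Polynomial (MvPolynomial σ K))) Polynomial.X) ^ (m x * q x)) ≠ 0 :=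
    Finset.prod_ne_zero_iff.2 fun _ _ => pow_ne_zero _ hX
  simp only [mul_comm (q _), mul_comm (p _)]
  field_simp

theorem twist_scaled {K : Type*} [Field K] {σ : Type*} (p q : σ → ℕ) (f : MvPolynomial σ K)
    (N : ℕ) (hN : ∀ m ∈ f.support, Finsupp.weight q m ≤ N + Finsupp.weight p m) :
    twist K p q f * algebraMap (Polynomial (MvPolynomial σ K)) _ (Polynomial.X ^ N) =
      algebraMap (Polynomial (MvPolynomial σ K)) _
        (∑ m ∈ f.support, Polynomial.C (MvPolynomial.monomial m (f.coeff m)) *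
          Polynomial.X ^ (N + Finsupp.weight p m - Finsupp.weight q m)) := by
  have hX : (algebraMap (Polynomial (MvPolynomial σ K))
      (FractionRing (Polynomial (MvPolynomial σ K))) Polynomial.X) ≠ 0 := by
    rw [Ne, IsFractionRing.to_map_eq_zero_iff]
    exact Polynomial.X_ne_zero
  conv_lhs => rw [MvPolynomial.as_sum f]
  rw [map_sum, map_sum, Finset.sum_mul]
  refine Finset.sum_congr rfl fun m hm => ?_
  have h := twist_monomial p q m (f.coeff m)
  have hq : (algebraMap (Polynomial (MvPolynomial σ K))
      (FractionRing (Polynomial (MvPolynomial σ K))) (Polynomial.X ^ (Finsupp.weight q m))) ≠ 0 := by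
    rw [map_pow]; exact pow_ne_zero _ hX
  apply mul_right_cancel₀ hq
  rw [mul_right_comm, h, ← map_mul, ← map_mul, mul_assoc, mul_assoc, ← pow_add, ← pow_add,
    Nat.sub_add_cancel (hN m hm), add_comm]

theorem wtSub_closed_one {K : Type*} [Field K] {σ : Type*} {Λ : Set ((σ → ℕ) × (σ → ℕ))}
    (f : MvPolynomial σ K) (hf : IsIntegral (wtSub K Λ) f) : f ∈ wtSub K Λ := by
  classical
  rw [mem_wtSub]
  rintro m₀ hm₀ ⟨p, q⟩ ht
  set ι := algebraMap (Polynomial (MvPolynomial σ K))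
    (FractionRing (Polynomial (MvPolynomial σ K))) with hι
  have hinj : Function.Injective ι := IsFractionRing.injective _ _
  have hmem : ∀ a : wtSub K Λ, (twist K p q).comp (algebraMap (wtSub K Λ) _) a ∈ ι.range := by
    intro a
    have := twist_scaled p q (a : MvPolynomial σ K) 0
      (fun m hm => by simpa using mem_wtSub.1 a.2 m hm _ ht)
    rw [pow_zero, map_one, mul_one] at this
    exact ⟨_, this.symm⟩
  let e : Polynomial (MvPolynomial σ K) ≃+* ι.range :=
    RingEquiv.ofBijective ι.rangeRestrict
      ⟨fun a b h => hinj (congrArg Subtype.val h), ι.rangeRestrict_surjective⟩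
  let φ : wtSub K Λ →+* Polynomial (MvPolynomial σ K) :=
    (e.symm : ι.range →+* _).comp
      (((twist K p q).comp (algebraMap (wtSub K Λ) _)).codRestrict ι.range hmem)
  have hint : IsIntegral (Polynomial (MvPolynomial σ K)) (twist K p q f) := by
    refine IsIntegral.map_of_comp_eq φ (twist K p q) ?_ hf
    ext1 a
    have : e (φ a) = ((twist K p q).comp (algebraMap (wtSub K Λ) _)).codRestrict ι.range hmem a :=
      e.apply_symm_apply _
    exact congrArg Subtype.val this
  obtain ⟨g, hg⟩ := (isIntegrallyClosed_iff _).1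
    (inferInstance : IsIntegrallyClosed (Polynomial (MvPolynomial σ K))) hint
  by_contra hlt
  simp only [not_le] at hlt
  let N := ∑ m ∈ f.support, Finsupp.weight q m
  have hN : ∀ m ∈ f.support, Finsupp.weight q m ≤ N := fun m hm =>
    Finset.single_le_sum (f := fun m => Finsupp.weight q m) (fun _ _ => Nat.zero_le _) hm
  have h := twist_scaled p q f N (fun m hm => (hN m hm).trans (Nat.le_add_right _ _))
  rw [← hg, ← map_mul] at h
  have h := hinj h
  have h := congrArg (fun P => MvPolynomial.coeff m₀
    (P.coeff (N + Finsupp.weight p m₀ - Finsupp.weight q m₀))) h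
  have hNm := hN m₀ hm₀
  simp only [Polynomial.finsetSum_coeff, Polynomial.coeff_mul_X_pow', Polynomial.coeff_C,
    MvPolynomial.coeff_sum] at h
  rw [if_neg (by omega), Finset.sum_eq_single m₀] at h
  · simp at h
    exact (MvPolynomial.mem_support_iff.1 hm₀) h.symm
  · intro b _ hb
    split_ifs
    all_goals first
      | exact MvPolynomial.coeff_zero _
      | rw [MvPolynomial.coeff_monomial, if_neg hb]
  · intro h; exact absurd hm₀ h

theorem wtSub_isIntegrallyClosed (K : Type*) [Field K] {σ : Type*}
    (Λ : Set ((σ → ℕ) × (σ → ℕ))) : IsIntegrallyClosed (wtSub K Λ) := by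
  rw [isIntegrallyClosed_iff (FractionRing (wtSub K Λ))]
  intro x hx
  have hincl : Function.Injective (algebraMap (wtSub K Λ) (MvPolynomial σ K)) :=
    Subtype.val_injective
  let ψ : FractionRing (wtSub K Λ) →+* FractionRing (MvPolynomial σ K) := IsFractionRing.map hincl
  have hψ : ∀ a, ψ (algebraMap (wtSub K Λ) _ a) =
      algebraMap (MvPolynomial σ K) _ (algebraMap (wtSub K Λ) (MvPolynomial σ K) a) := fun a =>
    IsLocalization.map_eq _ a
  have h1 : IsIntegral (MvPolynomial σ K) (ψ x) :=
    IsIntegral.map_of_comp_eq (algebraMap (wtSub K Λ) (MvPolynomial σ K)) ψ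
      (RingHom.ext fun a => (hψ a).symm) hx
  obtain ⟨f, hf⟩ := (isIntegrallyClosed_iff _).1
    (inferInstance : IsIntegrallyClosed (MvPolynomial σ K)) h1
  have h2 : IsIntegral (wtSub K Λ) f := by
    obtain ⟨P, hP, hPx⟩ := hx
    refine ⟨P, hP, ?_⟩
    apply IsFractionRing.injective (MvPolynomial σ K) (FractionRing (MvPolynomial σ K))
    rw [map_zero, Polynomial.hom_eval₂, hf]
    have := congrArg ψ hPx
    rw [map_zero, Polynomial.hom_eval₂] at this
    rw [← this]
    congr 1
    exact RingHom.ext fun a => (hψ a).symm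
  refine ⟨⟨f, wtSub_closed_one f h2⟩, ψ.injective ?_⟩
  rw [hψ, ← hf]
  rfl

/-- The transportation lemma, from Hall's marriage theorem. -/
theorem transport {n r : ℕ} (E : Fin r → Set (Fin n)) (k c : Fin r → ℕ) (a : Fin n → ℕ)
    (hall : ∀ S : Finset (Fin r), (∑ i ∈ S, c i * k i) ≤
      ∑ j, (open Classical in if ∃ i ∈ S, j ∈ E i then a j else 0)) :
    ∃ f : (Σ i : Fin r, Fin (c i) × Fin (k i)) → Fin n,
      (∀ x, f x ∈ E x.1) ∧
        ∀ j, (∑ x, (if f x = j then 1 else 0)) ≤ a j := by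
  classical
  let t : (Σ i : Fin r, Fin (c i) × Fin (k i)) → Finset (Σ j : Fin n, Fin (a j)) :=
    fun x => Finset.univ.filter fun y => y.1 ∈ E x.1
  obtain ⟨F, hF, hFt⟩ := (Finset.all_card_le_biUnion_card_iff_exists_injective t).1 (by
    intro s
    have h1 : s ⊆ (s.image Sigma.fst).sigma fun _ => Finset.univ := by
      intro x hx
      simp only [Finset.mem_sigma, Finset.mem_univ, and_true]
      exact Finset.mem_image_of_mem _ hx
    have h2 := Finset.card_le_card h1
    rw [Finset.card_sigma] at h2
    simp only [Finset.card_univ, Fintype.card_prod, Fintype.card_fin] at h2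
    refine h2.trans ((hall _).trans ?_)
    have h3 : (Finset.univ.filter fun j => ∃ i ∈ s.image Sigma.fst, j ∈ E i).sigma
        (fun j => (Finset.univ : Finset (Fin (a j)))) ⊆ s.biUnion t := by
      rintro y hy
      simp only [Finset.mem_sigma, Finset.mem_filter, Finset.mem_univ, true_and, and_true] at hy
      obtain ⟨i, hi, hy⟩ := hy
      obtain ⟨x, hx, rfl⟩ := Finset.mem_image.1 hi
      exact Finset.mem_biUnion.2 ⟨x, hx, by simp [t, hy]⟩
    have h4 := Finset.card_le_card h3
    rw [Finset.card_sigma] at h4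
    simp only [Finset.card_univ, Fintype.card_fin] at h4
    rw [Finset.sum_filter] at h4
    exact h4)
  refine ⟨fun x => (F x).1, fun x => by simpa [t] using hFt x, fun j => ?_⟩
  rw [← Finset.card_filter]
  have : (Finset.univ.filter fun x => (F x).1 = j).image F ⊆
      ({j} : Finset (Fin n)).sigma (fun j => (Finset.univ : Finset (Fin (a j)))) := by
    intro y hy
    obtain ⟨x, hx, rfl⟩ := Finset.mem_image.1 hy
    simpa using hx
  have h := Finset.card_le_card this
  rw [Finset.card_image_of_injective _ hF, Finset.card_sigma] at h
  simpa using h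

/-- The generating exponents of the powers of variable ideals. -/
abbrev genSet {n r : ℕ} (E : Fin r → Set (Fin n)) (k : Fin r → ℕ) :
    Fin r → Set (Fin n →₀ ℕ) := fun i =>
  {g : Fin n →₀ ℕ | (∀ j : Fin n, 0 < g j → j ∈ E i) ∧ (∑ j, g j) = k i}

theorem multiFiber_le_multiRees (K : Type*) [Field K] {n r : ℕ}
    (G : Fin r → Set (Fin n →₀ ℕ)) : multiFiber K n r G ≤ multiRees K n r G :=
  Algebra.adjoin_mono Set.subset_union_right

theorem matched_mem (K : Type*) [Field K] {n r : ℕ} (E : Fin r → Set (Fin n)) (k c : Fin r → ℕ)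
    (f : (Σ i : Fin r, Fin (c i) × Fin (k i)) → Fin n) (hf : ∀ x, f x ∈ E x.1) :
    MvPolynomial.monomial (Finsupp.mapDomain Sum.inl (∑ x, Finsupp.single (f x) 1) +
      ∑ i, Finsupp.single (Sum.inr i) (c i)) (1 : K) ∈ multiFiber K n r (genSet E k) := by
  classical
  let g : (Σ i : Fin r, Fin (c i)) → (Fin n →₀ ℕ) := fun y =>
    ∑ z : Fin (k y.1), Finsupp.single (f ⟨y.1, y.2, z⟩) 1
  have hg : ∀ y, g y ∈ genSet E k y.1 := by
    intro y
    constructor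
    · intro j hj
      by_contra hjE
      refine hj.ne' ?_
      simp only [g, Finsupp.finsetSum_apply]
      refine Finset.sum_eq_zero fun z _ => ?_
      rw [Finsupp.single_apply, if_neg]
      rintro rfl
      exact hjE (hf ⟨y.1, y.2, z⟩)
    · simp only [g, Finsupp.finsetSum_apply]
      rw [Finset.sum_comm]
      simp [Finsupp.single_apply]
  have key : (Finsupp.mapDomain Sum.inl (∑ x, Finsupp.single (f x) 1) +
      ∑ i, Finsupp.single (Sum.inr i) (c i) : Fin n ⊕ Fin r →₀ ℕ) =
      ∑ y : (Σ i : Fin r, Fin (c i)),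
        (Finsupp.mapDomain Sum.inl (g y) + Finsupp.single (Sum.inr y.1) 1) := by
    rw [Finset.sum_add_distrib]
    congr 1
    · rw [← Finsupp.mapDomain_finsetSum]
      congr 1
      simp only [g, Fintype.sum_sigma, Fintype.sum_prod_type]
    · rw [Fintype.sum_sigma]
      simp
  rw [key, MvPolynomial.monomial_sum_one]
  exact Subalgebra.prod_mem _ fun y _ => Algebra.subset_adjoin ⟨y.1, g y, hg y, rfl⟩

open Classical in
/-- Hall inequalities. -/
noncomputable def hallSet {n r : ℕ} (E : Fin r → Set (Fin n)) (k : Fin r → ℕ) :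
    Set ((Fin n ⊕ Fin r → ℕ) × (Fin n ⊕ Fin r → ℕ)) :=
  Set.range fun S : Finset (Fin r) =>
    (Sum.elim (fun j => if ∃ i ∈ S, j ∈ E i then 1 else 0) 0,
      Sum.elim 0 (fun i => if i ∈ S then k i else 0))

/-- The total degree inequality. -/
def totPair {n r : ℕ} (k : Fin r → ℕ) : (Fin n ⊕ Fin r → ℕ) × (Fin n ⊕ Fin r → ℕ) :=
  (Sum.elim 0 k, Sum.elim 1 0)

theorem weight_sum {n r : ℕ} (p : Fin n ⊕ Fin r → ℕ) (m : Fin n ⊕ Fin r →₀ ℕ) :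
    Finsupp.weight p m = (∑ j, m (Sum.inl j) * p (Sum.inl j)) +
      ∑ i, m (Sum.inr i) * p (Sum.inr i) := by
  rw [Finsupp.weight_apply, Finsupp.sum_fintype _ _ (by simp), Fintype.sum_sum_type]
  simp

theorem exists_match {n r : ℕ} (E : Fin r → Set (Fin n)) (k : Fin r → ℕ)
    (m : Fin n ⊕ Fin r →₀ ℕ)
    (hm : ∀ t ∈ hallSet E k, Finsupp.weight t.2 m ≤ Finsupp.weight t.1 m) :
    ∃ f : (Σ i : Fin r, Fin (m (Sum.inr i)) × Fin (k i)) → Fin n,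
      (∀ x, f x ∈ E x.1) ∧
        ∀ j, (∑ x, (if f x = j then 1 else 0)) ≤ m (Sum.inl j) := by
  classical
  refine transport E k (fun i => m (Sum.inr i)) (fun j => m (Sum.inl j)) fun S => ?_
  have := hm _ ⟨S, rfl⟩
  rw [weight_sum, weight_sum] at this
  simpa [Finset.sum_ite_mem] using this

theorem exponent_split {n r : ℕ} (m : Fin n ⊕ Fin r →₀ ℕ) (h : Fin n →₀ ℕ)
    (hle : ∀ j, h j ≤ m (Sum.inl j)) :
    m = (Finsupp.mapDomain Sum.inl h + ∑ i, Finsupp.single (Sum.inr i) (m (Sum.inr i))) +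
      ∑ j, Finsupp.single (Sum.inl j) (m (Sum.inl j) - h j) := by
  classical
  ext (j | i)
  · have := hle j
    have h3 : (∑ x, Finsupp.single (Sum.inl x : Fin n ⊕ Fin r) (m (Sum.inl x) - h x)) (Sum.inl j) =
        m (Sum.inl j) - h j := by
      rw [Finsupp.finsetSum_apply, Finset.sum_eq_single j]
      · simp
      · intro b _ hb
        rw [Finsupp.single_apply, if_neg (fun h => hb (Sum.inl_injective h))]
      · simp
    rw [Finsupp.add_apply, h3]
    simp [Finsupp.single_apply, Finsupp.mapDomain_apply Sum.inl_injective]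
    omega
  · simp [Finsupp.finsetSum_apply, Finsupp.single_apply, Finsupp.mapDomain_of_notMem_range]

theorem gen_mem_hall (K : Type*) [Field K] {n r : ℕ} (E : Fin r → Set (Fin n)) (k : Fin r → ℕ)
    (i : Fin r) (g : Fin n →₀ ℕ) (hg : g ∈ genSet E k i) :
    MvPolynomial.monomial
      (Finsupp.mapDomain Sum.inl g + Finsupp.single (Sum.inr i) 1) (1 : K) ∈
      wtSub K (insert (totPair k) (hallSet E k)) := by
  classical
  rw [mem_wtSub]
  intro m hm t ht
  have hm := MvPolynomial.support_monomial_subset hm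
  rw [Finset.mem_singleton] at hm
  subst hm
  rw [weight_sum, weight_sum]
  rcases ht with rfl | ⟨S, rfl⟩
  · simp [totPair, Finsupp.mapDomain_apply Sum.inl_injective, Finsupp.mapDomain_of_notMem_range,
      Finsupp.single_apply, hg.2]
  · simp only [Finsupp.add_apply, Finsupp.mapDomain_apply Sum.inl_injective, Sum.elim_inl,
      Sum.elim_inr, Pi.zero_apply, mul_zero, Finset.sum_const_zero, zero_add, add_zero,
      Finsupp.mapDomain_of_notMem_range _ _ (show Sum.inr _ ∉ Set.range Sum.inl by simp)]
    by_cases hi : i ∈ S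
    · have : ∀ j, g j ≤ g j * (if ∃ i ∈ S, j ∈ E i then 1 else 0) := by
        intro j
        rcases Nat.eq_zero_or_pos (g j) with h | h
        · simp [h]
        · rw [if_pos ⟨i, hi, hg.1 j h⟩, mul_one]
      have h2 := Finset.sum_le_sum fun j (_ : j ∈ Finset.univ) => this j
      rw [hg.2] at h2
      simpa [Finsupp.single_apply, hi] using h2
    · simp [Finsupp.single_apply, hi]

theorem wtSub_anti (K : Type*) [Field K] {σ : Type*} {Λ Λ' : Set ((σ → ℕ) × (σ → ℕ))}
    (h : Λ ⊆ Λ') : wtSub K Λ' ≤ wtSub K Λ := fun _ hf m hm t ht => hf m hm t (h ht)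

theorem mem_of_monomials {K : Type*} [Field K] {σ : Type*} (A : Subalgebra K (MvPolynomial σ K))
    (f : MvPolynomial σ K) (h : ∀ m ∈ f.support, MvPolynomial.monomial m (1 : K) ∈ A) : f ∈ A := by
  rw [MvPolynomial.as_sum f]
  refine Subalgebra.sum_mem _ fun m hm => ?_
  have := A.smul_mem (h m hm) (f.coeff m)
  rwa [MvPolynomial.smul_monomial, smul_eq_mul, mul_one] at this

theorem multiFiber_eq_s19 (K : Type*) [Field K] {n r : ℕ} (E : Fin r → Set (Fin n))
    (k : Fin r → ℕ) : multiFiber K n r (genSet E k) =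
      wtSub K (insert (totPair k) (hallSet E k)) := by
  classical
  apply le_antisymm
  · refine Algebra.adjoin_le ?_
    rintro p ⟨i, g, hg, rfl⟩
    exact gen_mem_hall K E k i g hg
  · intro p hp
    refine mem_of_monomials _ _ fun m hm => ?_
    have hw := mem_wtSub.1 hp m hm
    obtain ⟨f, hfE, hle⟩ := exists_match E k m fun t ht => hw t (Set.mem_insert_of_mem _ ht)
    have hh : ∀ j, (∑ x, Finsupp.single (f x) 1 : Fin n →₀ ℕ) j =
        ∑ x, (if f x = j then 1 else 0) := fun j => by
      simp [Finsupp.finsetSum_apply, Finsupp.single_apply]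
    have hle' : ∀ j, (∑ x, Finsupp.single (f x) 1 : Fin n →₀ ℕ) j ≤ m (Sum.inl j) := fun j =>
      (hh j).trans_le (hle j)
    have htot := hw _ (Set.mem_insert _ _)
    rw [weight_sum, weight_sum] at htot
    simp only [totPair, Sum.elim_inl, Sum.elim_inr, Pi.one_apply, Pi.zero_apply, mul_one, mul_zero,
      Finset.sum_const_zero, add_zero, zero_add] at htot
    have hcard : ∑ j, (∑ x, Finsupp.single (f x) 1 : Fin n →₀ ℕ) j =
        ∑ i, m (Sum.inr i) * k i := by
      simp only [hh]
      rw [Finset.sum_comm]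
      simp
    have heq : ∀ j, (∑ x, Finsupp.single (f x) 1 : Fin n →₀ ℕ) j = m (Sum.inl j) := fun j =>
      (Finset.sum_eq_sum_iff_of_le fun j _ => hle' j).1
        (le_antisymm (Finset.sum_le_sum fun j _ => hle' j) (htot.trans hcard.ge)) j
        (Finset.mem_univ j)
    rw [exponent_split m _ hle']
    simp only [heq, Nat.sub_self, Finsupp.single_zero, Finset.sum_const_zero, add_zero]
    exact matched_mem K E k _ f hfE

theorem multiRees_eq_s19 (K : Type*) [Field K] {n r : ℕ} (E : Fin r → Set (Fin n))
    (k : Fin r → ℕ) : multiRees K n r (genSet E k) = wtSub K (hallSet E k) := by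
  classical
  apply le_antisymm
  · refine Algebra.adjoin_le ?_
    rintro p (⟨j, rfl⟩ | ⟨i, g, hg, rfl⟩)
    · show MvPolynomial.X (Sum.inl j) ∈ wtSub K (hallSet E k)
      rw [mem_wtSub]
      rintro m hm _ ⟨S, rfl⟩
      rw [MvPolynomial.support_X, Finset.mem_singleton] at hm
      subst hm
      rw [weight_sum, weight_sum]
      simp
    · exact wtSub_anti K (Set.subset_insert _ _) (gen_mem_hall K E k i g hg)
  · intro p hp
    refine mem_of_monomials _ _ fun m hm => ?_
    obtain ⟨f, hfE, hle⟩ := exists_match E k m (mem_wtSub.1 hp m hm)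
    have hle' : ∀ j, (∑ x, Finsupp.single (f x) 1 : Fin n →₀ ℕ) j ≤ m (Sum.inl j) := fun j => by
      refine le_trans (le_of_eq ?_) (hle j)
      simp [Finsupp.finsetSum_apply, Finsupp.single_apply]
    rw [exponent_split m _ hle', ← one_mul (1 : K), ← MvPolynomial.monomial_mul]
    refine Subalgebra.mul_mem _ (multiFiber_le_multiRees K _ (matched_mem K E k _ f hfE)) ?_
    rw [MvPolynomial.monomial_sum_one]
    refine Subalgebra.prod_mem _ fun j _ => ?_
    rw [← MvPolynomial.X_pow_eq_monomial]
    refine Subalgebra.pow_mem _ ?_ _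
    exact Algebra.subset_adjoin (Set.mem_union_left _ ⟨j, rfl⟩)

/-- Corollary 6.12: let `E_1,…,E_r` be nonempty sets of variables, `k_1,…,k_r ≥ 1`, and
`I_i = ⟨x_j : x_j ∈ E_i⟩^{k_i}`, whose minimal generating set is the set of monomials of
degree `k_i` supported in `E_i`.  If after some permutation of the variables and some
reindexing of the ideals the incidence condition is `𝖫`-free, then the multi-Rees
algebra `R[I_1t_1,…,I_rt_r]` and the multi-fiber ring `K[I_1t_1,…,I_rt_r]` are normal
domains: integral domains integrally closed in their fields of fractions. -/
theorem multiRees_powers_of_variable_ideals_normal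
    (K : Type*) [Field K] {n r : ℕ}
    (E : Fin r → Set (Fin n)) (hEne : ∀ i : Fin r, (E i).Nonempty)
    (k : Fin r → ℕ) (hk : ∀ i : Fin r, 0 < k i)
    (hLfree : ∃ (π : Equiv.Perm (Fin n)) (σ : Equiv.Perm (Fin r)),
      ∀ (h j : Fin n) (u v : Fin r), h < j → u < v →
        π h ∈ E (σ u) → π j ∈ E (σ u) → π j ∈ E (σ v) → π h ∈ E (σ v)) :
    (IsDomain (multiRees K n r fun i =>
        {g : Fin n →₀ ℕ | (∀ j : Fin n, 0 < g j → j ∈ E i) ∧ (∑ j, g j) = k i}) ∧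
      IsIntegrallyClosed (multiRees K n r fun i =>
        {g : Fin n →₀ ℕ | (∀ j : Fin n, 0 < g j → j ∈ E i) ∧ (∑ j, g j) = k i})) ∧
    (IsDomain (multiFiber K n r fun i =>
        {g : Fin n →₀ ℕ | (∀ j : Fin n, 0 < g j → j ∈ E i) ∧ (∑ j, g j) = k i}) ∧
      IsIntegrallyClosed (multiFiber K n r fun i =>
        {g : Fin n →₀ ℕ | (∀ j : Fin n, 0 < g j → j ∈ E i) ∧ (∑ j, g j) = k i})) := by
  refine ⟨⟨inferInstance, ?_⟩, inferInstance, ?_⟩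
  · have h := wtSub_isIntegrallyClosed K (hallSet E k)
    rw [← multiRees_eq_s19] at h
    exact h
  · have h := wtSub_isIntegrallyClosed K (insert (totPair k) (hallSet E k))
    rw [← multiFiber_eq_s19] at h
    exact h
end
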